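/- Let Ω ⊂ [0,∞)² be such that the toric domain X_Ω = μ⁻¹(Ω) ⊂ ℂ² is a convex toric domain. Then c₂ᵐⁱⁿ(X_Ω) = c₂ᵐᵃˣ(X_Ω). -/

import Mathlib

/-!
Let `A`, `B`, `M` be the maxima of `x`, `y`, `x + y` on `Ω`, and let `m = min (A, B, M/2)`. Both
sides equal `2m`.

*Outer bound.* `X_Ω` is contained in the ball `E(M, M)` and in the long ellipsoids `E(A + δ, L)`
and `E(L, B + δ)`, whose second spectral values are at most `M`, `2A + 2δ`, `2B + 2δ`
(`exists_outer`).

*Inner bound.* By convexity `Ω` contains the quadrilateral with vertices `(0,0)`, `(m,0)`, `(0,m)`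
and some `(p, 2m - p)` (`exists_capacity`). The ellipsoid `E(m - ε, 2(m - ε))`, whose slice at
`π|z₀|² + π|z₁|² = c > m` is a disc of area less than `2m - c` in the reduced sphere of area `c`,
embeds symplectically over this quadrilateral (`exists_embedding`). The embedding is a
circle-equivariant half twist, which makes the slices at high levels avoid the axis `z₀ = 0`,
followed by a shear moving area `κ (c - m)₊`, `κ = p / m`, from the second coordinate to the
first. The shear is compensated by the phase `-S df/dc`, where `f` is the area moved and `S` is a
primitive of the difference of the two angular forms; it exists since the relevant part of the
reduced space is convex.

*Monotonicity.* It remains to see that `E(a) → X → E(b)` implies `N₂(a) ≤ N₂(b)` (`Nk_le_of_emb`).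
Up to a permutation `E(a)` contains the open ellipsoid `E(N, 2N)` with `2N = N₂(a)`, so the claim
reduces to `rigidity`: if the open `E(a, 2a)` embeds in `E(b)`, then two elements of the multiset
`{k bᵢ}` cannot both lie below `2a`. This is an equivariant minimax argument on loops. Consider
Hamiltonians which vanish on most of the image of the ellipsoid, rise to a plateau near its
boundary, and are quadratic at infinity. Their orbits of positive action are the images of orbits
of the ellipsoid (`Cut.classify`), and in a window around the action `a` only the short-axis orbit
occurs, up to time translation; it has a nonzero Fourier coefficient in some fixed slot. On the
complement of this slot the gradient deformation crosses that level (`climb`, `cross`). All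
deformations take place on finite spaces of trigonometric polynomials, with uniform gradient
bounds from a Palais–Smale property (`palais_smale`). If the claim failed, the deformed sphere of
positive frequencies would avoid a space it must meet (`linking`), by a Borsuk–Ulam theorem for
weighted circle actions (`borsukUlam_weighted`). The latter is proved by integrating Jacobian
determinants, whose integrals depend only on boundary values (`integral_det_eq_of_eq_off_ball`).
-/

open Set MeasureTheory
open scoped Real ENNReal Pointwise

noncomputable section

/-- The standard symplectic form `ω = Σᵢ dxᵢ ∧ dyᵢ` on `ℂⁿ ≅ ℝ²ⁿ`. -/
def stdSymp (n : ℕ) (v w : Fin n → ℂ) : ℝ :=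
  ∑ i, ((starRingEnd ℂ) (v i) * w i).im

/-- `X` symplectically embeds into `X'` (both subsets of `ℂⁿ`): there is an injective map
`φ : X → ℂⁿ` with image in `X'`, smooth on the interior of `X`, whose derivative preserves
the standard symplectic form at every interior point. -/
def SympEmb (n : ℕ) (X X' : Set (Fin n → ℂ)) : Prop :=
  ∃ φ : (Fin n → ℂ) → (Fin n → ℂ),
    Set.InjOn φ X ∧ φ '' X ⊆ X' ∧ ContDiffOn ℝ (⊤ : ℕ∞) φ (interior X) ∧
    ∀ x ∈ interior X, ∀ v w : Fin n → ℂ,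
      stdSymp n (fderiv ℝ φ x v) (fderiv ℝ φ x w) = stdSymp n v w

/-- The ellipsoid `E(a₁,…,aₙ) ⊂ ℂⁿ`. -/
def ellipsoid {n : ℕ} (a : Fin n → ℝ) : Set (Fin n → ℂ) :=
  {z | ∑ i, Real.pi * ‖z i‖ ^ 2 / a i ≤ 1}

/-- The polydisk `P(a₁,…,aₙ) ⊂ ℂⁿ`. -/
def polydisk {n : ℕ} (a : Fin n → ℝ) : Set (Fin n → ℂ) :=
  {z | ∀ i, Real.pi * ‖z i‖ ^ 2 ≤ a i}

/-- `Nk k a` is the `k`-th smallest element (with multiplicity) of the multiset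
`{m · aᵢ : m ∈ ℤ_{>0}, 1 ≤ i ≤ n}`. -/
def Nk {n : ℕ} (k : ℕ) (a : Fin n → ℝ) : ℝ :=
  sInf {t : ℝ | k ≤ {p : Fin n × ℕ | ((p.2 : ℝ) + 1) * a p.1 ≤ t}.ncard}

/-- `c_k^max(X)`: the infimum of `N_k(a)` over ellipsoids `E(a)` into which `X`
symplectically embeds. -/
def ckmax (n k : ℕ) (X : Set (Fin n → ℂ)) : ℝ :=
  sInf {c : ℝ | ∃ a : Fin n → ℝ, (∀ i, 0 < a i) ∧ SympEmb n X (ellipsoid a) ∧ c = Nk k a}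

/-- `c_k^min(X)`: the supremum of `N_k(a)` over ellipsoids `E(a)` symplectically
embedding into `X`. -/
def ckmin (n k : ℕ) (X : Set (Fin n → ℂ)) : ℝ :=
  sSup {c : ℝ | ∃ a : Fin n → ℝ, (∀ i, 0 < a i) ∧ SympEmb n (ellipsoid a) X ∧ c = Nk k a}

/-- The moment map `μ(z₁,…,zₙ) = (π|z₁|²,…,π|zₙ|²)`. -/
def momentMap (n : ℕ) (z : Fin n → ℂ) : Fin n → ℝ := fun i => Real.pi * ‖z i‖ ^ 2

/-- The toric domain `X_Ω = μ⁻¹(Ω)`. -/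
def toricDomain {n : ℕ} (Ω : Set (Fin n → ℝ)) : Set (Fin n → ℂ) :=
  momentMap n ⁻¹' Ω

/-- `X_Ω` is a convex toric domain: `Ω ⊆ [0,∞)ⁿ`, the symmetrization
`Ω̂ = {x : (|x₁|,…,|xₙ|) ∈ Ω}` is compact and convex, and `Ω` is the closure of a
nonempty relatively open subset of `[0,∞)ⁿ`. -/
def IsConvexToricDomain {n : ℕ} (Ω : Set (Fin n → ℝ)) : Prop :=
  Ω ⊆ {x | ∀ i, 0 ≤ x i} ∧
  IsCompact {x : Fin n → ℝ | (fun i => |x i|) ∈ Ω} ∧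
  Convex ℝ {x : Fin n → ℝ | (fun i => |x i|) ∈ Ω} ∧
  ∃ V : Set (Fin n → ℝ), IsOpen V ∧ (V ∩ {x | ∀ i, 0 ≤ x i}).Nonempty ∧
    Ω = closure (V ∩ {x | ∀ i, 0 ≤ x i})

/-- The quadrilateral `Q_ε` with vertices `(0,0)`, `(1,0)`, `(ε,ε)`, `(0,1)`, i.e. the union
of the triangles `conv{(0,0),(1,0),(ε,ε)}` and `conv{(0,0),(ε,ε),(0,1)}`. -/
def Qeps (ε : ℝ) : Set (Fin 2 → ℝ) :=
  convexHull ℝ {![0, 0], ![1, 0], ![ε, ε]} ∪ convexHull ℝ {![0, 0], ![ε, ε], ![0, 1]}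

/-! ### Determinant integrals depend only on boundary values -/

section NullLagrangian

variable {E : Type*} [NormedAddCommGroup E] [NormedSpace ℝ E] [FiniteDimensional ℝ E]

theorem bijective_smul_add_of_lipschitz {w : E → E} {K : NNReal} (hw : LipschitzWith K w) {M : ℝ}
    (hM : (K : ℝ) < M) : Function.Bijective (fun x => M • x + w x) := by
  have : CompleteSpace E := FiniteDimensional.complete ℝ E
  have hM0 : 0 < M := lt_of_le_of_lt K.2 hM
  have hc : ∀ y : E, ContractingWith (K * ⟨M⁻¹, by positivity⟩) (fun x => M⁻¹ • (y - w x)) := by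
    intro y
    refine ⟨?_, ?_⟩
    · rw [← NNReal.coe_lt_coe]
      push_cast
      change (K : ℝ) * M⁻¹ < 1
      rw [← div_eq_mul_inv, div_lt_one hM0]; exact hM
    · refine LipschitzWith.of_dist_le_mul fun a b => ?_
      rw [dist_eq_norm, ← smul_sub, norm_smul, Real.norm_of_nonneg (by positivity)]
      have := hw.dist_le_mul b a
      rw [dist_eq_norm] at this
      rw [show y - w a - (y - w b) = w b - w a by abel]
      calc M⁻¹ * ‖w b - w a‖ ≤ M⁻¹ * (K * dist b a) := by gcongr
        _ = _ := by rw [dist_comm]; change _ = (K : ℝ) * M⁻¹ * _; ring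
  have key : ∀ y x : E, M • x + w x = y ↔ Function.IsFixedPt (fun x => M⁻¹ • (y - w x)) x := by
    intro y x
    simp only [Function.IsFixedPt]
    rw [inv_smul_eq_iff₀ hM0.ne', sub_eq_iff_eq_add, eq_comm]
  constructor
  · intro a b hab
    exact (hc _).fixedPoint_unique' ((key _ a).1 hab) ((key _ b).1 rfl)
  · intro y
    exact ⟨(hc y).fixedPoint _, (key _ _).2 ((hc y).fixedPoint_isFixedPt)⟩

/-- Evaluation at `0` of `M ↦ det (M + T)` is a fixed linear combination (Lagrange interpolation)
of the values at any `dim E + 1` distinct nodes. -/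
theorem exists_lagrange_det (nodes : ℕ → ℝ) (hn : Function.Injective nodes) :
    ∃ l : ℕ → ℝ, ∀ T : E →L[ℝ] E, T.det = ∑ j ∈ Finset.range (Module.finrank ℝ E + 1),
      l j * (nodes j • ContinuousLinearMap.id ℝ E + T).det := by
  refine ⟨fun j => (Lagrange.basis (Finset.range (Module.finrank ℝ E + 1)) nodes j).eval 0, ?_⟩
  intro T
  have hp := Lagrange.eq_interpolate (f := (-(T : E →ₗ[ℝ] E)).charpoly)
    (s := Finset.range (Module.finrank ℝ E + 1)) (v := nodes) hn.injOn (by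
      rw [Polynomial.degree_eq_natDegree (LinearMap.charpoly_monic _).ne_zero,
        LinearMap.charpoly_natDegree, Finset.card_range]
      exact_mod_cast Nat.lt_succ_self _)
  have ev : ∀ t : ℝ, (-(T : E →ₗ[ℝ] E)).charpoly.eval t
      = (t • ContinuousLinearMap.id ℝ E + T).det := by
    intro t
    rw [LinearMap.eval_charpoly, ContinuousLinearMap.det]
    congr 1
    ext x
    simp [Module.algebraMap_end_apply]
  have h0 := ev 0
  rw [hp, Lagrange.interpolate_apply, Polynomial.eval_finsetSum] at h0
  simp only [Polynomial.eval_mul, Polynomial.eval_C, ev, zero_smul, zero_add] at h0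
  rw [← h0]
  exact Finset.sum_congr rfl fun _ _ => mul_comm _ _

/-- A large multiple of the identity dominates every map of bounded norm in the determinant. -/
theorem exists_det_pos (K : ℝ) : ∃ M0 : ℝ, 0 < M0 ∧ ∀ M ≥ M0, ∀ T : E →L[ℝ] E, ‖T‖ ≤ K →
    0 < (M • ContinuousLinearMap.id ℝ E + T).det := by
  have hc : Continuous fun S : E →L[ℝ] E => (ContinuousLinearMap.id ℝ E + S).det :=
    ContinuousLinearMap.continuous_det.comp (by fun_prop)
  have h1 : 0 < (ContinuousLinearMap.id ℝ E + (0 : E →L[ℝ] E)).det := by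
    simp [ContinuousLinearMap.det]
  obtain ⟨ε, hε, h⟩ := Metric.eventually_nhds_iff.1 (hc.continuousAt.eventually (lt_mem_nhds h1))
  refine ⟨(|K| + 1) / ε, by positivity, fun M hM T hT => ?_⟩
  have hM0 : 0 < M := lt_of_lt_of_le (by positivity) hM
  have e : M • ContinuousLinearMap.id ℝ E + T = M • (ContinuousLinearMap.id ℝ E + M⁻¹ • T) := by
    rw [smul_add, smul_inv_smul₀ hM0.ne']
  rw [e, ContinuousLinearMap.det, ContinuousLinearMap.toLinearMap_smul, LinearMap.det_smul]
  refine mul_pos (by positivity) (h ?_)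
  rw [dist_zero_right, norm_smul, Real.norm_of_nonneg (by positivity)]
  have : |K| + 1 ≤ M * ε := by rwa [ge_iff_le, div_le_iff₀ hε] at hM
  rw [inv_mul_lt_iff₀ hM0]
  linarith [le_abs_self K]

variable [MeasurableSpace E] [BorelSpace E] (μ : Measure E) [μ.IsAddHaarMeasure]

/-- If two `C¹` maps agree outside a ball then the integrals of their Jacobian determinants over
the ball agree: adding a large multiple of the identity turns both into bijections with the same
image of the ball, and `det` is recovered by interpolation. -/
theorem integral_det_eq_of_eq_off_ball {u v : E → E} (hu : ContDiff ℝ 1 u) (hv : ContDiff ℝ 1 v)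
    {R : ℝ} (h : ∀ x, R ≤ ‖x‖ → u x = v x) :
    ∫ x in Metric.ball 0 R, (fderiv ℝ u x).det ∂μ =
      ∫ x in Metric.ball 0 R, (fderiv ℝ v x).det ∂μ := by
  classical
  have : ProperSpace E := FiniteDimensional.proper ℝ E
  -- Lipschitz data
  obtain ⟨K1, hK1⟩ : ∃ K, LipschitzOnWith K u (Metric.closedBall 0 R) :=
    hu.contDiffOn.exists_lipschitzOnWith one_ne_zero (convex_closedBall 0 R)
      (isCompact_closedBall 0 R)
  obtain ⟨U, hU, hUe⟩ := hK1.extend_finite_dimension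
  have hwc : HasCompactSupport (v - u) := by
    refine HasCompactSupport.of_support_subset_isCompact (isCompact_closedBall (0 : E) R) ?_
    intro x hx
    by_contra hx'
    simp only [Metric.mem_closedBall, dist_zero_right, not_le] at hx'
    exact hx (by simp [h x hx'.le])
  obtain ⟨K2, hK2⟩ := ContDiff.lipschitzWith_of_hasCompactSupport hwc (hv.sub hu) one_ne_zero
  set K := lipschitzExtensionConstant E * K1 with hK
  have hV : LipschitzWith (K + K2) (fun x => U x + (v - u) x) := hU.add hK2
  have hderiv_bound : ∀ f : E → E, ContDiff ℝ 1 f → ∃ C : ℝ, ∀ x ∈ Metric.ball (0 : E) R,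
      ‖fderiv ℝ f x‖ ≤ C := by
    intro f hf
    obtain ⟨C, hC⟩ := (isCompact_closedBall (0 : E) R).exists_bound_of_continuousOn
      (hf.continuous_fderiv one_ne_zero).continuousOn
    exact ⟨C, fun x hx => hC x (Metric.ball_subset_closedBall hx)⟩
  obtain ⟨Cu, hCu⟩ := hderiv_bound u hu
  obtain ⟨Cv, hCv⟩ := hderiv_bound v hv
  obtain ⟨M0, hM0, hpos⟩ := exists_det_pos (E := E) (max Cu Cv)
  have main : ∀ M : ℝ, M0 ≤ M → (K : ℝ) + K2 < M →
      ∫ x in Metric.ball 0 R, (M • ContinuousLinearMap.id ℝ E + fderiv ℝ u x).det ∂μ =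
      ∫ x in Metric.ball 0 R, (M • ContinuousLinearMap.id ℝ E + fderiv ℝ v x).det ∂μ := by
    intro M hM hMK
    have b1 := bijective_smul_add_of_lipschitz hU (M := M)
      (lt_of_le_of_lt (by simp) hMK)
    have b2 := bijective_smul_add_of_lipschitz hV (M := M) (by push_cast; exact hMK)
    have img : ∀ f F : E → E, ContDiff ℝ 1 f → Function.Bijective (fun x => M • x + F x) →
        (∀ x ∈ Metric.ball (0 : E) R, ‖fderiv ℝ f x‖ ≤ max Cu Cv) →
        EqOn f F (Metric.ball 0 R) →
        ∫ x in Metric.ball 0 R, (M • ContinuousLinearMap.id ℝ E + fderiv ℝ f x).det ∂μ =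
          ∫ _ in (fun x => M • x + F x) '' (Metric.ball 0 R), (1 : ℝ) ∂μ := by
      intro f F hf hF hfb hfF
      have hE : EqOn (fun x => M • x + f x) (fun x => M • x + F x) (Metric.ball 0 R) := by
        intro x hx; simp [hfF hx]
      rw [← hE.image_eq, integral_image_eq_integral_abs_det_fderiv_smul μ measurableSet_ball
        (f' := fun x => M • ContinuousLinearMap.id ℝ E + fderiv ℝ f x)]
      · refine setIntegral_congr_fun measurableSet_ball fun x hx => ?_
        simp [abs_of_pos (hpos M hM _ (hfb x hx))]
      · intro x hx
        exact (((hasFDerivAt_id x).const_smul M).add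
          ((hf.differentiable one_ne_zero) x).hasFDerivAt).hasFDerivWithinAt
      · exact (hE.injOn_iff).2 hF.1.injOn
    rw [img u U hu b1 (fun x hx => (hCu x hx).trans (le_max_left _ _))
        (fun x hx => hUe (Metric.ball_subset_closedBall hx)),
      img v (fun x => U x + (v - u) x) hv b2 (fun x hx => (hCv x hx).trans (le_max_right _ _))
        (fun x hx => by
          have := hUe (Metric.ball_subset_closedBall hx)
          simp [← this])]
    congr 2
    have hc : EqOn (fun x => M • x + U x) (fun x => M • x + (U x + (v - u) x))
        (Metric.ball 0 R)ᶜ := by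
      intro x hx
      simp only [Metric.mem_ball, dist_zero_right, mem_compl_iff, not_lt] at hx
      simp [h x hx]
    have := hc.image_eq
    rw [image_compl_eq b1, image_compl_eq b2] at this
    exact compl_injective this
  obtain ⟨l, hl⟩ := exists_lagrange_det (E := E) (fun j : ℕ => max M0 (K + K2 + 1) + (j : ℝ))
    (fun a b hab => by simpa using hab)
  have expand : ∀ f : E → E, ContDiff ℝ 1 f →
      ∫ x in Metric.ball 0 R, (fderiv ℝ f x).det ∂μ =
      ∑ j ∈ Finset.range (Module.finrank ℝ E + 1), l j * ∫ x in Metric.ball 0 R,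
        ((max M0 (K + K2 + 1) + (j : ℝ)) • ContinuousLinearMap.id ℝ E + fderiv ℝ f x).det ∂μ := by
    intro f hf
    rw [setIntegral_congr_fun measurableSet_ball (fun x _ => hl (fderiv ℝ f x)),
      integral_finsetSum]
    · simp_rw [integral_const_mul]
    · intro j _
      refine Integrable.const_mul ?_ _
      have hcont : Continuous fun x => ((max M0 (K + K2 + 1) + (j : ℝ)) •
          ContinuousLinearMap.id ℝ E + fderiv ℝ f x).det :=
        ContinuousLinearMap.continuous_det.comp
          (continuous_const.add (hf.continuous_fderiv one_ne_zero))
      exact (hcont.continuousOn.integrableOn_compact (isCompact_closedBall (0 : E) R)).mono_set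
        Metric.ball_subset_closedBall
  rw [expand u hu, expand v hv]
  refine Finset.sum_congr rfl fun j _ => ?_
  rw [main]
  · exact (le_max_left _ _).trans (le_add_of_nonneg_right (by positivity))
  · have := le_max_right M0 ((K : ℝ) + K2 + 1)
    have : (0 : ℝ) ≤ j := by positivity
    linarith

end NullLagrangian

/-! ### A Borsuk–Ulam theorem for circle actions -/

section BorsukUlam

set_option linter.unusedSectionVars false

variable {ι : Type*} [Fintype ι] [DecidableEq ι]

/-- Extend a vector indexed by the indices different from `i` by the value `1` at `i`. -/
def extendOne (i : ι) (w : {j : ι // j ≠ i} → ℂ) : ι → ℂ :=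
  fun j => if h : j = i then 1 else w ⟨j, h⟩

theorem extendOne_ne_zero (i : ι) (w : {j : ι // j ≠ i} → ℂ) : extendOne i w ≠ 0 := by
  intro h
  have := congrFun h i
  simp [extendOne] at this

theorem contDiff_extendOne (i : ι) : ContDiff ℝ 1 (extendOne i) := by
  rw [contDiff_pi]
  intro j
  unfold extendOne
  by_cases h : j = i
  · simp only [h, dite_true]; exact contDiff_const
  · simp only [h, dite_false]; exact contDiff_apply _ _ _

/-- Recover the `i`-th column of a matrix from the equation `A z^L = -σ f z`, `z i = 1`. -/
def badMatrix (L : ℕ) (f : (ι → ℂ) → (ι → ℂ)) (i : ι)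
    (q : ℝ × ({j : ι // j ≠ i} → ℂ) × ({j : ι // j ≠ i} → ι → ℂ)) : ι → ι → ℂ :=
  fun j => if h : j = i then -(q.1 • f (extendOne i q.2.1)) - ∑ k, q.2.1 k ^ L • q.2.2 k
    else q.2.2 ⟨j, h⟩

/-- Generic choice of a matrix: the columns of the matrix are the vectors `A j`. -/
theorem exists_generic_matrix [Nonempty ι] (L : ℕ) (f : (ι → ℂ) → (ι → ℂ))
    (hf : ContDiffOn ℝ 1 f {0}ᶜ) (hom : ∀ (c : ℂ) (z : ι → ℂ), f (c • z) = c ^ L • f z) :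
    ∃ A : ι → ι → ℂ, (Matrix.of A).det ≠ 0 ∧
      ∀ z : ι → ℂ, z ≠ 0 → ∀ σ : ℝ, (∑ j, z j ^ L • A j) + σ • f z ≠ 0 := by
  have hbad : ∀ i : ι, ContDiff ℝ 1 (badMatrix L f i) := by
    intro i
    rw [contDiff_pi]
    intro j
    unfold badMatrix
    by_cases h : j = i
    · simp only [h, dite_true]
      refine ContDiff.sub (ContDiff.neg (contDiff_fst.smul ?_)) (ContDiff.sum fun k _ => ?_)
      · have : ContDiff ℝ 1 fun w => f (extendOne i w) :=
          contDiffOn_univ.1 (hf.comp (contDiff_extendOne i).contDiffOn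
            (fun w _ => extendOne_ne_zero i w))
        exact this.comp contDiff_snd.fst
      · have h1 : ContDiff ℝ 1 fun q : ℝ × ({j : ι // j ≠ i} → ℂ) × ({j : ι // j ≠ i} → ι → ℂ) =>
          q.2.1 k := by fun_prop
        have h2 : ContDiff ℝ 1 fun q : ℝ × ({j : ι // j ≠ i} → ℂ) × ({j : ι // j ≠ i} → ι → ℂ) =>
          q.2.2 k := by fun_prop
        exact (h1.pow L).smul h2
    · simp only [h, dite_false]
      fun_prop
  have hdim : dimH (⋃ i, range (badMatrix L f i)) < (Module.finrank ℝ (ι → ι → ℂ) : ℝ≥0∞) := by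
    have hι : Nonempty ι := inferInstance
    · refine lt_of_le_of_lt (b := ((Module.finrank ℝ (ι → ι → ℂ) - 1 : ℕ) : ℝ≥0∞)) ?_ ?_
      · rw [dimH_iUnion]
        refine iSup_le fun i => (hbad i).dimH_range_le.trans ?_
        norm_cast
        have hc : Fintype.card {j : ι // j ≠ i} + 1 = Fintype.card ι := by
          have := Fintype.card_pos_iff.2 hι
          simp only [ne_eq, Fintype.card_subtype_compl, Fintype.card_unique]
          omega
        simp only [Module.finrank_prod, Module.finrank_self, Module.finrank_pi_fintype,
          Complex.finrank_real_complex, Finset.sum_const, Finset.card_univ, smul_eq_mul]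
        rw [← hc]
        generalize Fintype.card {j : ι // j ≠ i} = n
        apply Nat.le_sub_one_of_lt
        ring_nf
        omega
      · norm_cast
        have := Fintype.card_pos_iff.2 hι
        simp only [Module.finrank_pi_fintype,
          Complex.finrank_real_complex, Finset.sum_const, Finset.card_univ, smul_eq_mul]
        have : 0 < Fintype.card ι * (Fintype.card ι * 2) := by positivity
        omega
  have hd := dense_compl_of_dimH_lt_finrank hdim
  have hopen : IsOpen {A : ι → ι → ℂ | (Matrix.of A).det ≠ 0} := by
    refine isOpen_ne_fun ?_ continuous_const
    exact Continuous.matrix_det (by fun_prop)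
  obtain ⟨A, hA1, hA2⟩ := hd.inter_open_nonempty _ hopen
    ⟨Matrix.of.symm (1 : Matrix ι ι ℂ), by simp⟩
  refine ⟨A, hA1, fun z hz σ h0 => hA2 ?_⟩
  obtain ⟨i, hi⟩ := Function.ne_iff.1 hz
  simp only [Pi.zero_apply] at hi
  -- normalise the `i`-th coordinate to `1`
  set w : ι → ℂ := (z i)⁻¹ • z with hw
  have hwi : w i = 1 := by simp [hw, hi]
  have h1 : (∑ j, w j ^ L • A j) + σ • f w = 0 := by
    have : (z i)⁻¹ ^ L • ((∑ j, z j ^ L • A j) + σ • f z) = 0 := by rw [h0, smul_zero]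
    rw [← this, hw, hom, smul_add, Finset.smul_sum]
    congr 1
    · refine Finset.sum_congr rfl fun j _ => ?_
      rw [Pi.smul_apply, smul_eq_mul, mul_pow, mul_smul]
    · rw [smul_comm]
  refine mem_iUnion.2 ⟨i, (σ, fun j => w j, fun j => A j), ?_⟩
  have hext : extendOne i (fun j : {j // j ≠ i} => w j) = w := by
    ext j
    unfold extendOne
    by_cases h : j = i
    · simp [h, hwi]
    · simp [h]
  ext1 j
  unfold badMatrix
  by_cases h : j = i
  · subst h
    simp only [dite_true]
    rw [hext]
    have hs := Fintype.sum_eq_add_sum_subtype_ne (fun k => w k ^ L • A k) j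
    rw [hs, hwi, one_pow, one_smul] at h1
    rw [sub_eq_iff_eq_add, neg_eq_iff_add_eq_zero, ← h1]
    abel
  · simp [h]

/-- The `C¹` nondecreasing function with derivative `max 0 (1 - (x/δ)²)`. -/
def clampFun (δ t : ℝ) : ℝ := ∫ x in (0:ℝ)..t, max 0 (1 - (x / δ) ^ 2)

theorem hasDerivAt_clampFun (δ t : ℝ) :
    HasDerivAt (clampFun δ) (max 0 (1 - (t / δ) ^ 2)) t := by
  have hc : Continuous fun x : ℝ => max 0 (1 - (x / δ) ^ 2) := by fun_prop
  exact intervalIntegral.integral_hasDerivAt_right (hc.intervalIntegrable _ _)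
    hc.aestronglyMeasurable.stronglyMeasurableAtFilter hc.continuousAt

theorem contDiff_clampFun (δ : ℝ) : ContDiff ℝ 1 (clampFun δ) := by
  rw [contDiff_one_iff_deriv]
  refine ⟨fun t => (hasDerivAt_clampFun δ t).differentiableAt, ?_⟩
  rw [show deriv (clampFun δ) = fun t => max 0 (1 - (t / δ) ^ 2) from
    funext fun t => (hasDerivAt_clampFun δ t).deriv]
  fun_prop

/-- Clamp real and imaginary part. -/
def clampC (δ : ℝ) (y : ℂ) : ℂ := (clampFun δ y.re : ℂ) + (clampFun δ y.im : ℂ) * Complex.I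

theorem contDiff_clampC (δ : ℝ) : ContDiff ℝ 1 (clampC δ) := by
  have h1 : ContDiff ℝ 1 fun y : ℂ => clampFun δ y.re :=
    (contDiff_clampFun δ).comp Complex.reCLM.contDiff
  have h2 : ContDiff ℝ 1 fun y : ℂ => clampFun δ y.im :=
    (contDiff_clampFun δ).comp Complex.imCLM.contDiff
  exact (Complex.ofRealCLM.contDiff.comp h1).add
    ((Complex.ofRealCLM.contDiff.comp h2).mul contDiff_const)

theorem det_fderiv_clampC (δ : ℝ) (y : ℂ) : (fderiv ℝ (clampC δ) y).det =
    max 0 (1 - (y.re / δ) ^ 2) * max 0 (1 - (y.im / δ) ^ 2) := by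
  have h1 : HasFDerivAt (fun y : ℂ => clampFun δ y.re) _ y :=
    (hasDerivAt_clampFun δ y.re).hasFDerivAt.comp y Complex.reCLM.hasFDerivAt
  have h2 : HasFDerivAt (fun y : ℂ => clampFun δ y.im) _ y :=
    (hasDerivAt_clampFun δ y.im).hasFDerivAt.comp y Complex.imCLM.hasFDerivAt
  have h3 : HasFDerivAt (clampC δ) _ y :=
    (Complex.ofRealCLM.hasFDerivAt.comp y h1).add
    ((Complex.ofRealCLM.hasFDerivAt.comp y h2).mul_const Complex.I)
  rw [h3.fderiv, ContinuousLinearMap.det, ← LinearMap.det_toMatrix Complex.basisOneI,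
    Matrix.det_fin_two]
  simp [LinearMap.toMatrix_apply]

/-- Coordinatewise clamp; its Jacobian determinant is a nonnegative bump at the origin. -/
def clampPi (δ : ℝ) (y : ι → ℂ) : ι → ℂ := fun i => clampC δ (y i)

theorem contDiff_clampPi (δ : ℝ) : ContDiff ℝ 1 (clampPi (ι := ι) δ) := by
  rw [contDiff_pi]
  exact fun i => (contDiff_clampC δ).comp (contDiff_apply _ _ i)

theorem det_fderiv_clampPi (δ : ℝ) (y : ι → ℂ) : (fderiv ℝ (clampPi δ) y).det =
    ∏ i, max 0 (1 - ((y i).re / δ) ^ 2) * max 0 (1 - ((y i).im / δ) ^ 2) := by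
  have h : HasFDerivAt (clampPi δ) (ContinuousLinearMap.pi fun i =>
      (fderiv ℝ (clampC δ) (y i)).comp (ContinuousLinearMap.proj (R := ℝ) (φ := fun _ : ι => ℂ) i))
      y := by
    rw [hasFDerivAt_pi]
    intro i
    exact ((contDiff_clampC δ).differentiable one_ne_zero (y i)).hasFDerivAt.comp y
      (ContinuousLinearMap.proj (R := ℝ) (φ := fun _ : ι => ℂ) i).hasFDerivAt
  rw [h.fderiv, ContinuousLinearMap.det_pi]
  simp_rw [det_fderiv_clampC]

/-- The map `z ↦ Σ_j z_j^L A_j`. -/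
def powMap (L : ℕ) (A : ι → ι → ℂ) (z : ι → ℂ) : ι → ℂ := ∑ j, z j ^ L • A j

theorem contDiff_powMap (L : ℕ) (A : ι → ι → ℂ) : ContDiff ℝ 1 (powMap L A) := by
  unfold powMap
  fun_prop

theorem det_fderiv_powMap (L : ℕ) (A : ι → ι → ℂ) (z : ι → ℂ) :
    (fderiv ℝ (powMap L A) z).det =
      Complex.normSq ((∏ j, (L : ℂ) * z j ^ (L - 1)) * (Matrix.of A).det) := by
  set D : (ι → ℂ) →ₗ[ℂ] (ι → ℂ) :=
    Matrix.toLin' (((Matrix.of A).transpose) * Matrix.diagonal fun j => (L : ℂ) * z j ^ (L - 1))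
    with hD
  have h : HasFDerivAt (powMap L A) (LinearMap.toContinuousLinearMap D) z := by
    have : HasFDerivAt (fun z : ι → ℂ => ∑ j, z j ^ L • A j) _ z :=
      HasFDerivAt.fun_sum (u := Finset.univ) (𝕜 := ℂ) (x := z)
        (A := fun j z => z j ^ L • A j) fun j _ =>
        (((hasDerivAt_pow L (z j)).hasFDerivAt.comp z
          (ContinuousLinearMap.proj (R := ℂ) (φ := fun _ : ι => ℂ) j).hasFDerivAt).smul_const (A j))
    refine this.congr_fderiv ?_
    ext v i
    simp [hD, Matrix.mulVec, dotProduct, Finset.sum_apply, Matrix.diagonal, ite_mul]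
    exact Finset.sum_congr rfl fun _ _ => by ring
  have h' : HasFDerivAt (𝕜 := ℝ) (powMap L A)
    ((LinearMap.toContinuousLinearMap D).restrictScalars ℝ) z := h.restrictScalars ℝ
  rw [h'.fderiv]
  have : (((LinearMap.toContinuousLinearMap D).restrictScalars ℝ : (ι → ℂ) →L[ℝ] (ι → ℂ))).det =
      LinearMap.det (D.restrictScalars ℝ) := rfl
  rw [this, LinearMap.det_restrictScalars, Algebra.norm_complex_apply, hD, LinearMap.det_toLin',
    Matrix.det_mul, Matrix.det_diagonal, Matrix.det_transpose, mul_comm]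

/-- Homogeneous form of the Borsuk–Ulam theorem: a map of degree `L` with no zero off the origin
cannot miss the direction `i0`. The integral of the clamped Jacobian of an interpolation between
`f`, a power map and a constant vector in that direction vanishes, because the interpolation has no
zeros. It also equals the integral for the power map, which is positive by holomorphy. -/
theorem borsukUlam_core (i0 : ι) (L : ℕ) (hL : L ≠ 0) (f : (ι → ℂ) → (ι → ℂ))
    (hf : ContDiffOn ℝ 1 f {0}ᶜ) (hom : ∀ (c : ℂ) (z : ι → ℂ), f (c • z) = c ^ L • f z)
    (hne : ∀ z, z ≠ 0 → f z ≠ 0) (h0 : ∀ z, f z i0 = 0) : False := by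
  have : Nonempty ι := ⟨i0⟩
  obtain ⟨A, hA, hgen⟩ := exists_generic_matrix L f hf hom
  set τ : (ι → ℂ) → ℝ := fun z => ∑ i, ‖z i‖ ^ 2 with hτ
  have hτc : ContDiff ℝ 1 τ := by
    refine ContDiff.sum fun i _ => ?_
    exact (contDiff_apply ℝ ℂ i).norm_sq ℝ
  set χ1 : ℝ → ℝ := fun t => Real.smoothTransition (t - 2) with hχ1
  set χ2 : ℝ → ℝ := fun t => Real.smoothTransition (2 * t - 1) * (1 - χ1 t) with hχ2
  set χ3 : ℝ → ℝ := fun t => Real.smoothTransition (2 - t) with hχ3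
  have sm : ContDiff ℝ 1 Real.smoothTransition := Real.smoothTransition.contDiff (n := 1)
  have c1 : ContDiff ℝ 1 fun z => χ1 (τ z) := sm.comp (hτc.sub contDiff_const)
  have c2 : ContDiff ℝ 1 fun z => χ2 (τ z) :=
    (sm.comp ((contDiff_const.mul hτc).sub contDiff_const)).mul (contDiff_const.sub c1)
  have c3 : ContDiff ℝ 1 fun z => χ3 (τ z) := sm.comp (contDiff_const.sub hτc)
  set G : (ι → ℂ) → (ι → ℂ) := fun z =>
    χ1 (τ z) • powMap L A z + χ2 (τ z) • f z + χ3 (τ z) • (Pi.single i0 1 : ι → ℂ) with hG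
  have c2f : ContDiff ℝ 1 fun z => χ2 (τ z) • f z := by
    rw [contDiff_iff_contDiffAt]
    intro z
    by_cases hz : z = 0
    · have : (fun z => χ2 (τ z) • f z) =ᶠ[nhds z] fun _ => 0 := by
        have : ∀ᶠ y in nhds z, τ y < 1 / 2 := by
          refine hτc.continuous.continuousAt.eventually (gt_mem_nhds ?_)
          simp [hτ, hz]
        filter_upwards [this] with y hy
        have : Real.smoothTransition (2 * τ y - 1) = 0 :=
          Real.smoothTransition.zero_of_nonpos (by linarith)
        simp [hχ2, this]
      exact contDiffAt_const.congr_of_eventuallyEq this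
    · exact c2.contDiffAt.smul (hf.contDiffAt (isOpen_compl_singleton.mem_nhds hz))
  have cG : ContDiff ℝ 1 G :=
    ((c1.smul (contDiff_powMap L A)).add c2f).add (c3.smul contDiff_const)
  have Gne : ∀ z, G z ≠ 0 := by
    intro z hz
    have hz' : χ1 (τ z) • powMap L A z + χ2 (τ z) • f z + χ3 (τ z) • (Pi.single i0 1 : ι → ℂ) = 0 := hz
    rcases lt_trichotomy (τ z) 2 with h | h | h
    · have e1 : χ1 (τ z) = 0 := Real.smoothTransition.zero_of_nonpos (by linarith)
      have e3 : 0 < χ3 (τ z) := Real.smoothTransition.pos_of_pos (by linarith)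
      have := congrFun hz' i0
      simp [e1, h0, e3.ne'] at this
    · have e1 : χ1 (τ z) = 0 := Real.smoothTransition.zero_of_nonpos (by linarith)
      have e3 : χ3 (τ z) = 0 := Real.smoothTransition.zero_of_nonpos (by linarith)
      have e2 : χ2 (τ z) = 1 := by
        simp only [hχ2, e1]
        rw [Real.smoothTransition.one_of_one_le (by linarith)]; norm_num
      have hz0 : z ≠ 0 := by
        rintro rfl
        simp [hτ] at h
      rw [e1, e2, e3] at hz'
      exact hne z hz0 (by simpa using hz')
    · have e1 : 0 < χ1 (τ z) := Real.smoothTransition.pos_of_pos (by linarith)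
      have e3 : χ3 (τ z) = 0 := Real.smoothTransition.zero_of_nonpos (by linarith)
      have hz0 : z ≠ 0 := by
        rintro rfl
        simp [hτ] at h
        linarith
      apply hgen z hz0 ((χ1 (τ z))⁻¹ * χ2 (τ z))
      rw [e3, zero_smul, add_zero] at hz'
      have := congrArg (fun y => (χ1 (τ z))⁻¹ • y) hz'
      simpa [smul_add, smul_smul, e1.ne', powMap] using this
  have Gout : ∀ z, 2 ≤ ‖z‖ → G z = powMap L A z := by
    intro z hz
    have h3 : 3 ≤ τ z := by
      obtain ⟨i, -, hi⟩ := Finset.exists_mem_eq_sup' Finset.univ_nonempty (fun i => ‖z i‖₊)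
      have hi' : ‖z‖ = ‖z i‖ := by
        rw [Pi.norm_def, ← Finset.sup'_eq_sup Finset.univ_nonempty, hi]; rfl
      have : ‖z i‖ ^ 2 ≤ τ z :=
        Finset.single_le_sum (f := fun i => ‖z i‖ ^ 2) (fun _ _ => by positivity) (Finset.mem_univ i)
      nlinarith
    have e1 : χ1 (τ z) = 1 := Real.smoothTransition.one_of_one_le (by linarith)
    have e3 : χ3 (τ z) = 0 := Real.smoothTransition.zero_of_nonpos (by linarith)
    simp [hG, e1, e3, hχ2]
  -- a lower bound for `G` on the ball
  obtain ⟨δ, hδ, hGδ⟩ : ∃ δ > 0, ∀ z ∈ Metric.closedBall (0 : ι → ℂ) 2, δ ≤ ‖G z‖ := by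
    obtain ⟨z0, -, hz0⟩ := (isCompact_closedBall (0 : ι → ℂ) 2).exists_isMinOn
      ⟨0, by simp⟩ cG.continuous.norm.continuousOn
    exact ⟨‖G z0‖, norm_pos_iff.2 (Gne z0), fun z hz => hz0 hz⟩
  have key := integral_det_eq_of_eq_off_ball volume
    (u := fun z => clampPi (δ / 2) (G z)) (v := fun z => clampPi (δ / 2) (powMap L A z))
    ((contDiff_clampPi _).comp cG) ((contDiff_clampPi _).comp (contDiff_powMap L A)) (R := 2)
    (fun z hz => by rw [Gout z hz])
  have hdet : ∀ u : (ι → ℂ) → (ι → ℂ), ContDiff ℝ 1 u → ∀ z,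
      (fderiv ℝ (fun z => clampPi (δ / 2) (u z)) z).det =
      (∏ i, max 0 (1 - ((u z i).re / (δ / 2)) ^ 2) * max 0 (1 - ((u z i).im / (δ / 2)) ^ 2)) *
        (fderiv ℝ u z).det := by
    intro u hu z
    have : fderiv ℝ (fun z => clampPi (δ / 2) (u z)) z =
        (fderiv ℝ (clampPi (δ / 2)) (u z)).comp (fderiv ℝ u z) :=
      fderiv_comp z ((contDiff_clampPi _).differentiable one_ne_zero _)
        (hu.differentiable one_ne_zero _)
    rw [this, ← det_fderiv_clampPi]
    exact LinearMap.det_comp _ _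
  have left : ∫ z in Metric.ball (0 : ι → ℂ) 2,
      (fderiv ℝ (fun z => clampPi (δ / 2) (G z)) z).det = 0 := by
    refine setIntegral_eq_zero_of_forall_eq_zero fun z hz => ?_
    rw [hdet G cG]
    have hb := hGδ z (Metric.ball_subset_closedBall hz)
    obtain ⟨i, hi⟩ : ∃ i, δ ≤ ‖G z i‖ := by
      by_contra hcon
      push Not at hcon
      have := (pi_norm_lt_iff hδ).2 hcon
      linarith
    rw [Finset.prod_eq_zero (Finset.mem_univ i), zero_mul]
    have habs := Complex.norm_le_abs_re_add_abs_im (G z i)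
    have hsq : ∀ x : ℝ, δ / 2 ≤ |x| → max 0 (1 - (x / (δ / 2)) ^ 2) = 0 := by
      intro x hx
      refine max_eq_left ?_
      rw [div_pow, sub_nonpos, le_div_iff₀ (by positivity), one_mul, ← sq_abs x]
      gcongr
    rcases le_total (δ / 2) |(G z i).re| with h | h
    · rw [hsq _ h, zero_mul]
    · rw [hsq _ (by linarith : δ / 2 ≤ |(G z i).im|), mul_zero]
  have right : 0 < ∫ z in Metric.ball (0 : ι → ℂ) 2,
      (fderiv ℝ (fun z => clampPi (δ / 2) (powMap L A z)) z).det := by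
    set g : (ι → ℂ) → ℝ := fun z => (fderiv ℝ (fun z => clampPi (δ / 2) (powMap L A z)) z).det
    have gc : Continuous g := ContinuousLinearMap.continuous_det.comp
      (((contDiff_clampPi _).comp (contDiff_powMap L A)).continuous_fderiv one_ne_zero)
    have gn : ∀ z, 0 ≤ g z := by
      intro z
      simp only [g]
      rw [hdet _ (contDiff_powMap L A), det_fderiv_powMap]
      refine mul_nonneg (Finset.prod_nonneg fun i _ => ?_) (Complex.normSq_nonneg _)
      exact mul_nonneg (le_max_left _ _) (le_max_left _ _)
    -- a point where the integrand is positive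
    have hpt : ∃ t : ℝ, 0 < t ∧ t < 2 ∧ ∀ i, ‖powMap L A (fun _ => (t : ℂ)) i‖ < δ / 2 := by
      have hcont : Continuous fun t : ℝ => powMap L A (fun _ => (t : ℂ)) :=
        (contDiff_powMap L A).continuous.comp (by fun_prop)
      have hz : powMap L A (fun _ : ι => ((0 : ℝ) : ℂ)) = 0 := by
        simp [powMap, hL]
      have : ∀ᶠ t : ℝ in nhds (0 : ℝ), ‖powMap L A (fun _ => (t : ℂ))‖ < δ / 2 := by
        refine hcont.norm.continuousAt.eventually (gt_mem_nhds ?_)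
        change ‖powMap L A (fun _ : ι => ((0 : ℝ) : ℂ))‖ < δ / 2
        rw [hz, norm_zero]; positivity
      obtain ⟨ε, hε, h⟩ := Metric.eventually_nhds_iff.1 this
      refine ⟨min (ε / 2) 1, by positivity, (min_le_right _ _).trans_lt (by norm_num), ?_⟩
      refine (pi_norm_lt_iff (by positivity)).1 (h ?_)
      rw [dist_zero_right, Real.norm_of_nonneg (by positivity)]
      exact (min_le_left _ _).trans_lt (by linarith)
    obtain ⟨t, ht0, ht2, ht⟩ := hpt
    have hgt : 0 < g (fun _ => (t : ℂ)) := by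
      simp only [g]
      rw [hdet _ (contDiff_powMap L A), det_fderiv_powMap]
      have hsq : ∀ x : ℝ, |x| < δ / 2 → 0 < max 0 (1 - (x / (δ / 2)) ^ 2) := by
        intro x hx
        refine lt_max_of_lt_right ?_
        rw [div_pow, sub_pos, div_lt_one (by positivity), ← sq_abs x]
        gcongr
      refine mul_pos (Finset.prod_pos fun i _ => ?_) (Complex.normSq_pos.2 ?_)
      · exact mul_pos (hsq _ ((Complex.abs_re_le_norm _).trans_lt (ht i)))
          (hsq _ ((Complex.abs_im_le_norm _).trans_lt (ht i)))
      · refine mul_ne_zero (Finset.prod_ne_zero_iff.2 fun i _ => ?_) hA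
        exact mul_ne_zero (by exact_mod_cast hL) (pow_ne_zero _ (by exact_mod_cast ht0.ne'))
    rw [setIntegral_pos_iff_support_of_nonneg_ae (Filter.Eventually.of_forall gn)
      ((gc.continuousOn.integrableOn_compact (isCompact_closedBall (0 : ι → ℂ) 2)).mono_set
        Metric.ball_subset_closedBall)]
    refine IsOpen.measure_pos _ (gc.isOpen_support.inter Metric.isOpen_ball) ⟨fun _ => (t : ℂ),
      hgt.ne', ?_⟩
    rw [mem_ball_zero_iff, pi_norm_lt_iff (by norm_num)]
    intro i
    rw [Complex.norm_real, Real.norm_of_nonneg ht0.le]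
    exact ht2
  rw [left] at key
  exact right.ne key

/-- Weighted `S¹` Borsuk–Ulam theorem: an equivariant `C¹` map between representations with
positive weights, one component of which vanishes identically, has a zero on every
invariant ellipsoidal sphere. -/
theorem borsukUlam_weighted (i0 : ι) (k w : ι → ℕ) (hk : ∀ i, 0 < k i) (hw : ∀ i, 0 < w i)
    (g : (ι → ℂ) → (ι → ℂ)) (hg : ContDiff ℝ 1 g)
    (heq : ∀ (u : ℂ), ‖u‖ = 1 → ∀ z i, g (fun j => u ^ k j * z j) i = u ^ w i * g z i)
    (h0 : ∀ z, g z i0 = 0) (ρ : ℝ) (hρ : 0 < ρ) :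
    ∃ z, ∑ i, (k i : ℝ) * ‖z i‖ ^ 2 = ρ ^ 2 ∧ g z = 0 := by
  by_contra hcon
  push Not at hcon
  set n : (ι → ℂ) → ℝ := fun v => √(∑ i, ‖v i‖ ^ 2) with hn
  set P : (ι → ℂ) → (ι → ℂ) := fun v i => (((n v)⁻¹ : ℝ) * v i) ^ k i with hP
  set E : (ι → ℂ) → ℝ := fun v => √(∑ i, (k i : ℝ) * ‖P v i‖ ^ 2) with hE
  set Z : (ι → ℂ) → (ι → ℂ) := fun v i => ((ρ * (E v)⁻¹ : ℝ) : ℂ) * P v i with hZ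
  set L : ℕ := ∏ i, w i with hL
  have hL0 : L ≠ 0 := Finset.prod_ne_zero_iff.2 fun i _ => (hw i).ne'
  have hLw : ∀ i, w i * (L / w i) = L := fun i =>
    Nat.mul_div_cancel' (Finset.dvd_prod_of_mem w (Finset.mem_univ i))
  have hLw0 : ∀ i, L / w i ≠ 0 := by
    intro i h
    have := hLw i
    rw [h, mul_zero] at this
    exact hL0 this.symm
  set f : (ι → ℂ) → (ι → ℂ) := fun v i => ((n v ^ L : ℝ) : ℂ) * g (Z v) i ^ (L / w i) with hf
  have sumpos : ∀ v : ι → ℂ, v ≠ 0 → 0 < ∑ i, ‖v i‖ ^ 2 := by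
    intro v hv
    obtain ⟨i, hi⟩ := Function.ne_iff.1 hv
    exact Finset.sum_pos' (fun _ _ => by positivity) ⟨i, Finset.mem_univ _, by
      have : 0 < ‖v i‖ := norm_pos_iff.2 hi
      positivity⟩
  have npos : ∀ v : ι → ℂ, v ≠ 0 → 0 < n v := fun v hv => Real.sqrt_pos.2 (sumpos v hv)
  have Epos' : ∀ v : ι → ℂ, v ≠ 0 → 0 < ∑ i, (k i : ℝ) * ‖P v i‖ ^ 2 := by
    intro v hv
    obtain ⟨i, hi⟩ := Function.ne_iff.1 hv
    have hki : (0 : ℝ) < k i := by exact_mod_cast hk i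
    refine Finset.sum_pos' (fun _ _ => by positivity) ⟨i, Finset.mem_univ _, ?_⟩
    have h1 : P v i ≠ 0 := pow_ne_zero _ (mul_ne_zero (by
      exact_mod_cast (inv_pos.2 (npos v hv)).ne') hi)
    have : 0 < ‖P v i‖ := norm_pos_iff.2 h1
    positivity
  have Epos : ∀ v : ι → ℂ, v ≠ 0 → 0 < E v := fun v hv => Real.sqrt_pos.2 (Epos' v hv)
  have hZs : ∀ v : ι → ℂ, v ≠ 0 → ∑ i, (k i : ℝ) * ‖Z v i‖ ^ 2 = ρ ^ 2 := by
    intro v hv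
    have : ∀ i, (k i : ℝ) * ‖Z v i‖ ^ 2 = (ρ * (E v)⁻¹) ^ 2 * ((k i : ℝ) * ‖P v i‖ ^ 2) := by
      intro i
      simp only [hZ]
      rw [norm_mul, Complex.norm_real, mul_pow, Real.norm_eq_abs, sq_abs]
      ring
    simp_rw [this]
    rw [← Finset.mul_sum]
    have h2 : ∑ i, (k i : ℝ) * ‖P v i‖ ^ 2 = E v ^ 2 := (Real.sq_sqrt (Epos' v hv).le).symm
    rw [h2]
    have := (Epos v hv).ne'
    field_simp
  have sn : ContDiffOn ℝ 1 n {0}ᶜ := by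
    refine ContDiffOn.sqrt ?_ fun v hv => (sumpos v hv).ne'
    exact (ContDiff.sum fun i _ => (contDiff_apply ℝ ℂ i).norm_sq ℝ).contDiffOn
  have sni : ContDiffOn ℝ 1 (fun v => (n v)⁻¹) {0}ᶜ := sn.inv fun v hv => (npos v hv).ne'
  have sP : ∀ i, ContDiffOn ℝ 1 (fun v => P v i) {0}ᶜ := by
    intro i
    exact ((Complex.ofRealCLM.contDiff.comp_contDiffOn sni).mul
      (contDiff_apply ℝ ℂ i).contDiffOn).pow _
  have sE : ContDiffOn ℝ 1 E {0}ᶜ := by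
    refine ContDiffOn.sqrt ?_ fun v hv => (Epos' v hv).ne'
    exact ContDiffOn.sum fun i _ => contDiffOn_const.mul ((sP i).norm_sq ℝ)
  have sZ : ContDiffOn ℝ 1 Z {0}ᶜ := by
    rw [contDiffOn_pi]
    intro i
    exact (Complex.ofRealCLM.contDiff.comp_contDiffOn
      (contDiffOn_const.mul (sE.inv fun v hv => (Epos v hv).ne'))).mul (sP i)
  have sg : ContDiffOn ℝ 1 (fun v => g (Z v)) {0}ᶜ := hg.comp_contDiffOn sZ
  refine borsukUlam_core i0 L hL0 f ?_ ?_ ?_ ?_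
  · rw [contDiffOn_pi]
    intro i
    exact (Complex.ofRealCLM.contDiff.comp_contDiffOn (sn.pow L)).mul
      (((contDiff_apply ℝ ℂ i).comp_contDiffOn sg).pow _)
  · intro c z
    by_cases hc : c = 0
    · subst hc
      ext i
      simp [hf, hn, hL0]
    have hn' : n (c • z) = ‖c‖ * n z := by
      simp only [hn, Pi.smul_apply, smul_eq_mul, norm_mul, mul_pow]
      rw [← Finset.mul_sum, Real.sqrt_mul (by positivity), Real.sqrt_sq (norm_nonneg _)]
    have hcn : (‖c‖ : ℂ) ≠ 0 := by exact_mod_cast (norm_pos_iff.2 hc).ne'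
    set u : ℂ := c / ‖c‖ with hu
    have hu1 : ‖u‖ = 1 := by
      rw [hu, norm_div, Complex.norm_real, norm_norm, div_self (norm_pos_iff.2 hc).ne']
    have hcu : c = ‖c‖ * u := by rw [hu]; field_simp
    have hP' : ∀ i, P (c • z) i = u ^ k i * P z i := by
      intro i
      simp only [hP, hn', Pi.smul_apply, smul_eq_mul]
      rw [← mul_pow, hu]
      congr 1
      push_cast
      rw [mul_inv]
      ring
    have hE' : E (c • z) = E z := by
      simp only [hE, hP', norm_mul, norm_pow, hu1, one_pow, one_mul]
    have hZ' : Z (c • z) = fun j => u ^ k j * Z z j := by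
      ext i
      simp only [hZ, hE', hP']
      ring
    ext i
    simp only [hf, hZ', hn', Pi.smul_apply, smul_eq_mul]
    rw [heq u hu1, mul_pow (u ^ w i), ← pow_mul, hLw]
    have : c ^ L = (‖c‖ : ℂ) ^ L * u ^ L := by rw [← mul_pow, ← hcu]
    rw [this]
    push_cast
    ring
  · intro z hz h
    refine hcon (Z z) (hZs z hz) ?_
    ext i
    have := congrFun h i
    simp only [hf, Pi.zero_apply, mul_eq_zero] at this
    rcases this with h1 | h1
    · exfalso
      have : n z ^ L = 0 := by exact_mod_cast h1
      exact (pow_pos (npos z hz) L).ne' this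
    · exact eq_zero_of_pow_eq_zero h1
  · intro z
    simp [hf, h0, hLw0]

end BorsukUlam

/-! ### Trigonometric polynomials -/

/-- The character `t ↦ exp (2πikt)`. -/
def ee (k : ℤ) (t : ℝ) : ℂ := Complex.exp (2 * π * Complex.I * k * t)

theorem ee_add (k : ℤ) (s t : ℝ) : ee k (s + t) = ee k s * ee k t := by
  simp only [ee]
  rw [← Complex.exp_add]; congr 1; push_cast; ring

theorem ee_add_left (k l : ℤ) (t : ℝ) : ee (k + l) t = ee k t * ee l t := by
  simp only [ee]
  rw [← Complex.exp_add]; congr 1; push_cast; ring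

@[simp] theorem ee_zero (k : ℤ) : ee k 0 = 1 := by simp [ee]

@[simp] theorem ee_zero_left (t : ℝ) : ee 0 t = 1 := by simp [ee]

theorem norm_ee (k : ℤ) (t : ℝ) : ‖ee k t‖ = 1 := by
  have : 2 * π * Complex.I * k * t = ((2 * π * k * t : ℝ) : ℂ) * Complex.I := by push_cast; ring
  rw [ee, this, Complex.norm_exp_ofReal_mul_I]

theorem conj_ee (k : ℤ) (t : ℝ) : (starRingEnd ℂ) (ee k t) = ee (-k) t := by
  simp only [ee]
  rw [← Complex.exp_conj]
  congr 1
  simp [Complex.conj_ofNat]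

theorem ee_one (k : ℤ) : ee k 1 = 1 := by
  rw [ee, Complex.exp_eq_one_iff]
  exact ⟨k, by push_cast; ring⟩

theorem ee_periodic (k : ℤ) : Function.Periodic (ee k) 1 := by
  intro t; rw [ee_add, ee_one, mul_one]

theorem ee_eq_pow (k : ℤ) (t : ℝ) : ee k t = ee 1 t ^ k := by
  simp only [ee]
  rw [← Complex.exp_int_mul]
  congr 1; push_cast; ring

theorem hasDerivAt_ee (k : ℤ) (t : ℝ) : HasDerivAt (ee k) (2 * π * Complex.I * k * ee k t) t := by
  have h : HasDerivAt (fun t : ℝ => 2 * π * Complex.I * k * (t : ℂ)) (2 * π * Complex.I * k) t := by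
    simpa using (Complex.ofRealCLM.hasDerivAt (x := t)).const_mul (2 * π * Complex.I * k)
  exact h.cexp.congr_deriv (mul_comm _ _)

@[fun_prop] theorem continuous_ee (k : ℤ) : Continuous (ee k) := by
  unfold ee; fun_prop

theorem integral_ee (k : ℤ) : ∫ t in (0 : ℝ)..1, ee k t = if k = 0 then 1 else 0 := by
  by_cases hk : k = 0
  · simp [hk]
  · have hne : (2 * π * Complex.I * k : ℂ) ≠ 0 := by
      simp [hk, Real.pi_ne_zero]
    have : ∀ t : ℝ, HasDerivAt (fun t => (2 * π * Complex.I * k : ℂ)⁻¹ * ee k t) (ee k t) t := by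
      intro t
      have := (hasDerivAt_ee k t).const_mul (2 * π * Complex.I * k : ℂ)⁻¹
      rwa [inv_mul_cancel_left₀ hne] at this
    rw [intervalIntegral.integral_eq_sub_of_hasDerivAt (fun t _ => this t)
      ((continuous_ee k).intervalIntegrable _ _)]
    simp [ee_one, hk]

/-- Parseval's identity for finite sums indexed by arbitrary distinct frequencies. -/
theorem parseval_finset (J : Finset ℤ) (c : ℤ → ℂ) :
    ∫ t in (0 : ℝ)..1, ‖∑ k ∈ J, c k * ee k t‖ ^ 2 = ∑ k ∈ J, ‖c k‖ ^ 2 := by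
  have h1 : ∀ t : ℝ, ((‖∑ k ∈ J, c k * ee k t‖ ^ 2 : ℝ) : ℂ) =
      ∑ k ∈ J, ∑ l ∈ J, c k * (starRingEnd ℂ) (c l) * ee (k - l) t := by
    intro t
    have := Complex.mul_conj' (∑ k ∈ J, c k * ee k t)
    push_cast
    rw [← this, map_sum, Finset.sum_mul_sum]
    refine Finset.sum_congr rfl fun k _ => Finset.sum_congr rfl fun l _ => ?_
    rw [map_mul, conj_ee, sub_eq_add_neg, ee_add_left]
    ring
  have h2 : ((∫ t in (0 : ℝ)..1, ‖∑ k ∈ J, c k * ee k t‖ ^ 2 : ℝ) : ℂ) =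
      ((∑ k ∈ J, ‖c k‖ ^ 2 : ℝ) : ℂ) := by
    rw [← intervalIntegral.integral_ofReal]
    simp_rw [h1]
    have hc : ∀ a : ℂ, ∀ k : ℤ, IntervalIntegrable (fun t => a * ee k t) volume 0 1 := fun a k =>
      (continuous_const.mul (continuous_ee k)).intervalIntegrable _ _
    rw [intervalIntegral.integral_finsetSum (fun k _ =>
      Continuous.intervalIntegrable (by fun_prop) _ _)]
    push_cast
    refine Finset.sum_congr rfl fun k hk => ?_
    rw [intervalIntegral.integral_finsetSum (fun l _ => hc _ _)]
    simp_rw [intervalIntegral.integral_const_mul, integral_ee]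
    rw [Finset.sum_eq_single k]
    · simp [Complex.mul_conj']
    · intro l _ hl
      simp [sub_eq_zero, hl.symm]
    · intro h; exact absurd hk h
  exact_mod_cast h2

/-- `k`-th Fourier coefficient of a function on `[0,1]`. -/
def fc (u : ℝ → ℂ) (k : ℤ) : ℂ := ∫ t in (0 : ℝ)..1, ee (-k) t * u t

/-- Bessel's inequality. -/
theorem bessel (J : Finset ℤ) (u : ℝ → ℂ) (hu : Continuous u) :
    ∑ k ∈ J, ‖fc u k‖ ^ 2 ≤ ∫ t in (0 : ℝ)..1, ‖u t‖ ^ 2 := by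
  set S : ℝ → ℂ := fun t => ∑ k ∈ J, fc u k * ee k t with hS
  have hSc : Continuous S := continuous_finsetSum _ fun l _ =>
        continuous_const.mul (continuous_ee _)
  have hpt : ∀ t, ‖u t‖ ^ 2 = ‖u t - S t‖ ^ 2 + 2 * (u t * (starRingEnd ℂ) (S t)).re - ‖S t‖ ^ 2 := by
    intro t
    have := Complex.normSq_sub (u t) (S t)
    simp only [Complex.normSq_eq_norm_sq] at this
    rw [this]; ring
  have hcross : ∫ t in (0 : ℝ)..1, (u t * (starRingEnd ℂ) (S t)).re = ∑ k ∈ J, ‖fc u k‖ ^ 2 := by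
    have h1 : ∀ t, u t * (starRingEnd ℂ) (S t) =
        ∑ k ∈ J, (starRingEnd ℂ) (fc u k) * (ee (-k) t * u t) := by
      intro t
      simp only [hS, map_sum, map_mul, conj_ee, Finset.mul_sum]
      exact Finset.sum_congr rfl fun _ _ => by ring
    have h2 : ∫ t in (0 : ℝ)..1, u t * (starRingEnd ℂ) (S t) =
        ((∑ k ∈ J, ‖fc u k‖ ^ 2 : ℝ) : ℂ) := by
      simp_rw [h1]
      rw [intervalIntegral.integral_finsetSum (fun l _ =>
        Continuous.intervalIntegrable (by fun_prop) _ _)]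
      simp_rw [intervalIntegral.integral_const_mul]
      push_cast
      refine Finset.sum_congr rfl fun k _ => ?_
      exact Complex.conj_mul' _
    have h3 := Complex.reCLM.intervalIntegral_comp_comm (f := fun t => u t * (starRingEnd ℂ) (S t))
      (a := 0) (b := 1) (μ := volume)
      ((hu.mul (Complex.continuous_conj.comp hSc)).intervalIntegrable _ _)
    simp only [Complex.reCLM_apply] at h3
    rw [h3, h2, Complex.ofReal_re]
  have hcS : ∫ t in (0 : ℝ)..1, ‖S t‖ ^ 2 = ∑ k ∈ J, ‖fc u k‖ ^ 2 := parseval_finset J _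
  have hcc : Continuous fun t => (u t * (starRingEnd ℂ) (S t)).re :=
    Complex.continuous_re.comp (hu.mul (Complex.continuous_conj.comp hSc))
  have hd : Continuous fun t => ‖u t - S t‖ ^ 2 := ((hu.sub hSc).norm.pow 2)
  simp_rw [hpt]
  rw [intervalIntegral.integral_sub, intervalIntegral.integral_add,
    intervalIntegral.integral_const_mul, hcross, hcS]
  · have : 0 ≤ ∫ t in (0 : ℝ)..1, ‖u t - S t‖ ^ 2 :=
      intervalIntegral.integral_nonneg zero_le_one fun t _ => by positivity
    linarith
  · exact hd.intervalIntegrable _ _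
  · exact (continuous_const.mul hcc).intervalIntegrable _ _
  · exact (hd.add (continuous_const.mul hcc)).intervalIntegrable _ _
  · exact (hSc.norm.pow 2).intervalIntegrable _ _

/-- Differentiation under the integral sign, in the `C¹` category. -/
theorem contDiff_one_intervalIntegral {V E : Type*} [NormedAddCommGroup V] [NormedSpace ℝ V]
    [FiniteDimensional ℝ V] [NormedAddCommGroup E] [NormedSpace ℝ E] [CompleteSpace E]
    (f : V → ℝ → E) (f' : V → ℝ → (V →L[ℝ] E)) (hf : Continuous (Function.uncurry f))
    (hf' : Continuous (Function.uncurry f'))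
    (hd : ∀ x t, HasFDerivAt (fun x => f x t) (f' x t) x) :
    ContDiff ℝ 1 fun x => ∫ t in (0 : ℝ)..1, f x t := by
  have : ProperSpace V := FiniteDimensional.proper ℝ V
  have key : ∀ x, HasFDerivAt (fun x => ∫ t in (0 : ℝ)..1, f x t) (∫ t in (0 : ℝ)..1, f' x t) x := by
    intro x
    obtain ⟨C, hC⟩ := ((isCompact_closedBall x 1).prod
      (isCompact_Icc (a := (0 : ℝ)) (b := 1))).exists_bound_of_continuousOn hf'.continuousOn
    refine intervalIntegral.hasFDerivAt_integral_of_dominated_of_fderiv_le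
      (bound := fun _ => C) (s := Metric.ball x 1) (Metric.ball_mem_nhds x one_pos) ?_ ?_ ?_ ?_ ?_ ?_
    · exact Filter.Eventually.of_forall fun y => (hf.uncurry_left y).aestronglyMeasurable
    · exact (hf.uncurry_left x).intervalIntegrable _ _
    · exact (hf'.uncurry_left x).aestronglyMeasurable
    · refine Filter.Eventually.of_forall fun t ht y hy => hC (y, t) ⟨Metric.ball_subset_closedBall hy, ?_⟩
      rw [uIoc_of_le zero_le_one] at ht
      exact Ioc_subset_Icc_self ht
    · exact intervalIntegrable_const
    · exact Filter.Eventually.of_forall fun t _ y _ => hd y t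
  rw [contDiff_one_iff_fderiv]
  refine ⟨fun x => (key x).differentiableAt, ?_⟩
  rw [show fderiv ℝ (fun x => ∫ t in (0 : ℝ)..1, f x t) = fun x => ∫ t in (0 : ℝ)..1, f' x t from
    funext fun x => (key x).fderiv]
  exact intervalIntegral.continuous_parametric_intervalIntegral_of_continuous' hf' 0 1

/-! ### The action functional on trigonometric polynomials -/

/-- The real inner product on `ℂ²`. -/
def ip (v w : Fin 2 → ℂ) : ℝ := ∑ i, ((starRingEnd ℂ) (v i) * w i).re

/-- The square of the Euclidean norm on `ℂ²`. -/
def nsq (v : Fin 2 → ℂ) : ℝ := ∑ i, ‖v i‖ ^ 2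

/-- A Hamiltonian `H` with gradient `g` which is asymptotically quadratic, with linear part at
infinity given by the frequencies `s`. The gradient enters through the upper Taylor estimate
`quad`. -/
structure Ham (s : Fin 2 → ℝ) where
  H : (Fin 2 → ℂ) → ℝ
  g : (Fin 2 → ℂ) → (Fin 2 → ℂ)
  cont : Continuous H
  smooth : ContDiff ℝ 1 g
  M : ℝ
  M_nonneg : 0 ≤ M
  quad : ∀ z h, H (z + h) ≤ H z + ip (g z) h + M * nsq h
  C : ℝ
  asym : ∀ z i, ‖g z i - 2 * π * s i * z i‖ ≤ C

/-- `ℂ²`-valued trigonometric polynomials with frequencies in `J`, given by coefficients. -/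
abbrev GV (J : Finset ℤ) := J → Fin 2 → ℂ

section Galerkin

variable {J : Finset ℤ} {s : Fin 2 → ℝ}

/-- Coefficients extended by zero. -/
def coef (x : GV J) (k : ℤ) (i : Fin 2) : ℂ := if h : k ∈ J then x ⟨k, h⟩ i else 0

theorem coef_add (x y : GV J) (k : ℤ) (i : Fin 2) : coef (x + y) k i = coef x k i + coef y k i := by
  unfold coef; split_ifs <;> simp

theorem coef_smul (r : ℝ) (x : GV J) (k : ℤ) (i : Fin 2) : coef (r • x) k i = r * coef x k i := by
  unfold coef; split_ifs <;> simp

@[fun_prop] theorem continuous_coef (k : ℤ) (i : Fin 2) : Continuous fun x : GV J => coef x k i := by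
  unfold coef
  split_ifs <;> fun_prop

/-- The coefficient as a continuous linear functional. -/
def coefL (k : ℤ) (i : Fin 2) : GV J →L[ℝ] ℂ where
  toFun x := coef x k i
  map_add' x y := coef_add x y k i
  map_smul' r x := by simp [coef_smul]

/-- The loop with the given Fourier coefficients. -/
def ev (x : GV J) (t : ℝ) : Fin 2 → ℂ := fun i => ∑ k ∈ J, coef x k i * ee k t

theorem ev_add (x y : GV J) (t : ℝ) : ev (x + y) t = ev x t + ev y t := by
  ext i
  simp [ev, coef_add, add_mul, Finset.sum_add_distrib]

@[fun_prop] theorem continuous_ev (x : GV J) : Continuous (ev x) := by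
  unfold ev; fun_prop

/-- The symplectic action of a trigonometric polynomial. -/
def act (x : GV J) : ℝ := ∑ k ∈ J, ∑ i, π * k * ‖coef x k i‖ ^ 2

/-- The square of the `L²` norm. -/
def nsqV (x : GV J) : ℝ := ∑ k ∈ J, ∑ i, ‖coef x k i‖ ^ 2

theorem nsqV_nonneg (x : GV J) : 0 ≤ nsqV x :=
  Finset.sum_nonneg fun _ _ => Finset.sum_nonneg fun _ _ => by positivity

theorem coef_sq_le_nsqV (x : GV J) (k : ℤ) (i : Fin 2) : ‖coef x k i‖ ^ 2 ≤ nsqV x := by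
  by_cases hk : k ∈ J
  · calc ‖coef x k i‖ ^ 2 ≤ ∑ i, ‖coef x k i‖ ^ 2 :=
        Finset.single_le_sum (f := fun i => ‖coef x k i‖ ^ 2) (fun _ _ => by positivity)
          (Finset.mem_univ i)
      _ ≤ _ := Finset.single_le_sum (f := fun k => ∑ i, ‖coef x k i‖ ^ 2)
          (fun _ _ => Finset.sum_nonneg fun _ _ => by positivity) hk
  · simp [coef, hk, nsqV_nonneg]

theorem nsqV_smul (r : ℝ) (x : GV J) : nsqV (r • x) = r ^ 2 * nsqV x := by
  simp only [nsqV, coef_smul, norm_mul, Complex.norm_real, mul_pow, Real.norm_eq_abs, sq_abs,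
    Finset.mul_sum]

/-- The Hamiltonian action functional. -/
def Phi (h : Ham s) (x : GV J) : ℝ := act x - ∫ t in (0 : ℝ)..1, h.H (ev x t)

/-- Its `L²` gradient. -/
def grad (h : Ham s) (x : GV J) : GV J := fun k i =>
  2 * π * (k : ℤ) * x k i - fc (fun t => h.g (ev x t) i) k

theorem coef_grad (h : Ham s) (x : GV J) {k : ℤ} (hk : k ∈ J) (i : Fin 2) :
    coef (grad h x) k i = 2 * π * k * coef x k i - fc (fun t => h.g (ev x t) i) k := by
  simp [coef, hk, grad]

theorem integral_nsq_ev (x : GV J) : ∫ t in (0 : ℝ)..1, nsq (ev x t) = nsqV x := by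
  unfold nsq nsqV
  rw [intervalIntegral.integral_finsetSum (fun i _ =>
    Continuous.intervalIntegrable (by fun_prop) _ _), Finset.sum_comm]
  exact Finset.sum_congr rfl fun i _ => parseval_finset J fun k => coef x k i

theorem integral_ip_ev (u : ℝ → Fin 2 → ℂ) (hu : Continuous u) (x : GV J) :
    ∫ t in (0 : ℝ)..1, ip (u t) (ev x t) =
      ∑ k ∈ J, ∑ i, ((starRingEnd ℂ) (fc (fun t => u t i) k) * coef x k i).re := by
  have hfc : ∀ k i, (starRingEnd ℂ) (fc (fun t => u t i) k) * coef x k i =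
      ∫ t in (0 : ℝ)..1, (starRingEnd ℂ) (u t i) * (coef x k i * ee k t) := by
    intro k i
    have h1 := Complex.conjCLE.toContinuousLinearMap.intervalIntegral_comp_comm
      (f := fun t => ee (-k) t * u t i) (a := 0) (b := 1) (μ := volume)
      (Continuous.intervalIntegrable (by fun_prop) _ _)
    simp only [ContinuousLinearEquiv.coe_coe, Complex.conjCLE_apply] at h1
    rw [fc, ← h1, ← intervalIntegral.integral_mul_const]
    refine intervalIntegral.integral_congr fun t _ => ?_
    simp only [map_mul, conj_ee, neg_neg]
    ring
  have hre : ∀ k i, ((starRingEnd ℂ) (fc (fun t => u t i) k) * coef x k i).re =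
      ∫ t in (0 : ℝ)..1, ((starRingEnd ℂ) (u t i) * (coef x k i * ee k t)).re := by
    intro k i
    have h1 := Complex.reCLM.intervalIntegral_comp_comm
      (f := fun t => (starRingEnd ℂ) (u t i) * (coef x k i * ee k t)) (a := 0) (b := 1)
      (μ := volume) (Continuous.intervalIntegrable (by fun_prop) _ _)
    simp only [Complex.reCLM_apply] at h1
    rw [hfc, h1]
  simp_rw [hre]
  have hcont : ∀ k i, Continuous fun t => ((starRingEnd ℂ) (u t i) * (coef x k i * ee k t)).re := by
    intro k i; fun_prop
  rw [Finset.sum_comm]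
  simp_rw [← intervalIntegral.integral_finsetSum (fun k (_ : k ∈ J) =>
    (hcont k _).intervalIntegrable 0 1)]
  rw [← intervalIntegral.integral_finsetSum (fun i _ =>
    (continuous_finsetSum _ fun k _ => hcont k i).intervalIntegrable 0 1)]
  refine intervalIntegral.integral_congr fun t _ => ?_
  simp only [ip, ev, Finset.mul_sum, Complex.re_sum]

theorem continuous_H_ev (h : Ham s) (x : GV J) : Continuous fun t => h.H (ev x t) :=
  h.cont.comp (continuous_ev x)

theorem continuous_g_ev (h : Ham s) (x : GV J) : Continuous fun t => h.g (ev x t) :=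
  h.smooth.continuous.comp (continuous_ev x)

@[fun_prop] theorem continuous_ip {X : Type*} [TopologicalSpace X] {u v : X → Fin 2 → ℂ}
    (hu : Continuous u) (hv : Continuous v) : Continuous fun t => ip (u t) (v t) := by
  unfold ip; fun_prop

@[fun_prop] theorem continuous_nsq {X : Type*} [TopologicalSpace X] {u : X → Fin 2 → ℂ}
    (hu : Continuous u) : Continuous fun t => nsq (u t) := by
  unfold nsq; fun_prop

theorem Phi_add_ge (h : Ham s) {N : ℝ} (hN : ∀ k ∈ J, |(k : ℝ)| ≤ N) (x y : GV J) :
    Phi h x + (∑ k ∈ J, ∑ i, ((starRingEnd ℂ) (coef (grad h x) k i) * coef y k i).re)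
      - (π * N + h.M) * nsqV y ≤ Phi h (x + y) := by
  have hg := continuous_g_ev h x
  have hH := continuous_H_ev h x
  have h1 : ∫ t in (0 : ℝ)..1, h.H (ev (x + y) t) ≤ ∫ t in (0 : ℝ)..1,
      (h.H (ev x t) + ip (h.g (ev x t)) (ev y t) + h.M * nsq (ev y t)) := by
    refine intervalIntegral.integral_mono_on zero_le_one
      ((continuous_H_ev h _).intervalIntegrable _ _)
      (Continuous.intervalIntegrable (by fun_prop) _ _) fun t _ => ?_
    rw [ev_add]
    exact h.quad _ _
  rw [intervalIntegral.integral_add (Continuous.intervalIntegrable (by fun_prop) _ _)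
      (Continuous.intervalIntegrable (by fun_prop) _ _),
    intervalIntegral.integral_add (Continuous.intervalIntegrable (by fun_prop) _ _)
      (Continuous.intervalIntegrable (by fun_prop) _ _), intervalIntegral.integral_const_mul,
    integral_nsq_ev, integral_ip_ev _ hg] at h1
  have h2 : act x + (∑ k ∈ J, ∑ i, ((starRingEnd ℂ) (coef (grad h x) k i) * coef y k i).re)
      + (∑ k ∈ J, ∑ i, ((starRingEnd ℂ) (fc (fun t => h.g (ev x t) i) k) * coef y k i).re)
      - π * N * nsqV y ≤ act (x + y) := by
    simp only [act, nsqV, Finset.mul_sum, ← Finset.sum_add_distrib, ← Finset.sum_sub_distrib]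
    refine Finset.sum_le_sum fun k hk => Finset.sum_le_sum fun i _ => ?_
    rw [coef_grad h x hk, coef_add]
    have e1 : ‖coef x k i + coef y k i‖ ^ 2 = ‖coef x k i‖ ^ 2 + ‖coef y k i‖ ^ 2 +
        2 * ((starRingEnd ℂ) (coef x k i) * coef y k i).re := by
      have := Complex.normSq_add (coef x k i) (coef y k i)
      simp only [Complex.normSq_eq_norm_sq] at this
      rw [this]
      simp
    have e2 : ((starRingEnd ℂ) (2 * π * k * coef x k i - fc (fun t => h.g (ev x t) i) k) *
        coef y k i).re = 2 * π * k * ((starRingEnd ℂ) (coef x k i) * coef y k i).re -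
        ((starRingEnd ℂ) (fc (fun t => h.g (ev x t) i) k) * coef y k i).re := by
      have : (2 * π * k * coef x k i : ℂ) = ((2 * π * k : ℝ) : ℂ) * coef x k i := by push_cast; ring
      rw [this, map_sub, sub_mul, Complex.sub_re, map_mul, Complex.conj_ofReal, mul_assoc,
        Complex.re_ofReal_mul]
    rw [e1, e2]
    have hk' := neg_abs_le (k : ℝ)
    have hk2 := hN k hk
    have : 0 ≤ π * (k + N) * ‖coef y k i‖ ^ 2 := by
      have := Real.pi_pos
      have : 0 ≤ (k : ℝ) + N := by linarith
      positivity
    nlinarith [this]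
  unfold Phi
  linarith

/-- One gradient ascent step. -/
def gstep (h : Ham s) (τ : ℝ) (x : GV J) : GV J := x + τ • grad h x

theorem Phi_gstep_ge (h : Ham s) {N : ℝ} (hN : ∀ k ∈ J, |(k : ℝ)| ≤ N) {τ : ℝ} (hτ : 0 ≤ τ)
    (hτN : (π * N + h.M) * τ ≤ 1 / 2) (x : GV J) :
    Phi h x + τ / 2 * nsqV (grad h x) ≤ Phi h (gstep h τ x) := by
  have h1 := Phi_add_ge h hN x (τ • grad h x)
  have h2 : (∑ k ∈ J, ∑ i, ((starRingEnd ℂ) (coef (grad h x) k i) *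
      coef (τ • grad h x) k i).re) = τ * nsqV (grad h x) := by
    simp only [nsqV, Finset.mul_sum]
    refine Finset.sum_congr rfl fun k _ => Finset.sum_congr rfl fun i _ => ?_
    rw [coef_smul, mul_left_comm, Complex.re_ofReal_mul, Complex.conj_mul']
    norm_cast
  rw [h2, nsqV_smul] at h1
  have h3 := nsqV_nonneg (grad h x)
  have : (π * N + h.M) * (τ ^ 2 * nsqV (grad h x)) ≤ τ / 2 * nsqV (grad h x) := by
    calc (π * N + h.M) * (τ ^ 2 * nsqV (grad h x)) =
        ((π * N + h.M) * τ) * (τ * nsqV (grad h x)) := by ring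
      _ ≤ (1 / 2) * (τ * nsqV (grad h x)) := by gcongr
      _ = _ := by ring
  unfold gstep
  linarith

theorem contDiff_ev (t : ℝ) : ContDiff ℝ 1 fun x : GV J => ev x t := by
  rw [contDiff_pi]
  intro i
  exact ContDiff.sum fun k _ => ((coefL k i).contDiff).mul contDiff_const

/-- Evaluation at time `t` as a continuous linear map. -/
def evL (t : ℝ) : GV J →L[ℝ] (Fin 2 → ℂ) :=
  ContinuousLinearMap.pi fun i => ∑ k ∈ J, ee k t • coefL k i

theorem evL_apply (t : ℝ) (x : GV J) : evL t x = ev x t := by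
  ext i
  simp [evL, ev, coefL, mul_comm]

theorem continuous_evL : Continuous fun t => evL (J := J) t := by
  rw [continuous_clm_apply]
  intro x
  simp_rw [evL_apply]
  exact continuous_ev x

theorem contDiff_grad (h : Ham s) : ContDiff ℝ 1 (grad (J := J) h) := by
  rw [contDiff_pi]
  intro k
  rw [contDiff_pi]
  intro i
  unfold grad
  refine ContDiff.sub (by fun_prop) ?_
  unfold fc
  refine contDiff_one_intervalIntegral (fun (x : GV J) t => ee (-(k : ℤ)) t * h.g (ev x t) i)
    (fun x t => ee (-(k : ℤ)) t • ((ContinuousLinearMap.proj (R := ℝ) (φ := fun _ : Fin 2 => ℂ) i).comp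
      ((fderiv ℝ h.g (ev x t)).comp (evL t)))) ?_ ?_ ?_
  · have h1 : Continuous fun p : GV J × ℝ => ev p.1 p.2 := by unfold ev; fun_prop
    have h2 := h.smooth.continuous
    simp only [Function.uncurry_def]
    fun_prop
  · have h1 : Continuous fun p : GV J × ℝ => ev p.1 p.2 := by unfold ev; fun_prop
    have h2 := (h.smooth.continuous_fderiv one_ne_zero).comp h1
    have h3 : Continuous fun p : GV J × ℝ => evL (J := J) p.2 := continuous_evL.comp continuous_snd
    simp only [Function.uncurry_def]
    exact Continuous.smul ((continuous_ee (-(k : ℤ))).comp continuous_snd)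
      (continuous_const.clm_comp (h2.clm_comp h3))
  · intro x t
    have h1 : HasFDerivAt (fun x : GV J => ev x t) (evL t) x := by
      have := (evL (J := J) t).hasFDerivAt (x := x)
      exact this.congr_of_eventuallyEq (Filter.Eventually.of_forall fun y => (evL_apply t y).symm)
    have h2 := ((h.smooth.differentiable one_ne_zero) (ev x t)).hasFDerivAt.comp x h1
    have h3 := (ContinuousLinearMap.proj (R := ℝ) (φ := fun _ : Fin 2 => ℂ) i).hasFDerivAt.comp x h2
    exact h3.const_mul (ee (-(k : ℤ)) t)

theorem contDiff_gstep (h : Ham s) (τ : ℝ) : ContDiff ℝ 1 (gstep (J := J) h τ) :=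
  contDiff_id.add ((contDiff_grad h).const_smul τ)

/-- Time shift of a loop. -/
def shift (θ : ℝ) (x : GV J) : GV J := fun k i => ee k θ * x k i

theorem coef_shift (θ : ℝ) (x : GV J) (k : ℤ) (i : Fin 2) :
    coef (shift θ x) k i = ee k θ * coef x k i := by
  unfold coef shift; split_ifs <;> simp

theorem ev_shift (θ : ℝ) (x : GV J) (t : ℝ) : ev (shift θ x) t = ev x (t + θ) := by
  ext i
  simp only [ev, coef_shift, ee_add]
  exact Finset.sum_congr rfl fun _ _ => by ring

theorem ev_periodic (x : GV J) : Function.Periodic (ev x) 1 := by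
  intro t
  ext i
  simp only [ev, ee_add, ee_one, mul_one]

theorem grad_shift (h : Ham s) (θ : ℝ) (x : GV J) : grad h (shift θ x) = shift θ (grad h x) := by
  ext k i
  simp only [grad, shift, mul_sub, fc]
  congr 1
  · ring
  · rw [← intervalIntegral.integral_const_mul]
    have hper : Function.Periodic (fun t => ee k θ * (ee (-k) t * h.g (ev x t) i)) 1 := by
      intro t
      simp only [ee_periodic (-(k : ℤ)) t, ev_periodic x t]
    have h1 := hper.intervalIntegral_add_eq θ 0
    rw [zero_add] at h1
    rw [← h1, add_comm θ 1]
    have h3 := intervalIntegral.integral_comp_add_right (a := 0) (b := 1)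
      (fun t => ee k θ * (ee (-k) t * h.g (ev x t) i)) θ
    rw [zero_add] at h3
    rw [← h3]
    refine intervalIntegral.integral_congr fun t _ => ?_
    have e1 : ee (k : ℤ) θ * ee (-(k : ℤ)) θ = 1 := by
      rw [← ee_add_left, add_neg_cancel, ee_zero_left]
    simp only [ev_shift, ee_add]
    linear_combination (-(ee (-(k : ℤ)) t * h.g (ev x (t + θ)) i)) * e1

end Galerkin

/-! ### Compactness of almost critical points -/

/-- A continuous `1`-periodic function is determined by its Fourier coefficients. -/
theorem eq_const_of_fc_eq_zero (f : ℝ → ℂ) (hf : Continuous f) (hp : Function.Periodic f 1)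
    (h0 : ∀ k : ℤ, k ≠ 0 → fc f k = 0) (t : ℝ) : f t = fc f 0 := by
  have : Fact ((0 : ℝ) < 1) := ⟨one_pos⟩
  set F : AddCircle (1 : ℝ) → ℂ := hp.lift with hF
  have hFc : Continuous F := continuous_quot_lift _ hf
  have hcoef : ∀ k, fourierCoeff F k = fc f k := by
    intro k
    rw [fourierCoeff_eq_intervalIntegral F k 0]
    simp only [zero_add, div_one, one_smul, fc]
    refine intervalIntegral.integral_congr fun t _ => ?_
    simp only [fourier_coe_apply, smul_eq_mul, hF, Function.Periodic.lift_coe, ee]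
    norm_num
  have hs : HasSum (fun k => fourierCoeff F k • fourier k (t : AddCircle (1 : ℝ))) (F t) := by
    refine has_pointwise_sum_fourier_series_of_summable (f := ⟨F, hFc⟩) ?_ (t : AddCircle (1 : ℝ))
    refine summable_of_ne_finset_zero (s := {0}) fun k hk => ?_
    rw [ContinuousMap.coe_mk, hcoef, h0 k (by simpa using hk)]
  have hs2 : HasSum (fun k => fourierCoeff F k • fourier k (t : AddCircle (1 : ℝ))) (fc f 0) := by
    have := hasSum_single (f := fun k => fourierCoeff F k • fourier k (t : AddCircle (1 : ℝ))) 0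
      (fun k hk => by simp [hcoef, h0 k hk])
    simpa [hcoef] using this
  have := hs.unique hs2
  simpa [hF] using this

section Compactness

variable {J : Finset ℤ} {s : Fin 2 → ℝ}

theorem fc_ev (x : GV J) (k : ℤ) (i : Fin 2) : fc (fun t => ev x t i) k = coef x k i := by
  unfold fc ev
  simp_rw [Finset.mul_sum]
  rw [intervalIntegral.integral_finsetSum (fun i _ =>
    Continuous.intervalIntegrable (by fun_prop) _ _)]
  have : ∀ l, ∫ t in (0 : ℝ)..1, ee (-k) t * (coef x l i * ee l t) =
      if l = k then coef x l i else 0 := by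
    intro l
    have e : ∀ t, ee (-k) t * (coef x l i * ee l t) = coef x l i * ee (l - k) t := by
      intro t; rw [sub_eq_add_neg, ee_add_left]; ring
    simp_rw [e]
    rw [intervalIntegral.integral_const_mul, integral_ee]
    simp [sub_eq_zero]
  simp_rw [this]
  rw [Finset.sum_ite_eq']
  split_ifs with hk
  · rfl
  · simp [coef, hk]

theorem fc_sub_mul (u v : ℝ → ℂ) (hu : Continuous u) (hv : Continuous v) (a : ℂ) (k : ℤ) :
    fc (fun t => u t - a * v t) k = fc u k - a * fc v k := by
  unfold fc
  rw [← intervalIntegral.integral_const_mul, ← intervalIntegral.integral_sub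
    (Continuous.intervalIntegrable (by fun_prop) _ _)
    (Continuous.intervalIntegrable (by fun_prop) _ _)]
  exact intervalIntegral.integral_congr fun t _ => by ring

/-- A frequency which is not an integer stays away from the integers, uniformly relative to `|k|`. -/
theorem exists_nonresonance (s : ℝ) (hs : ∀ k : ℤ, s ≠ k) :
    ∃ L : ℝ, 0 ≤ L ∧ ∀ k : ℤ, 1 + |(k : ℝ)| ≤ L * |k - s| := by
  have hδ : 0 < |s - round s| := abs_pos.2 (sub_ne_zero.2 (hs _))
  refine ⟨1 + (1 + |s|) / |s - round s|, by positivity, fun k => ?_⟩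
  have h1 : |s - round s| ≤ |k - s| := by rw [abs_sub_comm (k : ℝ)]; exact round_le s k
  have h2 : |(k : ℝ)| ≤ |k - s| + |s| := by
    have := abs_add_le ((k : ℝ) - s) s; simpa using this
  have h3 : (1 + |s|) ≤ (1 + |s|) / |s - round s| * |k - s| := by
    rw [div_mul_eq_mul_div, le_div_iff₀ hδ]; gcongr
  linarith

/-- Almost critical points are bounded in `H¹`, because the quadratic part at infinity has no
`1`-periodic orbits. -/
theorem h1_bound (h : Ham s) (hs : ∀ i, ∀ k : ℤ, s i ≠ k) : ∃ B : ℝ, 0 ≤ B ∧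
    ∀ (J : Finset ℤ) (x : GV J), nsqV (grad h x) ≤ 1 →
      ∑ k ∈ J, ∑ i, (1 + |(k : ℝ)|) ^ 2 * ‖coef x k i‖ ^ 2 ≤ B := by
  choose L hL0 hL using fun i => exists_nonresonance (s i) (hs i)
  refine ⟨∑ i, L i ^ 2 * (1 + h.C ^ 2), by positivity, fun J x hx => ?_⟩
  rw [Finset.sum_comm]
  refine Finset.sum_le_sum fun i _ => ?_
  set u : ℝ → ℂ := fun t => h.g (ev x t) i - (2 * π * s i) * ev x t i with hu
  have huc : Continuous u := by
    have := continuous_g_ev h x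
    fun_prop
  have hb : ∑ k ∈ J, ‖fc u k‖ ^ 2 ≤ h.C ^ 2 := by
    refine (bessel J u huc).trans ?_
    have : ∫ t in (0 : ℝ)..1, ‖u t‖ ^ 2 ≤ ∫ t in (0 : ℝ)..1, h.C ^ 2 := by
      refine intervalIntegral.integral_mono_on zero_le_one
        (Continuous.intervalIntegrable (by fun_prop) _ _) (by simp) fun t _ => ?_
      have := h.asym (ev x t) i
      gcongr
    simpa using this
  have hG : ∑ k ∈ J, ‖coef (grad h x) k i‖ ^ 2 ≤ 1 := by
    refine le_trans (Finset.sum_le_sum fun k _ => ?_) hx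
    exact Finset.single_le_sum (f := fun i => ‖coef (grad h x) k i‖ ^ 2) (fun _ _ => by positivity)
          (Finset.mem_univ i)
  have key : ∀ k ∈ J, (1 + |(k : ℝ)|) ^ 2 * ‖coef x k i‖ ^ 2 ≤
      L i ^ 2 * (‖coef (grad h x) k i‖ ^ 2 + ‖fc u k‖ ^ 2) := by
    intro k hk
    have e : coef (grad h x) k i + fc u k = ((2 * π * (k - s i) : ℝ) : ℂ) * coef x k i := by
      have hg1 : Continuous fun t => h.g (ev x t) i := by
        have := continuous_g_ev h x
        fun_prop
      rw [coef_grad h x hk, hu, fc_sub_mul _ _ hg1 (by fun_prop), fc_ev]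
      push_cast; ring
    have e2 : ‖coef (grad h x) k i + fc u k‖ = 2 * π * |k - s i| * ‖coef x k i‖ := by
      rw [e, norm_mul, Complex.norm_real, Real.norm_eq_abs, abs_mul, abs_of_pos Real.two_pi_pos]
    have e3 : (2 * π * |k - s i| * ‖coef x k i‖) ^ 2 ≤
        2 * (‖coef (grad h x) k i‖ ^ 2 + ‖fc u k‖ ^ 2) := by
      rw [← e2]
      have := norm_add_le (coef (grad h x) k i) (fc u k)
      calc _ ≤ (‖coef (grad h x) k i‖ + ‖fc u k‖) ^ 2 := by gcongr
        _ ≤ _ := by nlinarith [sq_nonneg (‖coef (grad h x) k i‖ - ‖fc u k‖)]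
    have e4 : |k - s i| ^ 2 * ‖coef x k i‖ ^ 2 ≤ ‖coef (grad h x) k i‖ ^ 2 + ‖fc u k‖ ^ 2 := by
      have := Real.pi_gt_three
      have h9 : 2 * 1 ≤ 2 * (π * π) := by nlinarith
      have : 0 ≤ |k - s i| ^ 2 * ‖coef x k i‖ ^ 2 := by positivity
      nlinarith
    calc (1 + |(k : ℝ)|) ^ 2 * ‖coef x k i‖ ^ 2 ≤ (L i * |k - s i|) ^ 2 * ‖coef x k i‖ ^ 2 := by
          have := hL i k
          gcongr
      _ = L i ^ 2 * (|k - s i| ^ 2 * ‖coef x k i‖ ^ 2) := by ring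
      _ ≤ _ := by gcongr
  refine (Finset.sum_le_sum key).trans ?_
  rw [← Finset.mul_sum, Finset.sum_add_distrib]
  gcongr

theorem hasDerivAt_ev (x : GV J) (t : ℝ) (i : Fin 2) :
    HasDerivAt (fun t => ev x t i) (∑ k ∈ J, (2 * π * Complex.I * k * coef x k i) * ee k t) t := by
  unfold ev
  refine (HasDerivAt.fun_sum fun k _ => (hasDerivAt_ee k t).const_mul (coef x k i)).congr_deriv ?_
  exact Finset.sum_congr rfl fun k _ => by ring

/-- Uniform modulus of continuity from an `H¹` bound. -/
theorem ev_equicont {B : ℝ} (x : GV J)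
    (hB : ∑ k ∈ J, ∑ i, (1 + |(k : ℝ)|) ^ 2 * ‖coef x k i‖ ^ 2 ≤ B) {η : ℝ} (hη : 0 < η) {a b : ℝ}
    (ha : 0 ≤ a) (hab : a ≤ b) (hb : b ≤ 1) (i : Fin 2) :
    ‖ev x b i - ev x a i‖ ≤ η * (4 * π ^ 2 * B) + (b - a) / η := by
  set v : ℝ → ℂ := fun t => ∑ k ∈ J, (2 * π * Complex.I * k * coef x k i) * ee k t with hv
  have hvc : Continuous v := by fun_prop
  have h1 : ∫ t in a..b, v t = ev x b i - ev x a i :=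
    intervalIntegral.integral_eq_sub_of_hasDerivAt (fun t _ => hasDerivAt_ev x t i)
      (hvc.intervalIntegrable _ _)
  have h2 : ∫ t in (0 : ℝ)..1, ‖v t‖ ^ 2 ≤ 4 * π ^ 2 * B := by
    rw [parseval_finset]
    calc _ ≤ ∑ k ∈ J, 4 * π ^ 2 * ∑ i, (1 + |(k : ℝ)|) ^ 2 * ‖coef x k i‖ ^ 2 := by
          refine Finset.sum_le_sum fun k _ => ?_
          have e : ‖2 * π * Complex.I * k * coef x k i‖ ^ 2 =
              4 * π ^ 2 * (|(k : ℝ)| ^ 2 * ‖coef x k i‖ ^ 2) := by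
            simp only [norm_mul, Complex.norm_I, Complex.norm_intCast, Complex.norm_ofNat,
              Complex.norm_real, Real.norm_eq_abs, abs_of_pos Real.pi_pos]
            ring
          rw [e]
          gcongr
          refine le_trans ?_ (Finset.single_le_sum
            (f := fun i => (1 + |(k : ℝ)|) ^ 2 * ‖coef x k i‖ ^ 2) (fun _ _ => by positivity)
            (Finset.mem_univ i))
          gcongr
          linarith
      _ ≤ _ := by rw [← Finset.mul_sum]; gcongr
  have h3 : ∫ t in a..b, ‖v t‖ ^ 2 ≤ ∫ t in (0 : ℝ)..1, ‖v t‖ ^ 2 :=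
    intervalIntegral.integral_mono_interval ha hab hb
      (Filter.Eventually.of_forall fun _ => by positivity)
      (Continuous.intervalIntegrable (by fun_prop) _ _)
  have h4 : ∫ t in a..b, ‖v t‖ ≤ ∫ t in a..b, (η * ‖v t‖ ^ 2 + 1 / η) := by
    refine intervalIntegral.integral_mono_on hab (Continuous.intervalIntegrable (by fun_prop) _ _)
      (Continuous.intervalIntegrable (by fun_prop) _ _) fun t _ => ?_
    have e : η * ‖v t‖ ^ 2 + 1 / η - ‖v t‖ = ((η * ‖v t‖ - 1) ^ 2 + η * ‖v t‖) / η := by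
      field_simp; ring
    have : 0 ≤ ((η * ‖v t‖ - 1) ^ 2 + η * ‖v t‖) / η := by positivity
    linarith
  rw [intervalIntegral.integral_add (Continuous.intervalIntegrable (by fun_prop) _ _) (by simp),
    intervalIntegral.integral_const_mul, intervalIntegral.integral_const] at h4
  rw [← h1]
  refine (intervalIntegral.norm_integral_le_integral_norm hab).trans (h4.trans ?_)
  rw [smul_eq_mul, mul_one_div]
  gcongr
  exact h3.trans h2

theorem norm_ev_le {B : ℝ} (x : GV J)
    (hB : ∑ k ∈ J, ∑ i, (1 + |(k : ℝ)|) ^ 2 * ‖coef x k i‖ ^ 2 ≤ B) {t : ℝ} (ht : t ∈ Icc (0 : ℝ) 1)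
    (i : Fin 2) : ‖ev x t i‖ ≤ 4 * π ^ 2 * B + 1 + (B + 1) := by
  have h0 : coef x 0 i = ∫ t in (0 : ℝ)..1, ev x t i := by
    rw [← fc_ev]; simp [fc]
  have h1 : ‖coef x 0 i‖ ≤ B + 1 := by
    have h2 : nsqV x ≤ B := by
      refine le_trans (Finset.sum_le_sum fun k _ => Finset.sum_le_sum fun i _ => ?_) hB
      refine le_mul_of_one_le_left (by positivity) (one_le_pow₀ ?_)
      linarith [abs_nonneg (k : ℝ)]
    have h3 := coef_sq_le_nsqV x 0 i
    nlinarith [sq_nonneg (‖coef x 0 i‖ - 1), norm_nonneg (coef x 0 i)]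
  have h2 : ev x t i - coef x 0 i = ∫ r in (0 : ℝ)..1, (ev x t i - ev x r i) := by
    rw [intervalIntegral.integral_sub (by simp) (Continuous.intervalIntegrable (by fun_prop) _ _),
      ← h0]
    simp
  have h3 : ‖ev x t i - coef x 0 i‖ ≤ 4 * π ^ 2 * B + 1 := by
    rw [h2]
    have := intervalIntegral.norm_integral_le_of_norm_le_const (a := 0) (b := 1)
      (f := fun r => ev x t i - ev x r i) (C := 4 * π ^ 2 * B + 1) fun r hr => ?_
    · simpa using this
    · rw [uIoc_of_le zero_le_one] at hr
      rcases le_total r t with h | h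
      · have := ev_equicont x hB one_pos hr.1.le h ht.2 i
        have := ht.2; have := hr.1
        linarith
      · have := ev_equicont x hB one_pos ht.1 h hr.2 i
        rw [norm_sub_rev]
        have := ht.1; have := hr.2
        linarith
  have := norm_add_le (ev x t i - coef x 0 i) (coef x 0 i)
  rw [sub_add_cancel] at this
  linarith

end Compactness

/-! ### Limits of almost critical points -/

section Compactness

variable {s : Fin 2 → ℝ}

/-- A `1`-periodic orbit of the Hamiltonian vector field `i • g`. -/
def IsSol (h : Ham s) (u : ℝ → Fin 2 → ℂ) : Prop :=
  (∀ t, HasDerivAt u (fun i => Complex.I * h.g (u t) i) t) ∧ Function.Periodic u 1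

theorem IsSol.continuous {h : Ham s} {u : ℝ → Fin 2 → ℂ} (hu : IsSol h u) : Continuous u :=
  continuous_iff_continuousAt.2 fun t => (hu.1 t).continuousAt

/-- The Hamiltonian action of a loop which solves Hamilton's equations. -/
def actionSol (h : Ham s) (u : ℝ → Fin 2 → ℂ) : ℝ :=
  (∫ t in (0 : ℝ)..1, ip (h.g (u t)) (u t)) / 2 - ∫ t in (0 : ℝ)..1, h.H (u t)

/-- The frequency window `[-N, N]`. -/
abbrev win (N : ℕ) : Finset ℤ := Finset.Icc (-(N : ℤ)) N

/-- Uniform limits of subsequences of loops with an `H¹` bound. -/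
theorem exists_uniform_limit {B : ℝ} {J : ℕ → Finset ℤ} (x : ∀ j, GV (J j))
    (hB : ∀ j, ∑ k ∈ J j, ∑ i, (1 + |(k : ℝ)|) ^ 2 * ‖coef (x j) k i‖ ^ 2 ≤ B) :
    ∃ (u : ℝ → Fin 2 → ℂ) (σ : ℕ → ℕ), StrictMono σ ∧ Continuous u ∧ Function.Periodic u 1 ∧
      TendstoUniformly (fun j => ev (x (σ j))) u Filter.atTop := by
  have hB0 : 0 ≤ B := le_trans (Finset.sum_nonneg fun _ _ => Finset.sum_nonneg fun _ _ => by
    positivity) (hB 0)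
  let f : ℕ → BoundedContinuousFunction (Icc (0 : ℝ) 1) (Fin 2 → ℂ) := fun j =>
    BoundedContinuousFunction.mkOfCompact ⟨fun t => ev (x j) t, by fun_prop⟩
  have hcomp : IsCompact (closure (range f)) := by
    refine BoundedContinuousFunction.arzela_ascoli
      (Metric.closedBall 0 (4 * π ^ 2 * B + 1 + (B + 1))) (isCompact_closedBall _ _) _ ?_ ?_
    · rintro _ t ⟨j, rfl⟩
      rw [mem_closedBall_zero_iff, pi_norm_le_iff_of_nonneg (by positivity)]
      exact fun i => norm_ev_le (x j) (hB j) t.2 i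
    · intro t
      rw [Metric.equicontinuousAt_iff]
      intro ε hε
      set D := 4 * π ^ 2 * B + 1 with hD
      have hD0 : 0 < D := by positivity
      set η := ε / (4 * D) with hη
      have hη0 : 0 < η := by positivity
      refine ⟨η * (ε / 4), by positivity, ?_⟩
      rintro r hr ⟨_, j, rfl⟩
      rw [Subtype.dist_eq, Real.dist_eq] at hr
      have key : ∀ a b : ℝ, 0 ≤ a → a ≤ b → b ≤ 1 → |b - a| < η * (ε / 4) → ∀ i,
          ‖ev (x j) b i - ev (x j) a i‖ < ε := by
        intro a b ha hab hb h i
        have h1 := ev_equicont (x j) (hB j) hη0 ha hab hb i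
        have h2 : η * (4 * π ^ 2 * B) ≤ ε / 4 := by
          calc η * (4 * π ^ 2 * B) ≤ η * D := by gcongr; linarith
            _ = ε / 4 := by rw [hη]; field_simp
        have h3 : (b - a) / η ≤ ε / 4 := by
          rw [div_le_iff₀ hη0]
          have := le_abs_self (b - a)
          linarith
        linarith
      rw [dist_pi_lt_iff hε]
      intro i
      rw [dist_eq_norm]
      change ‖ev (x j) t i - ev (x j) r i‖ < ε
      rcases le_total (r : ℝ) t with h | h
      · exact key r t r.2.1 h t.2.2 (by rwa [abs_sub_comm]) i
      · rw [norm_sub_rev]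
        exact key t r t.2.1 h r.2.2 hr i
  obtain ⟨F, -, σ, hσ, hF⟩ := hcomp.tendsto_subseq (x := f) fun j => subset_closure (mem_range_self j)
  have hfr : ∀ t : ℝ, Int.fract t ∈ Icc (0 : ℝ) 1 := fun t =>
    ⟨Int.fract_nonneg t, (Int.fract_lt_one t).le⟩
  have hun : TendstoUniformly (fun j => ev (x (σ j))) (fun t => F ⟨Int.fract t, hfr t⟩)
      Filter.atTop := by
    rw [Metric.tendstoUniformly_iff]
    intro ε hε
    rw [Metric.tendsto_atTop] at hF
    obtain ⟨j0, hj0⟩ := hF ε hε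
    filter_upwards [Filter.eventually_ge_atTop j0] with j hj t
    have h1 := (BoundedContinuousFunction.dist_coe_le_dist (f := f (σ j)) (g := F)
      ⟨Int.fract t, hfr t⟩).trans_lt (hj0 j hj)
    have h2 : ev (x (σ j)) t = f (σ j) ⟨Int.fract t, hfr t⟩ := by
      change _ = ev (x (σ j)) (Int.fract t)
      have := (ev_periodic (x (σ j))).sub_int_mul_eq (x := t) ⌊t⌋
      rw [mul_one] at this
      exact this.symm
    rw [h2, dist_comm]
    exact h1
  refine ⟨_, σ, hσ, ?_, ?_, hun⟩
  · exact hun.continuous (Filter.Eventually.frequently (Filter.Eventually.of_forall fun j =>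
      continuous_ev _))
  · intro t
    have : Int.fract (t + 1) = Int.fract t := by simp
    simp only [this]

theorem tendsto_integral_of_pointwise {E : Type*} [NormedAddCommGroup E] [NormedSpace ℝ E]
    {f : ℕ → ℝ → E} {F : ℝ → E} (hf : ∀ j, Continuous (f j)) (C : ℝ) (hC : ∀ j t, ‖f j t‖ ≤ C)
    (hl : ∀ t, Filter.Tendsto (fun j => f j t) Filter.atTop (nhds (F t))) :
    Filter.Tendsto (fun j => ∫ t in (0 : ℝ)..1, f j t) Filter.atTop
      (nhds (∫ t in (0 : ℝ)..1, F t)) :=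
  intervalIntegral.tendsto_integral_filter_of_dominated_convergence (fun _ => C)
    (Filter.Eventually.of_forall fun j => (hf j).aestronglyMeasurable)
    (Filter.Eventually.of_forall fun j => Filter.Eventually.of_forall fun t _ => hC j t)
    intervalIntegrable_const (Filter.Eventually.of_forall fun t _ => hl t)

theorem tendsto_fc {f : ℕ → ℝ → ℂ} {F : ℝ → ℂ} (hf : ∀ j, Continuous (f j)) (C : ℝ)
    (hC : ∀ j t, ‖f j t‖ ≤ C)
    (hl : ∀ t, Filter.Tendsto (fun j => f j t) Filter.atTop (nhds (F t))) (k : ℤ) :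
    Filter.Tendsto (fun j => fc (f j) k) Filter.atTop (nhds (fc F k)) := by
  unfold fc
  refine tendsto_integral_of_pointwise (fun j => by have := hf j; fun_prop) C (fun j t => ?_)
    (fun t => (hl t).const_mul _)
  rw [norm_mul, norm_ee, one_mul]
  exact hC j t

theorem Phi_eq (h : Ham s) {J : Finset ℤ} (x : GV J) :
    Phi h x = (∑ k ∈ J, ∑ i, ((starRingEnd ℂ) (coef (grad h x) k i) * coef x k i).re) / 2 +
      (∫ t in (0 : ℝ)..1, ip (h.g (ev x t)) (ev x t)) / 2 - ∫ t in (0 : ℝ)..1, h.H (ev x t) := by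
  rw [integral_ip_ev _ (continuous_g_ev h x), ← add_div, ← Finset.sum_add_distrib, Phi]
  congr 1
  rw [act, Finset.sum_div]
  refine Finset.sum_congr rfl fun k hk => ?_
  rw [← Finset.sum_add_distrib, Finset.sum_div]
  refine Finset.sum_congr rfl fun i _ => ?_
  rw [coef_grad h x hk, ← Complex.add_re, ← add_mul, ← map_add, sub_add_cancel]
  have e : (starRingEnd ℂ) (2 * π * k * coef x k i) * coef x k i =
      ((2 * π * k * ‖coef x k i‖ ^ 2 : ℝ) : ℂ) := by
    simp only [map_mul, Complex.conj_ofReal, Complex.conj_ofNat, map_intCast]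
    rw [mul_assoc, Complex.conj_mul']
    push_cast; ring
  rw [e, Complex.ofReal_re]; ring

/-- A continuous periodic `u` whose Fourier coefficients satisfy `2πk û(k) = ĝ(u)(k)` solves
Hamilton's equations. -/
theorem isSol_of_fc (h : Ham s) (u : ℝ → Fin 2 → ℂ) (hu : Continuous u)
    (hp : Function.Periodic u 1)
    (hk : ∀ k : ℤ, ∀ i, 2 * π * k * fc (fun t => u t i) k = fc (fun t => h.g (u t) i) k) :
    IsSol h u := by
  have hg : Continuous fun t => h.g (u t) := h.smooth.continuous.comp hu
  refine ⟨fun t => ?_, hp⟩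
  rw [hasDerivAt_pi]
  intro i
  set w : ℝ → ℂ := fun t => h.g (u t) i with hw
  have hwc : Continuous w := by fun_prop
  have hwp : Function.Periodic w 1 := fun t => by simp only [hw, hp t]
  set W : ℝ → ℂ := fun t => ∫ r in (0 : ℝ)..t, w r with hW
  have hWd : ∀ t, HasDerivAt W (w t) t := fun t => intervalIntegral.integral_hasDerivAt_right
    (hwc.intervalIntegrable _ _) hwc.aestronglyMeasurable.stronglyMeasurableAtFilter
    hwc.continuousAt
  have hWc : Continuous W := continuous_iff_continuousAt.2 fun t => (hWd t).continuousAt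
  have hW1 : W 1 = 0 := by
    have := hk 0 i
    simpa [fc, hW, hw] using this.symm
  have hWp : Function.Periodic W 1 := by
    intro t
    have h1 : W (t + 1) = W t + ∫ r in t..(t + 1), w r :=
      (intervalIntegral.integral_add_adjacent_intervals (hwc.intervalIntegrable _ _)
        (hwc.intervalIntegrable _ _)).symm
    rw [h1, hwp.intervalIntegral_add_eq t 0, zero_add]
    change W t + W 1 = W t
    rw [hW1, add_zero]
  have hF := eq_const_of_fc_eq_zero (fun t => u t i - Complex.I * W t) (by fun_prop)
    (fun t => by simp only [hp t, hWp t]) fun k hk0 => by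
      rw [fc_sub_mul _ _ (by fun_prop) hWc]
      have hc : (2 * π * k : ℂ) ≠ 0 := by simp [hk0, Real.pi_ne_zero]
      have hbp : fc w k = 2 * π * Complex.I * k * fc W k := by
        have h1 := intervalIntegral.integral_mul_deriv_eq_deriv_mul (a := 0) (b := 1)
          (u := ee (-k)) (v := W) (fun t _ => hasDerivAt_ee (-k) t) (fun t _ => hWd t)
          (Continuous.intervalIntegrable (by fun_prop) _ _) (hwc.intervalIntegrable _ _)
        have hW0 : W 0 = 0 := by simp [hW]
        rw [hW1, hW0, mul_zero, mul_zero, sub_zero, zero_sub] at h1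
        rw [fc, h1, fc, ← intervalIntegral.integral_const_mul, ← intervalIntegral.integral_neg]
        refine intervalIntegral.integral_congr fun t _ => ?_
        push_cast; ring
      have h2 := hk k i
      change _ = fc w k at h2
      rw [hbp] at h2
      apply mul_left_cancel₀ hc
      linear_combination h2
  have hdu : HasDerivAt (fun t => Complex.I * W t +
      fc (fun t => u t i - Complex.I * W t) 0) (Complex.I * w t) t :=
    ((hWd t).const_mul _).add_const _
  refine hdu.congr_of_eventuallyEq (Filter.Eventually.of_forall fun r => ?_)
  have := hF r
  simp only at this ⊢
  rw [← this]; ring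

/-- Palais–Smale compactness along the Galerkin approximations. -/
theorem palais_smale (h : Ham s) (hs : ∀ i, ∀ k : ℤ, s i ≠ k) (N : ℕ → ℕ)
    (hN : Filter.Tendsto N Filter.atTop Filter.atTop) (x : ∀ j, GV (win (N j)))
    (hg1 : ∀ j, nsqV (grad h (x j)) ≤ 1)
    (hg : Filter.Tendsto (fun j => nsqV (grad h (x j))) Filter.atTop (nhds 0)) {c d : ℝ}
    (hΦ : ∀ j, Phi h (x j) ∈ Icc c d) :
    ∃ (u : ℝ → Fin 2 → ℂ) (σ : ℕ → ℕ), IsSol h u ∧ actionSol h u ∈ Icc c d ∧ StrictMono σ ∧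
      ∀ k i, Filter.Tendsto (fun j => coef (x (σ j)) k i) Filter.atTop
        (nhds (fc (fun t => u t i) k)) := by
  obtain ⟨B, hB0, hB⟩ := h1_bound h hs
  obtain ⟨u, σ, hσ, huc, hup, hun⟩ := exists_uniform_limit x fun j => hB _ (x j) (hg1 j)
  have hpt : ∀ t, Filter.Tendsto (fun j => ev (x (σ j)) t) Filter.atTop (nhds (u t)) :=
    fun t => hun.tendsto_at t
  set R := 4 * π ^ 2 * B + 1 + (B + 1) with hR
  have hbd : ∀ j t, ev (x j) t ∈ Metric.closedBall (0 : Fin 2 → ℂ) R := by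
    intro j t
    rw [mem_closedBall_zero_iff, pi_norm_le_iff_of_nonneg (by positivity)]
    intro i
    have h2 : ev (x j) t = ev (x j) (Int.fract t) := by
      have := (ev_periodic (x j)).sub_int_mul_eq (x := t) ⌊t⌋
      rw [mul_one] at this
      exact this.symm
    rw [h2]
    exact norm_ev_le (x j) (hB _ _ (hg1 j)) ⟨Int.fract_nonneg t, (Int.fract_lt_one t).le⟩ i
  have hgcont := h.smooth.continuous
  -- composition with a continuous function passes to the limit under integrals
  have hlim : ∀ (E : Type) [NormedAddCommGroup E] (G : (Fin 2 → ℂ) → E), Continuous G →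
      ∃ C, ∀ j t, ‖G (ev (x (σ j)) t)‖ ≤ C := by
    intro E _ G hG
    obtain ⟨C, hC⟩ := (isCompact_closedBall (0 : Fin 2 → ℂ) R).exists_bound_of_continuousOn
      hG.continuousOn
    exact ⟨C, fun j t => hC _ (hbd _ t)⟩
  have hcoef : ∀ k i, Filter.Tendsto (fun j => coef (x (σ j)) k i) Filter.atTop
        (nhds (fc (fun t => u t i) k)) := by
    intro k i
    obtain ⟨C, hC⟩ := hlim ℂ (fun z => z i) (by fun_prop)
    have := tendsto_fc (f := fun j t => ev (x (σ j)) t i) (F := fun t => u t i)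
      (fun j => by fun_prop) C hC (fun t => (tendsto_pi_nhds.1 (hpt t)) i) k
    simpa only [fc_ev] using this
  have hgσ := hg.comp hσ.tendsto_atTop
  have hsol : IsSol h u := by
    refine isSol_of_fc h u huc hup fun k i => ?_
    obtain ⟨C, hC⟩ := hlim ℂ (fun z => h.g z i) (by fun_prop)
    have h1 := tendsto_fc (f := fun j t => h.g (ev (x (σ j)) t) i) (F := fun t => h.g (u t) i)
      (fun j => by fun_prop) C hC
      (fun t => ((by fun_prop : Continuous fun z => h.g z i).tendsto _).comp (hpt t)) k
    have h2 : Filter.Tendsto (fun j => coef (grad h (x (σ j))) k i) Filter.atTop (nhds 0) := by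
      rw [tendsto_zero_iff_norm_tendsto_zero]
      have h3 : Filter.Tendsto (fun j => √(nsqV (grad h (x (σ j))))) Filter.atTop (nhds 0) := by
        simpa using hgσ.sqrt
      exact squeeze_zero (fun _ => norm_nonneg _) (fun j => Real.le_sqrt_of_sq_le
        (coef_sq_le_nsqV _ k i)) h3
    have h4 := h2.add h1
    rw [zero_add] at h4
    refine tendsto_nhds_unique ?_ h4
    refine ((hcoef k i).const_mul (2 * π * k : ℂ)).congr' ?_
    filter_upwards [(hN.comp hσ.tendsto_atTop).eventually_ge_atTop k.natAbs] with j hj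
    have hk : k ∈ win (N (σ j)) := by
      rw [Finset.mem_Icc]
      simp only [Function.comp] at hj
      omega
    rw [coef_grad h _ hk]; ring
  refine ⟨u, σ, hsol, ?_, hσ, hcoef⟩
  have hΦl : Filter.Tendsto (fun j => Phi h (x (σ j))) Filter.atTop (nhds (actionSol h u)) := by
    simp_rw [Phi_eq]
    have h1 : Filter.Tendsto (fun j => ∑ k ∈ win (N (σ j)), ∑ i,
        ((starRingEnd ℂ) (coef (grad h (x (σ j))) k i) * coef (x (σ j)) k i).re)
        Filter.atTop (nhds 0) := by
      rw [tendsto_zero_iff_abs_tendsto_zero]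
      have h3 : Filter.Tendsto (fun j => √(nsqV (grad h (x (σ j))) * B)) Filter.atTop
          (nhds 0) := by
        simpa using (hgσ.mul_const B).sqrt
      refine squeeze_zero (fun _ => abs_nonneg _) (fun j => ?_) h3
      refine Real.le_sqrt_of_sq_le ?_
      rw [Function.comp, sq_abs]
      set y := grad h (x (σ j))
      have hxB : nsqV (x (σ j)) ≤ B := by
        refine le_trans (Finset.sum_le_sum fun k _ => Finset.sum_le_sum fun i _ => ?_)
          (hB _ _ (hg1 (σ j)))
        refine le_mul_of_one_le_left (by positivity) (one_le_pow₀ ?_)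
        linarith [abs_nonneg (k : ℝ)]
      have hcs := Finset.sum_mul_sq_le_sq_mul_sq (win (N (σ j)) ×ˢ Finset.univ)
        (fun p : ℤ × Fin 2 => ‖coef y p.1 p.2‖) (fun p => ‖coef (x (σ j)) p.1 p.2‖)
      rw [Finset.sum_product, Finset.sum_product, Finset.sum_product] at hcs
      have hle : |∑ k ∈ win (N (σ j)), ∑ i, ((starRingEnd ℂ) (coef y k i) * coef (x (σ j)) k i).re| ≤
          ∑ k ∈ win (N (σ j)), ∑ i, ‖coef y k i‖ * ‖coef (x (σ j)) k i‖ := by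
        refine (Finset.abs_sum_le_sum_abs _ _).trans (Finset.sum_le_sum fun k _ => ?_)
        refine (Finset.abs_sum_le_sum_abs _ _).trans (Finset.sum_le_sum fun i _ => ?_)
        refine (Complex.abs_re_le_norm _).trans ?_
        rw [norm_mul, RCLike.norm_conj]
      calc _ = |∑ k ∈ win (N (σ j)), ∑ i,
            ((starRingEnd ℂ) (coef y k i) * coef (x (σ j)) k i).re| ^ 2 := (sq_abs _).symm
        _ ≤ (∑ k ∈ win (N (σ j)), ∑ i, ‖coef y k i‖ * ‖coef (x (σ j)) k i‖) ^ 2 := by gcongr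
        _ ≤ _ := hcs
        _ ≤ _ := mul_le_mul_of_nonneg_left hxB (nsqV_nonneg y)
    obtain ⟨C1, hC1⟩ := hlim ℝ (fun z => ip (h.g z) z) (by fun_prop)
    have h2 := tendsto_integral_of_pointwise (f := fun j t => ip (h.g (ev (x (σ j)) t)) (ev (x (σ j)) t))
      (F := fun t => ip (h.g (u t)) (u t)) (fun j => by fun_prop) C1 hC1
      (fun t => ((by fun_prop : Continuous fun z => ip (h.g z) z).tendsto _).comp (hpt t))
    obtain ⟨C2, hC2⟩ := hlim ℝ h.H h.cont
    have h3 := tendsto_integral_of_pointwise (f := fun j t => h.H (ev (x (σ j)) t))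
      (F := fun t => h.H (u t)) (fun j => continuous_H_ev h _) C2 hC2
      (fun t => (h.cont.tendsto _).comp (hpt t))
    have := ((h1.div_const 2).add (h2.div_const 2)).sub h3
    simpa [actionSol] using this
  exact ⟨ge_of_tendsto' hΦl fun j => (hΦ _).1, le_of_tendsto' hΦl fun j => (hΦ _).2⟩

end Compactness

/-! ### Equivariant gradient deformations -/

section Deformation

variable {J : Finset ℤ} {s : Fin 2 → ℝ}

/-- `C¹` self maps commuting with time shifts. -/
def Equi (F : GV J → GV J) : Prop :=
  ContDiff ℝ 1 F ∧ ∀ θ x, F (shift θ x) = shift θ (F x)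

theorem Equi.comp {F G : GV J → GV J} (hF : Equi F) (hG : Equi G) : Equi (F ∘ G) :=
  ⟨hF.1.comp hG.1, fun θ x => by simp only [Function.comp, hG.2, hF.2]⟩

theorem Equi.iterate {F : GV J → GV J} (hF : Equi F) (n : ℕ) : Equi F^[n] := by
  induction n with
  | zero => exact ⟨contDiff_id, fun _ _ => rfl⟩
  | succ n ih => rw [Function.iterate_succ]; exact ih.comp hF

theorem equi_gstep (h : Ham s) (τ : ℝ) : Equi (gstep (J := J) h τ) := by
  refine ⟨contDiff_gstep h τ, fun θ x => ?_⟩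
  unfold gstep
  rw [grad_shift]
  ext k i
  simp only [shift, Pi.add_apply, Pi.smul_apply, Complex.real_smul]
  ring

/-- Absence of orbits with a property `Q` and action in `[c, d]` gives a lower bound for the gradient
that is uniform over all large frequency windows. -/
theorem grad_gap (h : Ham s) (hs : ∀ i, ∀ k : ℤ, s i ≠ k) {c d : ℝ} (Q : ∀ N, GV (win N) → Prop)
    (hQ : ∀ (N : ℕ → ℕ) (x : ∀ j, GV (win (N j))) (u : ℝ → Fin 2 → ℂ), (∀ j, Q (N j) (x j)) →
      IsSol h u → actionSol h u ∈ Icc c d → (∀ k i, Filter.Tendsto (fun j => coef (x j) k i)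
        Filter.atTop (nhds (fc (fun t => u t i) k))) → False) :
    ∃ N0 : ℕ, ∃ δ > 0, ∀ N ≥ N0, ∀ x : GV (win N), Phi h x ∈ Icc c d → Q N x →
      δ ≤ nsqV (grad h x) := by
  by_contra! hcon
  choose N hN x hΦ hQx hx using fun j : ℕ => hcon j (1 / (j + 1 : ℝ)) (by positivity)
  have hNt : Filter.Tendsto N Filter.atTop Filter.atTop :=
    Filter.tendsto_atTop_mono hN Filter.tendsto_id
  obtain ⟨u, σ, hu, hact, -, hcoef⟩ := palais_smale h hs N hNt x
    (fun j => (hx j).le.trans (by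
      rw [div_le_one (by positivity)]; linarith [(Nat.cast_nonneg j : (0 : ℝ) ≤ j)]))
    (squeeze_zero (fun _ => nsqV_nonneg _) (fun j => (hx j).le) tendsto_one_div_add_atTop_nhds_zero_nat)
    hΦ
  exact hQ _ (fun j => x (σ j)) u (fun j => hQx _) hu hact hcoef

/-- A step size which is admissible for the frequency window `win N`. -/
theorem exists_step (h : Ham s) (N : ℕ) : ∃ τ : ℝ, 0 < τ ∧ ∀ x : GV (win N),
    Phi h x + τ / 2 * nsqV (grad h x) ≤ Phi h (gstep h τ x) := by
  have hpos : 0 < π * N + h.M + 1 := by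
    have := h.M_nonneg; positivity
  refine ⟨1 / (2 * (π * N + h.M + 1)), by positivity, fun x => ?_⟩
  refine Phi_gstep_ge h (N := N) (fun k hk => ?_) (by positivity) ?_ x
  · rw [Finset.mem_Icc] at hk
    rw [abs_le]
    exact ⟨by exact_mod_cast hk.1, by exact_mod_cast hk.2⟩
  · rw [mul_one_div, div_le_div_iff₀ (by positivity) (by positivity)]
    linarith

/-- If no orbit has action in `[c, d]`, the superlevel set at `c` deforms into that at `d`. -/
theorem climb (h : Ham s) (hs : ∀ i, ∀ k : ℤ, s i ≠ k) {c d : ℝ}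
    (hno : ∀ u, IsSol h u → actionSol h u ∉ Icc c d) : ∃ N0 : ℕ, ∀ N ≥ N0,
    ∃ F : GV (win N) → GV (win N), Equi F ∧ ∀ x, c ≤ Phi h x → d ≤ Phi h (F x) := by
  obtain ⟨N0, δ, hδ, hgap⟩ := grad_gap h hs (c := c) (d := d) (fun _ _ => True)
    fun _ _ u _ hu ha _ => hno u hu ha
  refine ⟨N0, fun N hN => ?_⟩
  obtain ⟨τ, hτ, hstep⟩ := exists_step h N
  obtain ⟨T, hT⟩ := exists_nat_ge ((d - c) / (τ / 2 * δ))
  rw [div_le_iff₀ (by positivity)] at hT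
  refine ⟨(gstep h τ)^[T], (equi_gstep h τ).iterate T, fun x hx => ?_⟩
  have key : ∀ n : ℕ, d ≤ Phi h ((gstep h τ)^[n] x) ∨ c + n * (τ / 2 * δ) ≤ Phi h ((gstep h τ)^[n] x) := by
    intro n
    induction n with
    | zero => right; simpa using hx
    | succ n ih =>
      rw [Function.iterate_succ_apply']
      set y := (gstep h τ)^[n] x
      have h1 := hstep y
      have h2 : 0 ≤ τ / 2 * nsqV (grad h y) := mul_nonneg (by positivity) (nsqV_nonneg _)
      by_cases hd : d ≤ Phi h y
      · left; linarith
      · right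
        have ih := ih.resolve_left hd
        have h3 : 0 ≤ n * (τ / 2 * δ) := by positivity
        have h4 := hgap N hN y ⟨by linarith, by linarith⟩ trivial
        have h5 : τ / 2 * δ ≤ τ / 2 * nsqV (grad h y) := by gcongr
        push_cast
        linarith
  rcases key T with h1 | h1
  · exact h1
  · linarith

/-- Crossing a critical level `v`: if each orbit near the level has a nonzero Fourier coefficient
in a fixed slot, the deformation works on the set where this coefficient vanishes. -/
theorem cross (h : Ham s) (hs : ∀ i, ∀ k : ℤ, s i ≠ k) {c d v κ : ℝ} (hcv : c < v) (hvd : v < d)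
    (hκ : 0 < κ) (k0 : ℤ) (i0 : Fin 2)
    (hsol : ∀ u, IsSol h u → actionSol h u ∈ Icc c d → κ < ‖fc (fun t => u t i0) k0‖) :
    ∃ ε > 0, c < v - ε ∧ v + ε < d ∧ ∃ N0 : ℕ, ∀ N ≥ N0,
    ∃ F : GV (win N) → GV (win N), Equi F ∧ ∀ x, v - ε ≤ Phi h x → coef x k0 i0 = 0 →
      v + ε ≤ Phi h (F x) := by
  obtain ⟨N0, δ, hδ, hgap⟩ := grad_gap h hs (c := c) (d := d) (fun _ x => ‖coef x k0 i0‖ ≤ κ)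
    fun _ x u hQ hu ha hl =>
      absurd (le_of_tendsto' (hl k0 i0).norm hQ) (not_le.2 (hsol u hu ha))
  have hsδ : 0 < √δ := Real.sqrt_pos.2 hδ
  obtain ⟨ε, hε, hε1, hε2, hε3⟩ : ∃ ε > 0, c < v - ε ∧ v + ε < d ∧ 2 / √δ * (2 * ε) ≤ κ := by
    refine ⟨min (min ((v - c) / 2) ((d - v) / 2)) (κ * √δ / 4), ?_, ?_, ?_, ?_⟩
    · refine lt_min (lt_min ?_ ?_) ?_
      · linarith
      · linarith
      · positivity
    · have := (min_le_left (min ((v - c) / 2) ((d - v) / 2)) (κ * √δ / 4)).trans (min_le_left _ _)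
      linarith
    · have := (min_le_left (min ((v - c) / 2) ((d - v) / 2)) (κ * √δ / 4)).trans (min_le_right _ _)
      linarith
    · have := min_le_right (min ((v - c) / 2) ((d - v) / 2)) (κ * √δ / 4)
      calc _ ≤ 2 / √δ * (2 * (κ * √δ / 4)) := by gcongr
        _ = κ := by field_simp; ring
  refine ⟨ε, hε, hε1, hε2, N0, fun N hN => ?_⟩
  obtain ⟨τ, hτ, hstep⟩ := exists_step h N
  obtain ⟨T, hT⟩ := exists_nat_ge (2 * ε / (τ / 2 * δ))
  rw [div_le_iff₀ (by positivity)] at hT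
  refine ⟨(gstep h τ)^[T], (equi_gstep h τ).iterate T, fun x hx hx0 => ?_⟩
  have key : ∀ n : ℕ, v + ε ≤ Phi h ((gstep h τ)^[n] x) ∨
      (v - ε + n * (τ / 2 * δ) ≤ Phi h ((gstep h τ)^[n] x) ∧
        ‖coef ((gstep h τ)^[n] x) k0 i0‖ ≤ 2 / √δ * (Phi h ((gstep h τ)^[n] x) - (v - ε))) := by
    intro n
    induction n with
    | zero =>
      right
      refine ⟨by simpa using hx, ?_⟩
      rw [Function.iterate_zero, id, hx0, norm_zero]
      exact mul_nonneg (by positivity) (by linarith)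
    | succ n ih =>
      rw [Function.iterate_succ_apply']
      set y := (gstep h τ)^[n] x
      have h1 := hstep y
      have h2 : 0 ≤ τ / 2 * nsqV (grad h y) := mul_nonneg (by positivity) (nsqV_nonneg _)
      by_cases hd : v + ε ≤ Phi h y
      · left; linarith
      · right
        obtain ⟨ih1, ih2⟩ := ih.resolve_left hd
        have h3 : 0 ≤ n * (τ / 2 * δ) := by positivity
        have h6 : ‖coef y k0 i0‖ ≤ κ := by
          refine ih2.trans (le_trans ?_ hε3)
          gcongr
          linarith
        have h4 := hgap N hN y ⟨by linarith, by linarith⟩ h6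
        have h5 : τ / 2 * δ ≤ τ / 2 * nsqV (grad h y) := by gcongr
        refine ⟨by push_cast; linarith, ?_⟩
        have h7 : ‖coef (grad h y) k0 i0‖ ≤ nsqV (grad h y) / √δ := by
          have e1 : ‖coef (grad h y) k0 i0‖ ≤ √(nsqV (grad h y)) :=
            Real.le_sqrt_of_sq_le (coef_sq_le_nsqV _ _ _)
          refine e1.trans ?_
          rw [le_div_iff₀ hsδ]
          calc _ ≤ √(nsqV (grad h y)) * √(nsqV (grad h y)) := by gcongr
            _ = _ := Real.mul_self_sqrt (nsqV_nonneg _)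
        have h8 : ‖coef (gstep h τ y) k0 i0‖ ≤ ‖coef y k0 i0‖ + τ * ‖coef (grad h y) k0 i0‖ := by
          unfold gstep
          rw [coef_add, coef_smul]
          refine (norm_add_le _ _).trans ?_
          rw [norm_mul, Complex.norm_real, Real.norm_eq_abs, abs_of_pos hτ]
        calc _ ≤ _ := h8
          _ ≤ 2 / √δ * (Phi h y - (v - ε)) + τ * (nsqV (grad h y) / √δ) := by gcongr
          _ = 2 / √δ * (Phi h y + τ / 2 * nsqV (grad h y) - (v - ε)) := by field_simp; ring
          _ ≤ _ := by gcongr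
  rcases key T with h1 | h1
  · exact h1
  · linarith [h1.1]

end Deformation

/-! ### The linking argument -/

/-- The embedding `H^{1/2} ⊂ L⁴` for loops with positive frequencies. -/
theorem integral_pow_four_le (J : Finset ℤ) (hJ : ∀ k ∈ J, 0 < k) (c : ℤ → ℂ) :
    ∫ t in (0 : ℝ)..1, ‖∑ k ∈ J, c k * ee k t‖ ^ 4 ≤ (∑ k ∈ J, k * ‖c k‖ ^ 2) ^ 2 := by
  classical
  set K := (J ×ˢ J).image fun p => p.1 + p.2 with hK
  have hmaps : ∀ p ∈ J ×ˢ J, p.1 + p.2 ∈ K := fun p hp => Finset.mem_image_of_mem _ hp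
  set a : ℤ → ℂ := fun n => ∑ p ∈ (J ×ˢ J).filter (fun p => p.1 + p.2 = n), c p.1 * c p.2 with ha
  have hsq : ∀ t, (∑ k ∈ J, c k * ee k t) ^ 2 = ∑ n ∈ K, a n * ee n t := by
    intro t
    rw [sq, Finset.sum_mul_sum, ← Finset.sum_product', ← Finset.sum_fiberwise_of_maps_to hmaps]
    refine Finset.sum_congr rfl fun n _ => ?_
    rw [ha, Finset.sum_mul]
    refine Finset.sum_congr rfl fun p hp => ?_
    rw [← (Finset.mem_filter.1 hp).2, ee_add_left]; ring
  have h1 : ∀ t, ‖∑ k ∈ J, c k * ee k t‖ ^ 4 = ‖∑ n ∈ K, a n * ee n t‖ ^ 2 := by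
    intro t; rw [← hsq, norm_pow]; ring
  simp_rw [h1]
  rw [parseval_finset]
  have h2 : ∀ n, ‖a n‖ ^ 2 ≤ ∑ p ∈ (J ×ˢ J).filter (fun p => p.1 + p.2 = n),
      (p.1 * ‖c p.1‖ ^ 2) * (p.2 * ‖c p.2‖ ^ 2) := by
    intro n
    set P := (J ×ˢ J).filter (fun p => p.1 + p.2 = n) with hP
    have hP0 : ∀ p ∈ P, 0 < p.1 ∧ 0 < p.2 ∧ p.1 + p.2 = n := by
      intro p hp
      rw [hP, Finset.mem_filter, Finset.mem_product] at hp
      exact ⟨hJ _ hp.1.1, hJ _ hp.1.2, hp.2⟩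
    have hle : ‖a n‖ ≤ ∑ p ∈ P, ‖c p.1‖ * ‖c p.2‖ := by
      refine (norm_sum_le _ _).trans (Finset.sum_le_sum fun p _ => ?_)
      rw [norm_mul]
    have hcs := Finset.sum_sq_le_sum_mul_sum_of_sq_le_mul P
      (r := fun p : ℤ × ℤ => ‖c p.1‖ * ‖c p.2‖) (f := fun p => 1 / ((p.1 : ℝ) * p.2))
      (g := fun p => (p.1 * ‖c p.1‖ ^ 2) * (p.2 * ‖c p.2‖ ^ 2))
      (fun p hp => by
        have := hP0 p hp
        have h1 : (0 : ℝ) < p.1 := by exact_mod_cast this.1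
        have h2 : (0 : ℝ) < p.2 := by exact_mod_cast this.2.1
        positivity)
      (fun p hp => by
        have := hP0 p hp
        have h1 : (0 : ℝ) < p.1 := by exact_mod_cast this.1
        have h2 : (0 : ℝ) < p.2 := by exact_mod_cast this.2.1
        positivity)
      (fun p hp => by
        have := hP0 p hp
        have h1 : (0 : ℝ) < p.1 := by exact_mod_cast this.1
        have h2 : (0 : ℝ) < p.2 := by exact_mod_cast this.2.1
        refine le_of_eq ?_
        field_simp)
    -- there are at most `n - 1` pairs, each with product at least `n - 1`
    have hone : ∑ p ∈ P, 1 / ((p.1 : ℝ) * p.2) ≤ 1 := by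
      rcases P.eq_empty_or_nonempty with he | ⟨q, hq⟩
      · rw [he]; simp
      have hq0 := hP0 q hq
      have hn : 0 < n - 1 := by omega
      have hnR : (0 : ℝ) < (n - 1 : ℤ) := by exact_mod_cast hn
      have hcard : P.card ≤ (n - 1).toNat := by
        have : P.card ≤ (Finset.Icc 1 (n - 1)).card := by
          refine Finset.card_le_card_of_injOn (fun p => p.1) (fun p hp => ?_) ?_
          · have := hP0 p hp
            simp only [Finset.coe_Icc, mem_Icc]; omega
          · intro p hp r hr hpr
            have h1 := hP0 p hp
            have h2 := hP0 r hr
            simp only at hpr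
            ext <;> omega
        simpa using this
      calc ∑ p ∈ P, 1 / ((p.1 : ℝ) * p.2) ≤ ∑ p ∈ P, 1 / ((n - 1 : ℤ) : ℝ) := by
            refine Finset.sum_le_sum fun p hp => ?_
            have h1 := hP0 p hp
            refine one_div_le_one_div_of_le hnR ?_
            have : n - 1 ≤ p.1 * p.2 := by nlinarith
            exact_mod_cast this
        _ = P.card * (1 / ((n - 1 : ℤ) : ℝ)) := by rw [Finset.sum_const, nsmul_eq_mul]
        _ ≤ ((n - 1 : ℤ) : ℝ) * (1 / ((n - 1 : ℤ) : ℝ)) := by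
            gcongr
            have : ((P.card : ℕ) : ℤ) ≤ n - 1 := by omega
            exact_mod_cast this
        _ = 1 := by field_simp
    calc ‖a n‖ ^ 2 ≤ (∑ p ∈ P, ‖c p.1‖ * ‖c p.2‖) ^ 2 := by gcongr
      _ ≤ _ := hcs
      _ ≤ 1 * _ := by
          refine mul_le_mul_of_nonneg_right hone (Finset.sum_nonneg fun p hp => ?_)
          have := hP0 p hp
          have h1 : (0 : ℝ) < p.1 := by exact_mod_cast this.1
          have h2 : (0 : ℝ) < p.2 := by exact_mod_cast this.2.1
          positivity
      _ = _ := one_mul _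
  calc ∑ n ∈ K, ‖a n‖ ^ 2 ≤ ∑ n ∈ K, ∑ p ∈ (J ×ˢ J).filter (fun p => p.1 + p.2 = n),
        ((p.1 : ℝ) * ‖c p.1‖ ^ 2) * (p.2 * ‖c p.2‖ ^ 2) := Finset.sum_le_sum fun n _ => h2 n
    _ = _ := by
      rw [Finset.sum_fiberwise_of_maps_to hmaps (fun p : ℤ × ℤ => ((p.1 : ℝ) * ‖c p.1‖ ^ 2) * (p.2 * ‖c p.2‖ ^ 2)),
        Finset.sum_product, sq, Finset.sum_mul_sum]

/-! ### The minimax contradiction -/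

section Linking

variable {s : Fin 2 → ℝ} {N : ℕ}

theorem sum_win {E : Type*} [AddCommMonoid E] (f : ℤ → E) (hf : ∀ k < 0, f k = 0) :
    ∑ k ∈ win N, f k = f 0 + ∑ k ∈ Finset.Icc (1 : ℤ) N, f k := by
  rw [← Finset.sum_insert (by simp)]
  refine (Finset.sum_subset (fun k hk => ?_) fun k hk hk' => hf k ?_).symm
  · simp only [Finset.mem_insert, Finset.mem_Icc] at hk ⊢
    omega
  · simp only [Finset.mem_insert, Finset.mem_Icc] at hk hk'
    omega

theorem sum_Icc_one {E : Type*} [AddCommMonoid E] (f : ℤ → E) :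
    ∑ k ∈ Finset.Icc (1 : ℤ) N, f k = ∑ q : Fin N, f (q + 1) := by
  refine Finset.sum_bij' (fun k hk => (⟨(k - 1).toNat, by
    rw [Finset.mem_Icc] at hk; omega⟩ : Fin N)) (fun q _ => (q : ℤ) + 1) ?_ ?_ ?_ ?_ ?_
  · intro k hk; simp
  · intro q _; simp only [Finset.mem_Icc]; omega
  · intro k hk; rw [Finset.mem_Icc] at hk; simp only; omega
  · intro q _; ext; simp
  · intro k hk; rw [Finset.mem_Icc] at hk; congr 1; simp only; omega

/-- The loop with mean value `p`, coefficients `z` at the positive frequencies, and no negative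
frequencies. -/
def stx (p : Fin 2 → ℂ) (z : Fin N × Fin 2 → ℂ) : GV (win N) := fun k i =>
  (if (k : ℤ) = 0 then p i else 0) + ∑ q : Fin N, if (k : ℤ) = q + 1 then z (q, i) else 0

theorem coef_stx_pos (p : Fin 2 → ℂ) (z : Fin N × Fin 2 → ℂ) (q : Fin N) (i : Fin 2) :
    coef (stx p z) (q + 1) i = z (q, i) := by
  have hk : (q : ℤ) + 1 ∈ win N := by rw [Finset.mem_Icc]; omega
  have h0 : (q : ℤ) + 1 ≠ 0 := by omega
  simp only [coef, hk, dif_pos, stx, h0, if_false, zero_add]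
  rw [Finset.sum_eq_single q]
  · simp
  · intro r _ hr
    rw [if_neg]
    intro h
    exact hr (Fin.ext (by omega))
  · simp

theorem coef_stx_zero (p : Fin 2 → ℂ) (z : Fin N × Fin 2 → ℂ) (i : Fin 2) :
    coef (stx p z) 0 i = p i := by
  have hk : (0 : ℤ) ∈ win N := by rw [Finset.mem_Icc]; omega
  simp only [coef, hk, dif_pos, stx, if_true]
  rw [Finset.sum_eq_zero, add_zero]
  intro q _
  rw [if_neg]; omega

theorem coef_stx_neg (p : Fin 2 → ℂ) (z : Fin N × Fin 2 → ℂ) (k : ℤ) (hk : k < 0) (i : Fin 2) :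
    coef (stx p z) k i = 0 := by
  unfold coef
  split_ifs with h
  · simp only [stx, hk.ne, if_false, zero_add]
    refine Finset.sum_eq_zero fun q _ => ?_
    rw [if_neg]; omega
  · rfl

theorem contDiff_stx (p : Fin 2 → ℂ) : ContDiff ℝ 1 (stx (N := N) p) := by
  rw [contDiff_pi]; intro k
  rw [contDiff_pi]; intro i
  unfold stx
  refine contDiff_const.add (ContDiff.sum fun q _ => ?_)
  split_ifs
  · fun_prop
  · fun_prop

theorem shift_stx (p : Fin 2 → ℂ) (z : Fin N × Fin 2 → ℂ) (θ : ℝ) :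
    stx p (fun q => ee 1 θ ^ ((q.1 : ℕ) + 1) * z q) = shift θ (stx p z) := by
  ext k i
  simp only [stx, shift, mul_add, Finset.mul_sum]
  congr 1
  · split_ifs with h
    · rw [h]; simp
    · simp
  · refine Finset.sum_congr rfl fun q _ => ?_
    split_ifs with h
    · rw [h, ee_eq_pow ((q : ℤ) + 1)]; norm_cast
    · simp

theorem ev_stx (p : Fin 2 → ℂ) (z : Fin N × Fin 2 → ℂ) (t : ℝ) (i : Fin 2) :
    ev (stx p z) t i - p i = ∑ k ∈ Finset.Icc (1 : ℤ) N, coef (stx p z) k i * ee k t := by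
  unfold ev
  rw [sum_win _ (fun k hk => by rw [coef_stx_neg p z k hk, zero_mul]), coef_stx_zero]
  simp

theorem act_stx (p : Fin 2 → ℂ) (z : Fin N × Fin 2 → ℂ) :
    act (stx p z) = π * ∑ k ∈ Finset.Icc (1 : ℤ) N, ∑ i, k * ‖coef (stx p z) k i‖ ^ 2 := by
  unfold act
  rw [sum_win _ (fun k hk => by simp [coef_stx_neg p z k hk])]
  simp only [Int.cast_zero, mul_zero, zero_mul, Finset.sum_const_zero, zero_add, Finset.mul_sum]
  exact Finset.sum_congr rfl fun k _ => Finset.sum_congr rfl fun i _ => by ring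

/-- The action functional is bounded below on small spheres of positive frequencies around `p`. -/
theorem Phi_stx_ge (h : Ham s) (p : Fin 2 → ℂ) {C : ℝ} (hC : 0 ≤ C)
    (hp : ∀ z, h.H z ≤ C * nsq (z - p) ^ 2) (z : Fin N × Fin 2 → ℂ) {ρ : ℝ}
    (hz : ∑ q, (((q.1 : ℕ) + 1 : ℕ) : ℝ) * ‖z q‖ ^ 2 = ρ ^ 2) :
    π * ρ ^ 2 - 4 * C * ρ ^ 4 ≤ Phi h (stx p z) := by
  set x := stx p z with hx
  set J' := Finset.Icc (1 : ℤ) N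
  have hJ' : ∀ k ∈ J', 0 < k := fun k hk => by rw [Finset.mem_Icc] at hk; omega
  have hρ : ∑ k ∈ J', ∑ i, k * ‖coef x k i‖ ^ 2 = ρ ^ 2 := by
    rw [sum_Icc_one (fun k => ∑ i, k * ‖coef x k i‖ ^ 2), ← hz, Fintype.sum_prod_type]
    refine Finset.sum_congr rfl fun q _ => Finset.sum_congr rfl fun i _ => ?_
    rw [hx, coef_stx_pos]; push_cast; ring
  have hi : ∀ i, ∑ k ∈ J', k * ‖coef x k i‖ ^ 2 ≤ ρ ^ 2 := by
    intro i
    rw [← hρ]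
    refine Finset.sum_le_sum fun k hk => ?_
    have : (0 : ℝ) < k := by exact_mod_cast hJ' k hk
    exact Finset.single_le_sum (f := fun i => k * ‖coef x k i‖ ^ 2) (fun _ _ => by positivity)
          (Finset.mem_univ i)
  have hi0 : ∀ i, 0 ≤ ∑ k ∈ J', k * ‖coef x k i‖ ^ 2 := by
    intro i
    refine Finset.sum_nonneg fun k hk => ?_
    have : (0 : ℝ) < k := by exact_mod_cast hJ' k hk
    positivity
  have h4 : ∀ i, ∫ t in (0 : ℝ)..1, ‖ev x t i - p i‖ ^ 4 ≤ ρ ^ 4 := by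
    intro i
    simp_rw [hx, ev_stx]
    refine (integral_pow_four_le J' hJ' fun k => coef (stx p z) k i).trans ?_
    calc _ ≤ (ρ ^ 2) ^ 2 := by
          have := hi i
          have := hi0 i
          gcongr
      _ = _ := by ring
  have hH : ∫ t in (0 : ℝ)..1, h.H (ev x t) ≤ ∫ t in (0 : ℝ)..1,
      (2 * C * ‖ev x t 0 - p 0‖ ^ 4 + 2 * C * ‖ev x t 1 - p 1‖ ^ 4) := by
    refine intervalIntegral.integral_mono_on zero_le_one
      ((continuous_H_ev h _).intervalIntegrable _ _)
      (Continuous.intervalIntegrable (by fun_prop) _ _) fun t _ => (hp _).trans ?_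
    simp only [nsq, Fin.sum_univ_two, Pi.sub_apply]
    nlinarith [mul_nonneg hC (sq_nonneg (‖ev x t 0 - p 0‖ ^ 2 - ‖ev x t 1 - p 1‖ ^ 2))]
  rw [intervalIntegral.integral_add (Continuous.intervalIntegrable (by fun_prop) _ _)
      (Continuous.intervalIntegrable (by fun_prop) _ _), intervalIntegral.integral_const_mul,
      intervalIntegral.integral_const_mul] at hH
  have e0 := mul_le_mul_of_nonneg_left (h4 0) (by positivity : 0 ≤ 2 * C)
  have e1 := mul_le_mul_of_nonneg_left (h4 1) (by positivity : 0 ≤ 2 * C)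
  have e2 : act x = π * ρ ^ 2 := by rw [hx, act_stx, ← hx, hρ]
  unfold Phi
  rw [e2]
  linarith

/-- The action functional is bounded above where all frequencies beyond those of the quadratic
form at infinity vanish. -/
theorem Phi_le_of_coef (h : Ham s) {l : ℝ}
    (hQ : ∀ z, ∑ i, s i * (π * ‖z i‖ ^ 2) - l ≤ h.H z) {J : Finset ℤ} (x : GV J)
    (hx : ∀ k ∈ J, ∀ i, s i < k → coef x k i = 0) : Phi h x ≤ l := by
  have h1 : ∫ t in (0 : ℝ)..1, (∑ i, s i * (π * ‖ev x t i‖ ^ 2) - l) ≤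
      ∫ t in (0 : ℝ)..1, h.H (ev x t) :=
    intervalIntegral.integral_mono_on zero_le_one
      (Continuous.intervalIntegrable (by fun_prop) _ _)
      ((continuous_H_ev h _).intervalIntegrable _ _) fun t _ => hQ _
  rw [intervalIntegral.integral_sub (Continuous.intervalIntegrable (by fun_prop) _ _) (by simp),
    intervalIntegral.integral_finsetSum (fun i _ =>
      Continuous.intervalIntegrable (by fun_prop) _ _)] at h1
  simp_rw [intervalIntegral.integral_const_mul] at h1
  have hpar : ∀ i, ∫ t in (0 : ℝ)..1, ‖ev x t i‖ ^ 2 = ∑ k ∈ J, ‖coef x k i‖ ^ 2 := fun i =>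
    parseval_finset J fun k => coef x k i
  simp_rw [hpar] at h1
  have h2 : act x ≤ ∑ i, s i * (π * ∑ k ∈ J, ‖coef x k i‖ ^ 2) := by
    unfold act
    rw [Finset.sum_comm]
    refine Finset.sum_le_sum fun i _ => ?_
    rw [Finset.mul_sum, Finset.mul_sum]
    refine Finset.sum_le_sum fun k hk => ?_
    by_cases hki : s i < k
    · simp [hx k hk i hki]
    · push Not at hki
      have : 0 ≤ π * ‖coef x k i‖ ^ 2 := by positivity
      nlinarith
  unfold Phi
  simp only [intervalIntegral.integral_const, sub_zero, one_smul] at h1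
  linarith

theorem exists_ee_eq (u : ℂ) (hu : ‖u‖ = 1) : ∃ θ : ℝ, ee 1 θ = u := by
  refine ⟨u.arg / (2 * π), ?_⟩
  have := Complex.norm_mul_exp_arg_mul_I u
  rw [hu, Complex.ofReal_one, one_mul] at this
  rw [ee]
  conv_rhs => rw [← this]
  congr 1
  have : (π : ℂ) ≠ 0 := by simp [Real.pi_ne_zero]
  push_cast
  field_simp

/-- Minimax argument for three nested Hamiltonians. The first carries the sphere
of small loops to the level `c₁`, the second crosses its single critical level `v`, and the third
carries the result above `l`, where it cannot be disjoint from the space spanned by the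
nonpositive frequencies and the two slots `q₁`, `q₂`. -/
theorem linking (hs : ∀ i, ∀ k : ℤ, s i ≠ k) (hs0 : ∀ i, 0 < s i) (h1 h2 h3 : Ham s)
    (h12 : ∀ z, h2.H z ≤ h1.H z) (h23 : ∀ z, h3.H z ≤ h2.H z) (p : Fin 2 → ℂ) {C : ℝ}
    (hC : 0 ≤ C) (hp : ∀ z, h1.H z ≤ C * nsq (z - p) ^ 2) {l l' : ℝ} (hll : l < l')
    (hQ : ∀ z, ∑ i, s i * (π * ‖z i‖ ^ 2) - l ≤ h3.H z) (q1 q2 : ℕ × Fin 2) (hq : q1 ≠ q2)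
    (hq1 : q1.1 + 1 < s q1.2) (hq2 : q2.1 + 1 < s q2.2) {c1 c3 v κ : ℝ} (hκ : 0 < κ)
    (hcv : c1 < v) (hvc : v < c3) (k0 : ℤ) (hk0 : k0 ≠ 0) (i0 : Fin 2)
    (hsol1 : ∀ u, IsSol h1 u → 0 < actionSol h1 u → c1 < actionSol h1 u)
    (hsol2 : ∀ u, IsSol h2 u → actionSol h2 u ∈ Icc c1 c3 →
      actionSol h2 u = v ∧ κ < ‖fc (fun t => u t i0) k0‖)
    (hsol3 : ∀ u, IsSol h3 u → actionSol h3 u ∉ Icc c3 l') : False := by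
  set ρ : ℝ := √(1 / (1 + 4 * C)) with hρ
  have hρ0 : 0 < ρ := Real.sqrt_pos.2 (by positivity)
  have hρ2 : ρ ^ 2 = 1 / (1 + 4 * C) := Real.sq_sqrt (by positivity)
  have hα : ρ ^ 2 ≤ π * ρ ^ 2 - 4 * C * ρ ^ 4 := by
    have e1 : 4 * C * ρ ^ 2 ≤ 1 := by
      rw [hρ2, mul_one_div, div_le_one (by positivity)]; linarith
    have := Real.pi_gt_three
    have e2 : 4 * C * ρ ^ 4 = (4 * C * ρ ^ 2) * ρ ^ 2 := by ring
    rw [e2]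
    nlinarith [sq_nonneg ρ]
  obtain ⟨N1, hF1⟩ := climb h1 hs (c := ρ ^ 2) (d := c1) fun u hu ha => by
    have := hsol1 u hu (lt_of_lt_of_le (by positivity) ha.1)
    exact absurd ha.2 (not_le.2 this)
  obtain ⟨ε, hε, hε1, hε2, N2, hF2⟩ := cross h2 hs hcv hvc hκ k0 i0 fun u hu ha => (hsol2 u hu ha).2
  obtain ⟨N3, hF3⟩ := climb h2 hs (c := c1) (d := v - ε) fun u hu ha => by
    have := (hsol2 u hu ⟨ha.1, by linarith [ha.2]⟩).1
    linarith [ha.2]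
  obtain ⟨N4, hF4⟩ := climb h2 hs (c := v + ε) (d := c3) fun u hu ha => by
    have := (hsol2 u hu ⟨by linarith [ha.1], ha.2⟩).1
    linarith [ha.1]
  obtain ⟨N5, hF5⟩ := climb h3 hs (c := c3) (d := l') hsol3
  set N := N1 + N2 + N3 + N4 + N5 + q1.1 + q2.1 + 1 with hN
  obtain ⟨F1, hE1, hF1⟩ := hF1 N (by omega)
  obtain ⟨F2, hE2, hF2⟩ := hF2 N (by omega)
  obtain ⟨F3, hE3, hF3⟩ := hF3 N (by omega)
  obtain ⟨F4, hE4, hF4⟩ := hF4 N (by omega)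
  obtain ⟨F5, hE5, hF5⟩ := hF5 N (by omega)
  have hPhi12 : ∀ x : GV (win N), Phi h1 x ≤ Phi h2 x := fun x =>
    sub_le_sub_left (intervalIntegral.integral_mono_on zero_le_one
      ((continuous_H_ev h2 _).intervalIntegrable _ _)
      ((continuous_H_ev h1 _).intervalIntegrable _ _) fun t _ => h12 _) _
  have hPhi23 : ∀ x : GV (win N), Phi h2 x ≤ Phi h3 x := fun x =>
    sub_le_sub_left (intervalIntegral.integral_mono_on zero_le_one
      ((continuous_H_ev h3 _).intervalIntegrable _ _)
      ((continuous_H_ev h2 _).intervalIntegrable _ _) fun t _ => h23 _) _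
  set A : GV (win N) → GV (win N) := F3 ∘ F1 with hA
  have hAE : Equi A := hE3.comp hE1
  set B : GV (win N) → GV (win N) := F5 ∘ F4 ∘ F2 ∘ A with hB
  have hBE : Equi B := hE5.comp (hE4.comp (hE2.comp hAE))
  let j1 : Fin N × Fin 2 := (⟨q1.1, by omega⟩, q1.2)
  let j2 : Fin N × Fin 2 := (⟨q2.1, by omega⟩, q2.2)
  have hj : j1 ≠ j2 := by
    intro h
    apply hq
    simp only [j1, j2, Prod.mk.injEq, Fin.mk.injEq] at h
    exact Prod.ext h.1 h.2
  let cj : ℂ →L[ℝ] ℂ := if 0 ≤ k0 then ContinuousLinearMap.id ℝ ℂ else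
    Complex.conjCLE.toContinuousLinearMap
  have hcj0 : ∀ w, cj w = 0 → w = 0 := by
    intro w hw
    simp only [cj] at hw
    split_ifs at hw with h
    · simpa using hw
    · simpa using hw
  let g : (Fin N × Fin 2 → ℂ) → (Fin N × Fin 2 → ℂ) := fun z q =>
    if q = j2 then 0 else if q = j1 then cj (coef (A (stx p z)) k0 i0)
    else coef (B (stx p z)) ((q.1 : ℤ) + 1) q.2
  have hg : ContDiff ℝ 1 g := by
    rw [contDiff_pi]
    intro q
    simp only [g]
    split_ifs with e1 e2
    · exact contDiff_const
    · exact cj.contDiff.comp ((coefL k0 i0).contDiff.comp (hAE.1.comp (contDiff_stx p)))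
    · exact (coefL _ _).contDiff.comp (hBE.1.comp (contDiff_stx p))
  obtain ⟨z, hz, hgz⟩ := borsukUlam_weighted j2 (fun q => (q.1 : ℕ) + 1)
    (fun q => if q = j1 then k0.natAbs else (q.1 : ℕ) + 1) (fun q => by omega)
    (fun q => by split_ifs <;> omega) g hg (by
      intro u hu z q
      obtain ⟨θ, rfl⟩ := exists_ee_eq u hu
      have hsx : stx p (fun j => ee 1 θ ^ ((j.1 : ℕ) + 1) * z j) = shift θ (stx p z) :=
        shift_stx p z θ
      simp only [g]
      by_cases e1 : q = j2
      · simp [e1]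
      by_cases e2 : q = j1
      · simp only [if_neg e1, if_pos e2]
        rw [hsx, hAE.2, coef_shift]
        simp only [cj]
        split_ifs with h
        · rw [ee_eq_pow k0]
          simp only [ContinuousLinearMap.id_apply]
          congr 1
          rw [← zpow_natCast]
          congr 1
          omega
        · simp only [ContinuousLinearEquiv.coe_coe, Complex.conjCLE_apply, map_mul, conj_ee]
          rw [ee_eq_pow (-k0)]
          congr 1
          rw [← zpow_natCast]
          congr 1
          omega
      · simp only [if_neg e1, if_neg e2]
        rw [hsx, hBE.2, coef_shift, ee_eq_pow ((q.1 : ℤ) + 1)]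
        congr 1) (fun z => by simp [g]) ρ hρ0
  have hzA : coef (A (stx p z)) k0 i0 = 0 := by
    have := congrFun hgz j1
    simp only [g, if_neg hj, if_true, Pi.zero_apply] at this
    exact hcj0 _ this
  have e1 := hF1 (stx p z) (hα.trans (Phi_stx_ge h1 p hC hp z hz))
  have e2 := hF3 _ (e1.trans (hPhi12 _))
  have e3 := hF2 (A (stx p z)) e2 hzA
  have e4 := hF4 _ e3
  have e5 := hF5 _ (e4.trans (hPhi23 _))
  have e6 := Phi_le_of_coef h3 hQ (B (stx p z)) (by
    intro k hk i hki
    rw [Finset.mem_Icc] at hk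
    have hk0 : 0 < k := by
      have := (hs0 i).trans hki
      exact_mod_cast this
    set q : Fin N × Fin 2 := (⟨(k - 1).toNat, by omega⟩, i) with hq
    have hqk : ((q.1 : ℕ) : ℤ) + 1 = k := by simp only [hq]; omega
    have hne : ∀ r : ℕ × Fin 2, r.1 + 1 < s r.2 → ¬ (q.1.1 = r.1 ∧ q.2 = r.2) := by
      rintro r hr ⟨ha, hb⟩
      have hb' : i = r.2 := hb
      rw [← hb'] at hr
      have : ((r.1 : ℤ) + 1 : ℤ) = k := by rw [← hqk, ← ha]
      have h3 : (r.1 : ℝ) + 1 = k := by exact_mod_cast this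
      linarith
    have hn1 : q ≠ j1 := fun h => hne q1 hq1 ⟨by rw [h], by rw [h]⟩
    have hn2 : q ≠ j2 := fun h => hne q2 hq2 ⟨by rw [h], by rw [h]⟩
    have := congrFun hgz q
    simp only [g, if_neg hn1, if_neg hn2, Pi.zero_apply] at this
    rw [hqk] at this
    exact this)
  have : l' ≤ Phi h3 (B (stx p z)) := e5
  linarith

end Linking

/-! ### Profile functions -/

theorem hasDerivAt_max_sq (y : ℝ) : HasDerivAt (fun y : ℝ => max 0 y ^ 2) (2 * max 0 y) y := by
  rcases lt_trichotomy y 0 with h | h | h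
  · rw [max_eq_left h.le, mul_zero]
    refine (hasDerivAt_const y (0 : ℝ)).congr_of_eventuallyEq ?_
    filter_upwards [gt_mem_nhds h] with z hz
    rw [max_eq_left (le_of_lt hz)]; simp
  · subst h
    rw [hasDerivAt_iff_tendsto_slope]
    have h1 : Filter.Tendsto (fun y : ℝ => max 0 y) (nhdsWithin 0 {0}ᶜ) (nhds (2 * max 0 0)) := by
      have : Continuous fun y : ℝ => max 0 y := by fun_prop
      simpa using (this.tendsto 0).mono_left nhdsWithin_le_nhds
    refine h1.congr' ?_
    filter_upwards [self_mem_nhdsWithin] with z hz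
    have hz : z ≠ 0 := hz
    rw [slope_def_field]
    rcases le_total z 0 with h | h
    · simp [max_eq_left h]
    · simp only [max_eq_right h]; simp; field_simp
  · rw [max_eq_right h.le]
    have := hasDerivAt_pow 2 y
    simp only [Nat.cast_ofNat, Nat.add_one_sub_one, pow_one] at this
    refine this.congr_of_eventuallyEq ?_
    filter_upwards [lt_mem_nhds h] with z hz
    rw [max_eq_right (le_of_lt hz)]

/-- The density of the step function `sg`. -/
def sgd (x : ℝ) : ℝ := 30 * max 0 (x * (1 - x)) ^ 2

/-- A `C²` step function, equal to `0` for `x ≤ 0` and to `1` for `x ≥ 1`, convex up to `1/2` and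
concave from there on. -/
def sg (x : ℝ) : ℝ := ∫ t in (0 : ℝ)..x, sgd t

theorem contDiff_sgd : ContDiff ℝ 1 sgd := by
  have h1 : ContDiff ℝ 1 fun y : ℝ => max 0 y ^ 2 := by
    rw [contDiff_one_iff_deriv]
    refine ⟨fun y => (hasDerivAt_max_sq y).differentiableAt, ?_⟩
    rw [show deriv (fun y : ℝ => max 0 y ^ 2) = fun y => 2 * max 0 y from
      funext fun y => (hasDerivAt_max_sq y).deriv]
    fun_prop
  exact contDiff_const.mul (h1.comp (contDiff_id.mul (contDiff_const.sub contDiff_id)))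

theorem continuous_sgd : Continuous sgd := contDiff_sgd.continuous

theorem hasDerivAt_sg (x : ℝ) : HasDerivAt sg (sgd x) x :=
  intervalIntegral.integral_hasDerivAt_right (continuous_sgd.intervalIntegrable _ _)
    continuous_sgd.aestronglyMeasurable.stronglyMeasurableAtFilter continuous_sgd.continuousAt

theorem contDiff_sg : ContDiff ℝ 2 sg := by
  rw [show (2 : WithTop ℕ∞) = 1 + 1 from by norm_num, contDiff_succ_iff_deriv]
  refine ⟨fun x => (hasDerivAt_sg x).differentiableAt, by simp, ?_⟩
  rw [show deriv sg = sgd from funext fun x => (hasDerivAt_sg x).deriv]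
  exact contDiff_sgd

theorem sgd_nonneg (x : ℝ) : 0 ≤ sgd x := by unfold sgd; positivity

theorem sgd_eq_zero {x : ℝ} (hx : x ≤ 0 ∨ 1 ≤ x) : sgd x = 0 := by
  have : x * (1 - x) ≤ 0 := by rcases hx with h | h <;> nlinarith
  simp [sgd, max_eq_left this]

theorem sgd_eq {x : ℝ} (h0 : 0 ≤ x) (h1 : x ≤ 1) : sgd x = 30 * (x * (1 - x)) ^ 2 := by
  rw [sgd, max_eq_right (mul_nonneg h0 (by linarith))]

theorem monotone_sg : Monotone sg := by
  refine monotone_of_deriv_nonneg (fun x => (hasDerivAt_sg x).differentiableAt) fun x => ?_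
  rw [(hasDerivAt_sg x).deriv]; exact sgd_nonneg x

theorem sg_eq_zero {x : ℝ} (hx : x ≤ 0) : sg x = 0 := by
  have : ∫ t in (0 : ℝ)..x, sgd t = ∫ t in (0 : ℝ)..x, (0 : ℝ) := by
    refine intervalIntegral.integral_congr fun t ht => ?_
    rw [uIcc_of_ge hx] at ht
    exact sgd_eq_zero (Or.inl ht.2)
  rw [sg, this]; simp

theorem sg_eq {x : ℝ} (h0 : 0 ≤ x) (h1 : x ≤ 1) : sg x = 10 * x ^ 3 - 15 * x ^ 4 + 6 * x ^ 5 := by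
  have hd : ∀ t : ℝ, HasDerivAt (fun x : ℝ => 10 * x ^ 3 - 15 * x ^ 4 + 6 * x ^ 5)
      (30 * (t * (1 - t)) ^ 2) t := by
    intro t
    have := (((hasDerivAt_pow 3 t).const_mul 10).sub ((hasDerivAt_pow 4 t).const_mul 15)).add
      ((hasDerivAt_pow 5 t).const_mul 6)
    refine this.congr_deriv ?_
    norm_num; ring
  have : ∫ t in (0 : ℝ)..x, sgd t = ∫ t in (0 : ℝ)..x, 30 * (t * (1 - t)) ^ 2 := by
    refine intervalIntegral.integral_congr fun t ht => ?_
    rw [uIcc_of_le h0] at ht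
    exact sgd_eq ht.1 (ht.2.trans h1)
  rw [sg, this, intervalIntegral.integral_eq_sub_of_hasDerivAt (fun t _ => hd t)
    (Continuous.intervalIntegrable (by fun_prop) _ _)]
  norm_num

theorem sg_eq_one {x : ℝ} (hx : 1 ≤ x) : sg x = 1 := by
  have h1 : sg x = sg 1 + ∫ t in (1 : ℝ)..x, sgd t :=
    (intervalIntegral.integral_add_adjacent_intervals (continuous_sgd.intervalIntegrable _ _)
      (continuous_sgd.intervalIntegrable _ _)).symm
  have : ∫ t in (1 : ℝ)..x, sgd t = ∫ t in (1 : ℝ)..x, (0 : ℝ) := by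
    refine intervalIntegral.integral_congr fun t ht => ?_
    rw [uIcc_of_le hx] at ht
    exact sgd_eq_zero (Or.inr ht.1)
  rw [h1, this, sg_eq zero_le_one le_rfl]; norm_num

theorem sg_nonneg (x : ℝ) : 0 ≤ sg x := by
  rcases le_total x 0 with h | h
  · rw [sg_eq_zero h]
  · rw [← sg_eq_zero le_rfl]; exact monotone_sg h

theorem sg_le_one (x : ℝ) : sg x ≤ 1 := by
  rcases le_total 1 x with h | h
  · rw [sg_eq_one h]
  · rw [← sg_eq_one le_rfl]; exact monotone_sg h

theorem sg_lower {x : ℝ} (h0 : 0 ≤ x) (h1 : x ≤ 1 / 2) : sg x ≤ sgd x * x := by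
  rw [sg_eq h0 (by linarith), sgd_eq h0 (by linarith)]
  have : 0 ≤ x ^ 3 * (20 - 45 * x + 24 * x ^ 2) := mul_nonneg (by positivity) (by nlinarith)
  nlinarith

theorem sg_upper {x : ℝ} (h0 : 1 / 2 ≤ x) (h1 : x ≤ 1) : 1 - sg x ≤ sgd x * (1 - x) := by
  rw [sg_eq (by linarith) h1, sgd_eq (by linarith) h1]
  have : 0 ≤ (1 - x) ^ 3 * (20 - 45 * (1 - x) + 24 * (1 - x) ^ 2) :=
    mul_nonneg (pow_nonneg (by linarith) _) (by nlinarith)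
  nlinarith

theorem sgd_inj {x y : ℝ} (hx0 : 0 ≤ x) (hx : x ≤ 1 / 2) (hy0 : 0 ≤ y) (hy : y ≤ 1 / 2)
    (h : sgd x = sgd y) : x = y := by
  rw [sgd_eq hx0 (by linarith), sgd_eq hy0 (by linarith)] at h
  have hx' : 0 ≤ x * (1 - x) := mul_nonneg hx0 (by linarith)
  have hy' : 0 ≤ y * (1 - y) := mul_nonneg hy0 (by linarith)
  have h2 : x * (1 - x) = y * (1 - y) := by
    rw [← sq_eq_sq₀ hx' hy']; linarith
  have h3 : (x - y) * (1 - x - y) = 0 := by linarith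
  rcases mul_eq_zero.1 h3 with h4 | h4
  · linarith
  · linarith

/-- A convex `C²` function vanishing on `(-∞, 0]` and of slope `1` on `[1, ∞)`. -/
def psi (x : ℝ) : ℝ := ∫ t in (0 : ℝ)..x, sg t

theorem continuous_sg : Continuous sg := contDiff_sg.continuous

theorem hasDerivAt_psi (x : ℝ) : HasDerivAt psi (sg x) x :=
  intervalIntegral.integral_hasDerivAt_right (continuous_sg.intervalIntegrable _ _)
    continuous_sg.aestronglyMeasurable.stronglyMeasurableAtFilter continuous_sg.continuousAt

theorem contDiff_psi : ContDiff ℝ 2 psi := by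
  rw [show (2 : WithTop ℕ∞) = 1 + 1 from by norm_num, contDiff_succ_iff_deriv]
  refine ⟨fun x => (hasDerivAt_psi x).differentiableAt, by simp, ?_⟩
  rw [show deriv psi = sg from funext fun x => (hasDerivAt_psi x).deriv]
  exact contDiff_sg.of_le (by norm_num)

theorem psi_eq_zero {x : ℝ} (hx : x ≤ 0) : psi x = 0 := by
  have : ∫ t in (0 : ℝ)..x, sg t = ∫ t in (0 : ℝ)..x, (0 : ℝ) := by
    refine intervalIntegral.integral_congr fun t ht => ?_
    rw [uIcc_of_ge hx] at ht
    exact sg_eq_zero ht.2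
  rw [psi, this]; simp

theorem psi_nonneg (x : ℝ) : 0 ≤ psi x := by
  have hm : Monotone psi := by
    refine monotone_of_deriv_nonneg (fun x => (hasDerivAt_psi x).differentiableAt) fun x => ?_
    rw [(hasDerivAt_psi x).deriv]; exact sg_nonneg x
  rcases le_total x 0 with h | h
  · rw [psi_eq_zero h]
  · rw [← psi_eq_zero le_rfl]; exact hm h

theorem psi_ge (x : ℝ) : x - 1 ≤ psi x := by
  rcases le_total x 1 with h | h
  · linarith [psi_nonneg x]
  · have h1 : psi x = psi 1 + ∫ t in (1 : ℝ)..x, sg t :=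
      (intervalIntegral.integral_add_adjacent_intervals (continuous_sg.intervalIntegrable _ _)
        (continuous_sg.intervalIntegrable _ _)).symm
    have : ∫ t in (1 : ℝ)..x, sg t = ∫ t in (1 : ℝ)..x, (1 : ℝ) := by
      refine intervalIntegral.integral_congr fun t ht => ?_
      rw [uIcc_of_le h] at ht
      exact sg_eq_one ht.1
    rw [h1, this]
    have := psi_nonneg 1
    simp; linarith

/-- Bounds the action of orbits in the region where the Hamiltonian is `psi` of a quadratic form. -/
theorem psi_action (x : ℝ) : x * sg x - psi x ≤ 1 := by
  rcases le_total x 0 with h | h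
  · rw [sg_eq_zero h]; linarith [psi_nonneg x]
  · nlinarith [psi_ge x, sg_le_one x, sg_nonneg x]

/-! ### Gradients, Hamiltonians and symplectic maps -/

/-- The Euclidean gradient of a real function on `ℂ²`. -/
def gradE (F : (Fin 2 → ℂ) → ℝ) (z : Fin 2 → ℂ) : Fin 2 → ℂ := fun i =>
  (fderiv ℝ F z (Pi.single i 1) : ℂ) + Complex.I * (fderiv ℝ F z (Pi.single i Complex.I) : ℂ)

/-- The linear map from covectors to vectors defining the gradient. -/
def sharp : ((Fin 2 → ℂ) →L[ℝ] ℝ) →ₗ[ℝ] (Fin 2 → ℂ) where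
  toFun L := fun i => (L (Pi.single i 1) : ℂ) + Complex.I * (L (Pi.single i Complex.I) : ℂ)
  map_add' L L' := by
    ext i
    simp only [add_apply, Complex.ofReal_add, Pi.add_apply]
    ring
  map_smul' c L := by
    ext i
    simp only [smul_apply, smul_eq_mul, Complex.ofReal_mul, RingHom.id_apply, Pi.smul_apply,
      Complex.real_smul]
    ring

/-- The identification `sharp` of covectors with vectors as a continuous linear map. -/
def sharpL : ((Fin 2 → ℂ) →L[ℝ] ℝ) →L[ℝ] (Fin 2 → ℂ) := LinearMap.toContinuousLinearMap sharp

theorem gradE_eq (F : (Fin 2 → ℂ) → ℝ) (z : Fin 2 → ℂ) : gradE F z = sharpL (fderiv ℝ F z) := rfl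

theorem ip_sharp (L : (Fin 2 → ℂ) →L[ℝ] ℝ) (w : Fin 2 → ℂ) : ip (sharpL L) w = L w := by
  have hw : w = (w 0).re • (Pi.single 0 1 : Fin 2 → ℂ) +
      (w 0).im • (Pi.single 0 Complex.I : Fin 2 → ℂ) +
      ((w 1).re • (Pi.single 1 1 : Fin 2 → ℂ) +
      (w 1).im • (Pi.single 1 Complex.I : Fin 2 → ℂ)) := by
    ext i
    fin_cases i <;> simp [Complex.re_add_im]
  conv_rhs => rw [hw]
  simp only [map_add, map_smul, smul_eq_mul]
  simp [ip, Fin.sum_univ_two, sharpL, sharp]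
  ring

theorem ip_gradE (F : (Fin 2 → ℂ) → ℝ) (z w : Fin 2 → ℂ) : ip (gradE F z) w = fderiv ℝ F z w :=
  ip_sharp _ _

theorem stdSymp_I_mul (g w : Fin 2 → ℂ) :
    stdSymp 2 (fun i => Complex.I * g i) w = -ip g w := by
  simp [stdSymp, ip, Fin.sum_univ_two]; ring

theorem stdSymp_anti (v w : Fin 2 → ℂ) : stdSymp 2 v w = -stdSymp 2 w v := by
  simp [stdSymp, Fin.sum_univ_two]; ring

theorem stdSymp_nondeg {v v' : Fin 2 → ℂ} (h : ∀ w, stdSymp 2 v w = stdSymp 2 v' w) : v = v' := by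
  ext i
  have h1 := h (Pi.single i 1)
  have h2 := h (Pi.single i Complex.I)
  fin_cases i <;> simp [stdSymp, Fin.sum_univ_two] at h1 h2 <;>
    exact Complex.ext (by simp; linarith) (by simp; linarith)

/-- The symplectic form as a continuous bilinear map. -/
def sympB : (Fin 2 → ℂ) →L[ℝ] (Fin 2 → ℂ) →L[ℝ] ℝ :=
  LinearMap.toContinuousLinearMap (LinearMap.toContinuousLinearMap.toLinearMap ∘ₗ
    LinearMap.mk₂ ℝ (stdSymp 2)
      (by intro m m' n; simp [stdSymp, Fin.sum_univ_two]; ring)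
      (by intro c m n; simp [stdSymp, Fin.sum_univ_two]; ring)
      (by intro m m' n; simp [stdSymp, Fin.sum_univ_two]; ring)
      (by intro c m n; simp [stdSymp, Fin.sum_univ_two]; ring))

theorem sympB_apply (v w : Fin 2 → ℂ) : sympB v w = stdSymp 2 v w := rfl

/-- A linear map preserving the symplectic form is invertible. -/
theorem exists_equiv_of_symp (L : (Fin 2 → ℂ) →L[ℝ] (Fin 2 → ℂ))
    (hL : ∀ v w, stdSymp 2 (L v) (L w) = stdSymp 2 v w) :
    ∃ e : (Fin 2 → ℂ) ≃L[ℝ] (Fin 2 → ℂ), (e : (Fin 2 → ℂ) →L[ℝ] (Fin 2 → ℂ)) = L := by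
  have hinj : Function.Injective L.toLinearMap := by
    intro v v' hv
    refine stdSymp_nondeg fun w => ?_
    rw [← hL v w, ← hL v' w]
    exact congrArg (fun x => stdSymp 2 x (L w)) hv
  refine ⟨(LinearEquiv.ofInjectiveEndo L.toLinearMap hinj).toContinuousLinearEquiv, ?_⟩
  ext v : 1
  rfl

/-- The quadratic form `∑ sᵢ π |zᵢ|²`. -/
def Qf (s : Fin 2 → ℝ) (z : Fin 2 → ℂ) : ℝ := ∑ i, s i * (π * ‖z i‖ ^ 2)

theorem Qf_eq (s : Fin 2 → ℝ) (z : Fin 2 → ℂ) :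
    Qf s z = ∑ i, s i * (π * ((z i).re ^ 2 + (z i).im ^ 2)) := by
  simp only [Qf, Complex.sq_norm, Complex.normSq_apply]
  refine Finset.sum_congr rfl fun i _ => by ring

/-- The real part of the `i`-th coordinate. -/
def coordRe (i : Fin 2) : (Fin 2 → ℂ) →L[ℝ] ℝ := Complex.reCLM.comp (ContinuousLinearMap.proj i)
/-- The imaginary part of the `i`-th coordinate. -/
def coordIm (i : Fin 2) : (Fin 2 → ℂ) →L[ℝ] ℝ := Complex.imCLM.comp (ContinuousLinearMap.proj i)

theorem hasFDerivAt_Qf (s : Fin 2 → ℝ) (z : Fin 2 → ℂ) :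
    HasFDerivAt (Qf s) (∑ i, (s i * π) • ((2 * (z i).re) • coordRe i + (2 * (z i).im) • coordIm i))
      z := by
  have h : Qf s = fun z => ∑ i, (s i * π) * ((coordRe i z) ^ 2 + (coordIm i z) ^ 2) := by
    ext z
    rw [Qf_eq]
    refine Finset.sum_congr rfl fun i _ => ?_
    simp [coordRe, coordIm]; ring
  rw [h]
  refine HasFDerivAt.fun_sum fun i _ => HasFDerivAt.const_mul ?_ _
  have h1 := (((coordRe i).hasFDerivAt (x := z)).pow 2).add
    (((coordIm i).hasFDerivAt (x := z)).pow 2)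
  refine (h1.congr_fderiv ?_ :)
  ext w
  simp [coordRe, coordIm]

theorem contDiff_Qf (s : Fin 2 → ℝ) {n : WithTop ℕ∞} : ContDiff ℝ n (Qf s) := by
  have h : Qf s = fun z => ∑ i, s i * (π * ((coordRe i z) ^ 2 + (coordIm i z) ^ 2)) := by
    ext z
    rw [Qf_eq]
    rfl
  rw [h]
  fun_prop

theorem fderiv_Qf (s : Fin 2 → ℝ) (z w : Fin 2 → ℂ) :
    fderiv ℝ (Qf s) z w = ∑ i, 2 * π * s i * ((starRingEnd ℂ) (z i) * w i).re := by
  rw [(hasFDerivAt_Qf s z).fderiv]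
  simp [coordRe, coordIm, Fin.sum_univ_two]
  ring

theorem gradE_Qf (s : Fin 2 → ℝ) (z : Fin 2 → ℂ) (i : Fin 2) :
    gradE (Qf s) z i = 2 * π * s i * z i := by
  unfold gradE
  rw [fderiv_Qf, fderiv_Qf]
  apply Complex.ext <;> fin_cases i <;> simp [Fin.sum_univ_two]

theorem Qf_add (s : Fin 2 → ℝ) (z h : Fin 2 → ℂ) :
    Qf s (z + h) = Qf s z + fderiv ℝ (Qf s) z h + Qf s h := by
  rw [fderiv_Qf, Qf_eq, Qf_eq, Qf_eq]
  simp [Fin.sum_univ_two]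
  ring

theorem norm_sq_le_nsq (h : Fin 2 → ℂ) : ‖h‖ ^ 2 ≤ nsq h := by
  have h1 : ‖h‖ ≤ √(nsq h) := by
    rw [pi_norm_le_iff_of_nonneg (Real.sqrt_nonneg _)]
    intro i
    apply Real.le_sqrt_of_sq_le
    exact Finset.single_le_sum (f := fun i => ‖h i‖ ^ 2) (fun _ _ => by positivity)
      (Finset.mem_univ i)
  have h0 : 0 ≤ nsq h := Finset.sum_nonneg fun _ _ => by positivity
  calc ‖h‖ ^ 2 ≤ √(nsq h) ^ 2 := by gcongr
    _ = nsq h := Real.sq_sqrt h0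

/-- Second order Taylor bound for a function whose derivative has compact support. -/
theorem exists_taylor {D : (Fin 2 → ℂ) → ℝ} (hD : ContDiff ℝ 2 D)
    (hc : HasCompactSupport (fderiv ℝ D)) :
    ∃ L : ℝ, 0 ≤ L ∧ ∀ z h, D (z + h) ≤ D z + fderiv ℝ D z h + L * nsq h := by
  have hD1 : ContDiff ℝ 1 (fderiv ℝ D) := hD.fderiv_right (by norm_num)
  obtain ⟨L, hL⟩ := hD1.lipschitzWith_of_hasCompactSupport hc one_ne_zero
  refine ⟨L, L.2, fun z h => ?_⟩
  have h1 := (convex_closedBall z ‖h‖).norm_image_sub_le_of_norm_fderiv_le' (𝕜 := ℝ) (f := D)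
    (φ := fderiv ℝ D z) (C := L * ‖h‖) (x := z) (y := z + h)
    (fun x _ => (hD.differentiable (by norm_num)).differentiableAt) (fun x hx => by
      have := hL.dist_le_mul x z
      rw [dist_eq_norm] at this
      refine this.trans ?_
      gcongr
      exact hx) (by simp) (by simp)
  rw [add_sub_cancel_left, Real.norm_eq_abs] at h1
  have h2 := (le_abs_self _).trans h1
  have h3 := mul_le_mul_of_nonneg_left (norm_sq_le_nsq h) L.coe_nonneg
  have h4 : (L : ℝ) * ‖h‖ * ‖h‖ = L * ‖h‖ ^ 2 := by ring
  linarith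

/-- The Hamiltonian given by a `C²` function which agrees with `Qf s`, up to a constant, outside a
compact set. -/
def hamOf (s : Fin 2 → ℝ) (F : (Fin 2 → ℂ) → ℝ) (hF : ContDiff ℝ 2 F)
    (hc : HasCompactSupport (fderiv ℝ (fun z => F z - Qf s z))) : Ham s :=
  have hD : ContDiff ℝ 2 (fun z => F z - Qf s z) := hF.sub (contDiff_Qf s)
  have hsub : ∀ z, fderiv ℝ (fun z => F z - Qf s z) z = fderiv ℝ F z - fderiv ℝ (Qf s) z :=
    fun z => fderiv_fun_sub (hF.differentiable (by norm_num)).differentiableAt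
      ((contDiff_Qf s (n := 1)).differentiable (by norm_num)).differentiableAt
  have hex := exists_taylor hD hc
  have hb := hc.exists_bound_of_continuous (hD.continuous_fderiv (by norm_num))
  { H := F
    g := gradE F
    cont := hF.continuous
    smooth := by
      have : gradE F = fun z => sharpL (fderiv ℝ F z) := rfl
      rw [this]
      exact sharpL.contDiff.comp (hF.fderiv_right (by norm_num))
    M := π * (|s 0| + |s 1|) + hex.choose
    M_nonneg := by have := hex.choose_spec.1; positivity
    quad := by
      intro z h
      have h1 := hex.choose_spec.2 z h
      have h2 := Qf_add s z h
      rw [hsub z] at h1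
      have h3 : Qf s h ≤ π * (|s 0| + |s 1|) * nsq h := by
        simp only [Qf, nsq, Fin.sum_univ_two]
        have e0 : s 0 * (π * ‖h 0‖ ^ 2) ≤ |s 0| * (π * ‖h 0‖ ^ 2) := by
          gcongr; exact le_abs_self _
        have e1 : s 1 * (π * ‖h 1‖ ^ 2) ≤ |s 1| * (π * ‖h 1‖ ^ 2) := by
          gcongr; exact le_abs_self _
        have e2 : 0 ≤ π * |s 0| * ‖h 1‖ ^ 2 := by positivity
        have e3 : 0 ≤ π * |s 1| * ‖h 0‖ ^ 2 := by positivity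
        nlinarith
      rw [ip_gradE]
      simp only [sub_apply] at h1
      nlinarith
    C := ‖sharpL‖ * hb.choose
    asym := by
      intro z i
      have h1 := hb.choose_spec z
      rw [hsub z] at h1
      have h2 := sharpL.le_of_opNorm_le_of_le le_rfl h1
      rw [map_sub, ← gradE_eq, ← gradE_eq] at h2
      have h3 := (norm_le_pi_norm _ i).trans h2
      rwa [Pi.sub_apply, gradE_Qf] at h3 }

/-- The gradient of such a Hamiltonian is Lipschitz. -/
theorem lipschitz_gradE {s : Fin 2 → ℝ} {F : (Fin 2 → ℂ) → ℝ} (hF : ContDiff ℝ 2 F)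
    (hc : HasCompactSupport (fderiv ℝ (fun z => F z - Qf s z))) :
    ∃ K, LipschitzWith K (fun z i => Complex.I * gradE F z i) := by
  have hD : ContDiff ℝ 2 (fun z => F z - Qf s z) := hF.sub (contDiff_Qf s)
  have hD1 : ContDiff ℝ 1 (fderiv ℝ (fun z => F z - Qf s z)) := hD.fderiv_right (by norm_num)
  have hsub : ∀ z, fderiv ℝ (fun z => F z - Qf s z) z = fderiv ℝ F z - fderiv ℝ (Qf s) z :=
    fun z => fderiv_fun_sub (hF.differentiable (by norm_num)).differentiableAt
      ((contDiff_Qf s (n := 1)).differentiable (by norm_num)).differentiableAt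
  obtain ⟨K, hK⟩ := hD1.lipschitzWith_of_hasCompactSupport hc one_ne_zero
  let A : (Fin 2 → ℂ) →ₗ[ℝ] (Fin 2 → ℂ) :=
    { toFun := fun z i => Complex.I * (2 * π * s i * z i)
      map_add' := fun z w => by ext i; simp; ring
      map_smul' := fun c z => by ext i; simp; ring }
  let J : (Fin 2 → ℂ) →ₗ[ℝ] (Fin 2 → ℂ) :=
    { toFun := fun z i => Complex.I * z i
      map_add' := fun z w => by ext i; simp; ring
      map_smul' := fun c z => by ext i; simp; ring }
  have key : (fun (z : Fin 2 → ℂ) i => Complex.I * gradE F z i) = fun z =>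
      (LinearMap.toContinuousLinearMap J) (sharpL (fderiv ℝ (fun z => F z - Qf s z) z)) +
        LinearMap.toContinuousLinearMap A z := by
    ext z i
    have : sharpL (fderiv ℝ (fun z => F z - Qf s z) z) = gradE F z - gradE (Qf s) z := by
      rw [hsub z, map_sub]; rfl
    rw [this]
    change _ = Complex.I * (gradE F z i - gradE (Qf s) z i) + Complex.I * (2 * π * s i * z i)
    rw [gradE_Qf]
    ring
  rw [key]
  exact ⟨_, (((LinearMap.toContinuousLinearMap J).lipschitz.comp
    (sharpL.lipschitz.comp hK))).add (LinearMap.toContinuousLinearMap A).lipschitz⟩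

/-! ### Symplectic embeddings of an ellipsoid -/

/-- The function `π|z₀|²/a + π|z₁|²/(2a)` whose sublevel sets are the ellipsoids `E(ra, 2ra)`. -/
def rr (a : ℝ) : (Fin 2 → ℂ) → ℝ := Qf ![1 / a, 1 / (2 * a)]

theorem rr_eq (a : ℝ) (z : Fin 2 → ℂ) : rr a z = 1 / a * (π * ‖z 0‖ ^ 2) +
    1 / (2 * a) * (π * ‖z 1‖ ^ 2) := by
  simp [rr, Qf, Fin.sum_univ_two]

/-- The open ellipsoid. -/
def UU (a : ℝ) : Set (Fin 2 → ℂ) := {z | rr a z < 1}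

theorem continuous_rr (a : ℝ) : Continuous (rr a) := (contDiff_Qf (n := 0) _).continuous

theorem isOpen_UU (a : ℝ) : IsOpen (UU a) := isOpen_lt (continuous_rr a) continuous_const

theorem convex_UU {a : ℝ} (ha : 0 < a) : Convex ℝ (UU a) := by
  have hsq : ∀ i : Fin 2, ConvexOn ℝ univ fun z : Fin 2 → ℂ => ‖z i‖ ^ 2 := by
    intro i
    have h1 : ConvexOn ℝ univ fun z : Fin 2 → ℂ => ‖z i‖ :=
      (convexOn_univ_norm (E := ℂ)).comp_linearMap
        (LinearMap.proj (R := ℝ) (φ := fun _ : Fin 2 => ℂ) i)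
    exact h1.pow (fun _ _ => norm_nonneg _) 2
  have : ConvexOn ℝ univ (rr a) := by
    have h := ((hsq 0).smul (show 0 ≤ 1 / a * π by positivity)).add
      ((hsq 1).smul (show 0 ≤ 1 / (2 * a) * π by positivity))
    refine h.congr fun z _ => ?_
    simp only [Pi.add_apply, smul_eq_mul, rr_eq]
    ring
  have h2 := this.convex_lt 1
  simpa [UU] using h2

theorem rr_nonneg {a : ℝ} (ha : 0 < a) (z : Fin 2 → ℂ) : 0 ≤ rr a z := by
  rw [rr_eq]; positivity

theorem isCompact_rr_le {a : ℝ} (ha : 0 < a) (c : ℝ) : IsCompact {z | rr a z ≤ c} := by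
  refine Metric.isCompact_of_isClosed_isBounded
    (isClosed_le (continuous_rr a) continuous_const) ?_
  refine (Metric.isBounded_closedBall (x := (0 : Fin 2 → ℂ)) (r := 2 * a * c / π + 1)).subset ?_
  intro z hz
  rw [mem_closedBall_zero_iff]
  have hz' : rr a z ≤ c := hz
  have hc : 0 ≤ c := (rr_nonneg ha z).trans hz'
  rw [rr_eq] at hz'
  have key : ∀ i, ‖z i‖ ^ 2 ≤ 2 * a * c / π := by
    intro i
    have e0 : 0 ≤ 1 / a * (π * ‖z 0‖ ^ 2) := by positivity
    have e1 : 0 ≤ 1 / (2 * a) * (π * ‖z 1‖ ^ 2) := by positivity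
    rw [le_div_iff₀ Real.pi_pos]
    have f0 : 1 / a * (π * ‖z 0‖ ^ 2) = 2 * (1 / (2 * a) * (π * ‖z 0‖ ^ 2)) := by
      field_simp
    have f : ∀ i, 1 / (2 * a) * (π * ‖z i‖ ^ 2) ≤ c → ‖z i‖ ^ 2 * π ≤ 2 * a * c := by
      intro i h
      rw [div_mul_eq_mul_div, div_le_iff₀ (by positivity)] at h
      linarith
    fin_cases i
    · exact f 0 (by linarith)
    · exact f 1 (by linarith)
  rw [pi_norm_le_iff_of_nonneg (by positivity)]
  intro i
  have := key i
  have h0 : 0 ≤ 2 * a * c / π := by positivity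
  nlinarith [norm_nonneg (z i)]

/-- A symplectic embedding of the open ellipsoid `UU a`. -/
structure SE (a : ℝ) (φ : (Fin 2 → ℂ) → (Fin 2 → ℂ)) : Prop where
  pos : 0 < a
  inj : InjOn φ (UU a)
  smooth : ContDiffOn ℝ (⊤ : ℕ∞) φ (UU a)
  symp : ∀ x ∈ UU a, ∀ v w, stdSymp 2 (fderiv ℝ φ x v) (fderiv ℝ φ x w) = stdSymp 2 v w

theorem two_le_top : (2 : WithTop ℕ∞) ≤ ((⊤ : ℕ∞) : WithTop ℕ∞) :=
  WithTop.coe_le_coe.2 (le_top : (2 : ℕ∞) ≤ ⊤)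

section SEfacts

variable {a : ℝ} {φ : (Fin 2 → ℂ) → (Fin 2 → ℂ)}

theorem SE.contDiffAt (h : SE a φ) {y : Fin 2 → ℂ} (hy : y ∈ UU a) :
    ContDiffAt ℝ (⊤ : ℕ∞) φ y := h.smooth.contDiffAt ((isOpen_UU a).mem_nhds hy)

theorem SE.hasFDerivAt (h : SE a φ) {y : Fin 2 → ℂ} (hy : y ∈ UU a) :
    HasFDerivAt φ (fderiv ℝ φ y) y :=
  ((h.contDiffAt hy).differentiableAt (by simp)).hasFDerivAt

/-- The image of a loop under a symplectic embedding encloses the same area. -/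
theorem SE.action (h : SE a φ) {y y' : ℝ → Fin 2 → ℂ} (hy : ∀ t, y t ∈ UU a)
    (hd : ∀ t, HasDerivAt y (y' t) t) (hc : Continuous y') (h01 : y 1 = y 0) :
    ∫ t in (0 : ℝ)..1, stdSymp 2 (φ (y t)) (fderiv ℝ φ (y t) (y' t)) =
      ∫ t in (0 : ℝ)..1, stdSymp 2 (y t) (y' t) := by
  -- the one-form `φ^*λ - λ`, with `λ = ω(z, dz)`, is closed, hence exact on the convex set `UU a`
  let θ : (Fin 2 → ℂ) → (Fin 2 → ℂ) →L[ℝ] ℝ := fun y =>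
    (sympB (φ y)).comp (fderiv ℝ φ y) - sympB y
  have hθ : ∀ y ∈ UU a, HasFDerivAt θ
      ((((ContinuousLinearMap.compL ℝ (Fin 2 → ℂ) (Fin 2 → ℂ) ℝ) (sympB (φ y))).comp
        (fderiv ℝ (fderiv ℝ φ) y)) +
        (((ContinuousLinearMap.compL ℝ (Fin 2 → ℂ) (Fin 2 → ℂ) ℝ).flip (fderiv ℝ φ y)).comp
          (sympB.comp (fderiv ℝ φ y))) - sympB) y := by
    intro y hy
    have h1 : HasFDerivAt (fun y => sympB (φ y)) (sympB.comp (fderiv ℝ φ y)) y :=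
      sympB.hasFDerivAt.comp y (h.hasFDerivAt hy)
    have h2 : HasFDerivAt (fderiv ℝ φ) (fderiv ℝ (fderiv ℝ φ) y) y := by
      have := (h.contDiffAt hy).fderiv_right (m := 1) (by norm_cast)
      exact (this.differentiableAt (by simp)).hasFDerivAt
    exact (h1.clm_comp h2).sub sympB.hasFDerivAt
  obtain ⟨f, hf⟩ := (convex_UU h.pos).exists_forall_hasFDerivAt_of_fderiv_symmetric (ω := θ)
    (isOpen_UU a) (fun y hy => (hθ y hy).differentiableAt.differentiableWithinAt) (by
      intro y hy v w
      rw [(hθ y hy).fderiv]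
      have hs : IsSymmSndFDerivAt ℝ φ y := (h.contDiffAt hy).isSymmSndFDerivAt
        (by simp only [minSmoothness_of_isRCLikeNormedField]; exact two_le_top)
      have h1 := h.symp y hy v w
      have h2 := h.symp y hy w v
      have h3 := hs v w
      simp only [sub_apply, add_apply, ContinuousLinearMap.comp_apply,
        ContinuousLinearMap.compL_apply, ContinuousLinearMap.flip_apply, sympB_apply] at *
      rw [h1, h2, h3]
      ring)
  have hyc : Continuous y := continuous_iff_continuousAt.2 fun t => (hd t).continuousAt
  have hφc : Continuous fun t => φ (y t) := by
    refine continuous_iff_continuousAt.2 fun t => ?_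
    exact ContinuousAt.comp (h.contDiffAt (hy t)).continuousAt hyc.continuousAt
  have hDc : Continuous fun t => fderiv ℝ φ (y t) := by
    refine continuous_iff_continuousAt.2 fun t => ?_
    have := (h.contDiffAt (hy t)).fderiv_right (m := 1) (by norm_cast)
    exact ContinuousAt.comp this.continuousAt hyc.continuousAt
  have c1 : Continuous fun t => stdSymp 2 (φ (y t)) (fderiv ℝ φ (y t) (y' t)) := by
    have : Continuous fun t => sympB (φ (y t)) (fderiv ℝ φ (y t) (y' t)) :=
      (sympB.continuous.comp hφc).clm_apply (hDc.clm_apply hc)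
    exact this
  have c2 : Continuous fun t => stdSymp 2 (y t) (y' t) := by
    have : Continuous fun t => sympB (y t) (y' t) := (sympB.continuous.comp hyc).clm_apply hc
    exact this
  have key := intervalIntegral.integral_eq_sub_of_hasDerivAt (f := fun t => f (y t))
    (f' := fun t => stdSymp 2 (φ (y t)) (fderiv ℝ φ (y t) (y' t)) - stdSymp 2 (y t) (y' t))
    (a := 0) (b := 1) (fun t _ => (hf _ (hy t)).comp_hasDerivAt t (hd t))
    ((c1.sub c2).intervalIntegrable _ _)
  rw [h01, sub_self, intervalIntegral.integral_sub (c1.intervalIntegrable _ _)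
    (c2.intervalIntegrable _ _)] at key
  linarith

theorem SE.exists_equiv (h : SE a φ) {y : Fin 2 → ℂ} (hy : y ∈ UU a) :
    ∃ e : (Fin 2 → ℂ) ≃L[ℝ] (Fin 2 → ℂ), (e : (Fin 2 → ℂ) →L[ℝ] (Fin 2 → ℂ)) = fderiv ℝ φ y :=
  exists_equiv_of_symp _ (h.symp y hy)

theorem SE.image_mem_nhds (h : SE a φ) {y : Fin 2 → ℂ} (hy : y ∈ UU a) {N : Set (Fin 2 → ℂ)}
    (hN : N ∈ nhds y) : φ '' N ∈ nhds (φ y) := by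
  obtain ⟨e, he⟩ := h.exists_equiv hy
  have h1 : HasStrictFDerivAt φ (e : (Fin 2 → ℂ) →L[ℝ] (Fin 2 → ℂ)) y :=
    (h.contDiffAt hy).hasStrictFDerivAt' (he ▸ h.hasFDerivAt hy) (by simp)
  rw [← h1.map_nhds_eq_of_equiv]
  exact Filter.image_mem_map hN

/-- The cutoff function `sg ((r - r0) / w)` transported to the image of the embedding. -/
theorem SE.exists_cutoff (h : SE a φ) {r0 w : ℝ} (hw : 0 < w) (hr : r0 + w < 1) :
    ∃ S : (Fin 2 → ℂ) → ℝ, ContDiff ℝ 2 S ∧ (∀ y ∈ UU a, S (φ y) = sg ((rr a y - r0) / w)) ∧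
      (∀ z, z ∉ φ '' {y | rr a y ≤ r0 + w} → S z = 1) := by
  classical
  let S : (Fin 2 → ℂ) → ℝ := fun z =>
    if z ∈ φ '' UU a then sg ((rr a (Function.invFunOn φ (UU a) z) - r0) / w) else 1
  have hS1 : ∀ y ∈ UU a, S (φ y) = sg ((rr a y - r0) / w) := by
    intro y hy
    have : Function.invFunOn φ (UU a) (φ y) = y := h.inj.leftInvOn_invFunOn hy
    simp only [S, if_pos (mem_image_of_mem φ hy), this]
  have hS2 : ∀ z, z ∉ φ '' {y | rr a y ≤ r0 + w} → S z = 1 := by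
    intro z hz
    by_cases hzV : z ∈ φ '' UU a
    · obtain ⟨y, hy, rfl⟩ := hzV
      rw [hS1 y hy]
      refine sg_eq_one ?_
      rw [le_div_iff₀ hw]
      by_contra hcon
      exact hz ⟨y, by simp only [mem_ofPred_eq]; linarith, rfl⟩
    · simp only [S, if_neg hzV]
  refine ⟨S, ?_, hS1, hS2⟩
  rw [contDiff_iff_contDiffAt]
  intro z
  by_cases hzV : z ∈ φ '' UU a
  · obtain ⟨y, hy, rfl⟩ := hzV
    obtain ⟨e, he⟩ := h.exists_equiv hy
    have hfd : HasFDerivAt φ (e : (Fin 2 → ℂ) →L[ℝ] (Fin 2 → ℂ)) y := he ▸ h.hasFDerivAt hy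
    have h1 : HasStrictFDerivAt φ (e : (Fin 2 → ℂ) →L[ℝ] (Fin 2 → ℂ)) y :=
      (h.contDiffAt hy).hasStrictFDerivAt' hfd (by simp)
    have hsm := (h.contDiffAt hy).to_localInverse hfd (by simp)
    set χ := (h.contDiffAt hy).localInverse hfd (by simp) with hχ
    have hleft : ∀ᶠ x in nhds y, χ (φ x) = x := h1.eventually_left_inverse
    have hev : ∀ᶠ z in nhds (φ y), S z = sg ((rr a (χ z) - r0) / w) := by
      filter_upwards [h.image_mem_nhds hy (hleft.and ((isOpen_UU a).mem_nhds hy))]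
      rintro _ ⟨x, ⟨hx1, hx2⟩, rfl⟩
      rw [hS1 x hx2, hx1]
    refine ContDiffAt.congr_of_eventuallyEq ?_ hev
    have h3 : ContDiffAt ℝ 2 χ (φ y) := hsm.of_le (by exact two_le_top)
    refine contDiff_sg.contDiffAt.comp (φ y) ?_
    exact ((((contDiff_Qf _).contDiffAt).comp (φ y) h3).sub contDiffAt_const).div_const w
  · have hK : IsCompact (φ '' {y | rr a y ≤ r0 + w}) := by
      refine (isCompact_rr_le h.pos _).image_of_continuousOn
        (h.smooth.continuousOn.mono fun y hy => lt_of_le_of_lt hy hr)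
    have hz : z ∈ (φ '' {y | rr a y ≤ r0 + w})ᶜ := by
      rintro ⟨y, hy, rfl⟩
      exact hzV ⟨y, lt_of_le_of_lt hy hr, rfl⟩
    refine (contDiffAt_const (c := (1 : ℝ))).congr_of_eventuallyEq ?_
    filter_upwards [hK.isClosed.isOpen_compl.mem_nhds hz] with x hx
    exact hS2 x hx

/-- A symplectic map intertwines Hamiltonian vector fields. -/
theorem SE.push_field (h : SE a φ) {F : (Fin 2 → ℂ) → ℝ} (hF : Differentiable ℝ F)
    {y : Fin 2 → ℂ} (hy : y ∈ UU a) {ω : ℝ}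
    (hω : HasFDerivAt (fun x => F (φ x)) (ω • fderiv ℝ (rr a) y) y) :
    fderiv ℝ φ y (fun i => Complex.I * (ω * gradE (rr a) y i)) =
      fun i => Complex.I * gradE F (φ y) i := by
  obtain ⟨e, he⟩ := h.exists_equiv hy
  refine stdSymp_nondeg fun w => ?_
  obtain ⟨v, rfl⟩ := e.surjective w
  have hev : e v = fderiv ℝ φ y v := by rw [← he]; rfl
  have h1 : fderiv ℝ F (φ y) (fderiv ℝ φ y v) = ω * fderiv ℝ (rr a) y v := by
    have := (hF.differentiableAt.hasFDerivAt.comp y (h.hasFDerivAt hy)).unique hω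
    simpa using congrArg (fun L => L v) this
  rw [hev, h.symp y hy, stdSymp_I_mul, stdSymp_I_mul, ip_gradE, h1, ← ip_gradE]
  simp [ip, Fin.sum_univ_two]
  ring

end SEfacts

/-! ### Periodic orbits of the Hamiltonians adapted to an embedding -/

theorem isCompact_Qf_le {s : Fin 2 → ℝ} (hs : ∀ i, 0 < s i) (c : ℝ) :
    IsCompact {z | Qf s z ≤ c} := by
  refine Metric.isCompact_of_isClosed_isBounded
    (isClosed_le (contDiff_Qf (n := 0) s).continuous continuous_const) ?_
  refine (Metric.isBounded_closedBall (x := (0 : Fin 2 → ℂ))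
    (r := |c| / (π * s 0) + |c| / (π * s 1) + 1)).subset ?_
  intro z hz
  rw [mem_closedBall_zero_iff]
  have h0 := hs 0
  have h1 := hs 1
  have hz' : Qf s z ≤ c := hz
  have key : ∀ i, ‖z i‖ ^ 2 ≤ |c| / (π * s i) := by
    intro i
    rw [le_div_iff₀ (mul_pos Real.pi_pos (hs i))]
    have := Finset.single_le_sum (f := fun i => s i * (π * ‖z i‖ ^ 2))
      (fun i _ => mul_nonneg (hs i).le (by positivity)) (Finset.mem_univ i)
    have h2 : s i * (π * ‖z i‖ ^ 2) ≤ c := this.trans hz'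
    nlinarith [le_abs_self c]
  have e0 : 0 ≤ |c| / (π * s 0) := by positivity
  have e1 : 0 ≤ |c| / (π * s 1) := by positivity
  rw [pi_norm_le_iff_of_nonneg (by positivity)]
  intro i
  have := key i
  have h5 : ‖z i‖ ^ 2 ≤ |c| / (π * s 0) + |c| / (π * s 1) := by
    fin_cases i
    · exact this.trans (by simpa using e1)
    · exact this.trans (by simpa using e0)
  nlinarith [norm_nonneg (z i)]

/-- The flow of the Hamiltonian `ω • rr a`. -/
def rot (a ω t : ℝ) (y : Fin 2 → ℂ) : Fin 2 → ℂ := fun i =>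
  y i * Complex.exp ((2 * π * (ω * (![1 / a, 1 / (2 * a)] : Fin 2 → ℝ) i) * t : ℝ) * Complex.I)

theorem rot_zero (a ω : ℝ) (y : Fin 2 → ℂ) : rot a ω 0 y = y := by
  ext i; simp [rot]

theorem norm_rot (a ω t : ℝ) (y : Fin 2 → ℂ) (i : Fin 2) : ‖rot a ω t y i‖ = ‖y i‖ := by
  rw [rot, norm_mul, Complex.norm_exp_ofReal_mul_I, mul_one]

theorem rr_rot (a ω t : ℝ) (y : Fin 2 → ℂ) : rr a (rot a ω t y) = rr a y := by
  simp only [rr_eq, norm_rot]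

theorem gradE_rr (a : ℝ) (y : Fin 2 → ℂ) (i : Fin 2) :
    gradE (rr a) y i = 2 * π * (![1 / a, 1 / (2 * a)] : Fin 2 → ℝ) i * y i := gradE_Qf _ _ _

theorem hasDerivAt_rot (a ω t0 t : ℝ) (y : Fin 2 → ℂ) :
    HasDerivAt (fun t => rot a ω (t - t0) y)
      (fun i => Complex.I * (ω * gradE (rr a) (rot a ω (t - t0) y) i)) t := by
  rw [hasDerivAt_pi]
  intro i
  rw [gradE_rr]
  generalize hc : (![1 / a, 1 / (2 * a)] : Fin 2 → ℝ) i = c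
  simp only [rot, hc]
  have h1 : HasDerivAt (fun t : ℝ => (((2 * π * (ω * c) * (t - t0) : ℝ) : ℂ) * Complex.I))
      ((2 * π * (ω * c) : ℝ) * Complex.I) t := by
    have h0 : HasDerivAt (fun t : ℝ => 2 * π * (ω * c) * (t - t0)) (2 * π * (ω * c)) t := by
      simpa using ((hasDerivAt_id t).sub_const t0).const_mul (2 * π * (ω * c))
    exact h0.ofReal_comp.mul_const Complex.I
  have h2 := h1.cexp.const_mul (y i)
  convert! h2 using 1
  push_cast
  ring

/-- The Hamiltonians `m • S + psi (Q - u0)`, where `S` is the cutoff transported by the embedding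
`φ` of the ellipsoid, together with the constraints on the parameters. -/
structure Cut (s : Fin 2 → ℝ) (a : ℝ) (φ : (Fin 2 → ℂ) → (Fin 2 → ℂ)) (u0 r0 w : ℝ)
    (S : (Fin 2 → ℂ) → ℝ) : Prop where
  se : SE a φ
  spos : ∀ i, 0 < s i
  u0pos : 0 < u0
  r0pos : 0 < r0
  wpos : 0 < w
  lt_one : r0 + w < 1
  hQ : ∀ y ∈ UU a, Qf s (φ y) < u0
  smooth : ContDiff ℝ 2 S
  inner : ∀ y ∈ UU a, S (φ y) = sg ((rr a y - r0) / w)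
  outer : ∀ z, z ∉ φ '' {y | rr a y ≤ r0 + w} → S z = 1

section Orbits

variable {s : Fin 2 → ℝ} {a : ℝ} {φ : (Fin 2 → ℂ) → (Fin 2 → ℂ)} {u0 r0 w : ℝ}
  {S : (Fin 2 → ℂ) → ℝ}

/-- The Hamiltonian function. -/
def FF (s : Fin 2 → ℝ) (u0 : ℝ) (S : (Fin 2 → ℂ) → ℝ) (m : ℝ) (z : Fin 2 → ℂ) : ℝ :=
  m * S z + psi (Qf s z - u0)

theorem Cut.contDiff_FF (h : Cut s a φ u0 r0 w S) (m : ℝ) : ContDiff ℝ 2 (FF s u0 S m) :=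
  (contDiff_const.mul h.smooth).add (contDiff_psi.comp ((contDiff_Qf s).sub contDiff_const))

theorem Cut.hasFDerivAt_FF (h : Cut s a φ u0 r0 w S) (m : ℝ) (z : Fin 2 → ℂ) :
    HasFDerivAt (FF s u0 S m) (m • fderiv ℝ S z + sg (Qf s z - u0) • fderiv ℝ (Qf s) z) z := by
  have h1 : HasFDerivAt S (fderiv ℝ S z) z :=
    (h.smooth.differentiable (by norm_num)).differentiableAt.hasFDerivAt
  have h2 : HasFDerivAt (Qf s) (fderiv ℝ (Qf s) z) z :=
    ((contDiff_Qf s (n := 1)).differentiable (by norm_num)).differentiableAt.hasFDerivAt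
  exact (h1.const_mul m).add ((hasDerivAt_psi _).comp_hasFDerivAt z (h2.sub_const u0))

theorem Cut.isCompact_image (h : Cut s a φ u0 r0 w S) :
    IsCompact (φ '' {y | rr a y ≤ r0 + w}) :=
  (isCompact_rr_le h.se.pos _).image_of_continuousOn
    (h.se.smooth.continuousOn.mono fun _ hy => lt_of_le_of_lt hy h.lt_one)

theorem Cut.compact (h : Cut s a φ u0 r0 w S) (m : ℝ) :
    HasCompactSupport (fderiv ℝ (fun z => FF s u0 S m z - Qf s z)) := by
  refine HasCompactSupport.intro (h.isCompact_image.union (isCompact_Qf_le h.spos (u0 + 1))) ?_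
  intro z hz
  rw [mem_union, not_or] at hz
  have h2 : HasFDerivAt (Qf s) (fderiv ℝ (Qf s) z) z :=
    ((contDiff_Qf s (n := 1)).differentiable (by norm_num)).differentiableAt.hasFDerivAt
  have hS : fderiv ℝ S z = 0 := by
    have : S =ᶠ[nhds z] fun _ => 1 := by
      filter_upwards [h.isCompact_image.isClosed.isOpen_compl.mem_nhds hz.1] with x hx
      exact h.outer x hx
    rw [this.fderiv_eq, fderiv_fun_const]
    rfl
  have hz2 : u0 + 1 < Qf s z := not_le.1 hz.2
  rw [((h.hasFDerivAt_FF m z).fun_sub h2).fderiv, hS, sg_eq_one (by linarith)]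
  simp

/-- The Hamiltonian as an element of `Ham s`. -/
def Cut.ham (h : Cut s a φ u0 r0 w S) (m : ℝ) : Ham s :=
  hamOf s (FF s u0 S m) (h.contDiff_FF m) (h.compact m)

theorem Cut.S_mem (h : Cut s a φ u0 r0 w S) (z : Fin 2 → ℂ) : 0 ≤ S z ∧ S z ≤ 1 := by
  by_cases hz : z ∈ φ '' {y | rr a y ≤ r0 + w}
  · obtain ⟨y, hy, rfl⟩ := hz
    rw [h.inner y (lt_of_le_of_lt hy h.lt_one)]
    exact ⟨sg_nonneg _, sg_le_one _⟩
  · rw [h.outer z hz]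
    norm_num

theorem ip_gradE_Qf (s : Fin 2 → ℝ) (z : Fin 2 → ℂ) : fderiv ℝ (Qf s) z z = 2 * Qf s z := by
  rw [fderiv_Qf, Qf_eq]
  simp [Fin.sum_univ_two]
  ring

/-- Away from the transition region the action density is nonpositive. -/
theorem Cut.density (h : Cut s a φ u0 r0 w S) {m : ℝ} (hm : u0 + 1 ≤ m) (z : Fin 2 → ℂ)
    (hz : ¬ ∃ y, r0 < rr a y ∧ rr a y < r0 + w ∧ z = φ y) :
    ip (gradE (FF s u0 S m) z) z / 2 - FF s u0 S m z ≤ 0 := by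
  have hm0 : 0 ≤ m := by linarith [h.u0pos]
  have hS1 : ∀ z, S z = 1 → ip (gradE (FF s u0 S m) z) z / 2 - FF s u0 S m z ≤ 0 := by
    intro z hz
    have hmax : IsLocalMax S z := Filter.Eventually.of_forall fun x => by
      rw [hz]; exact (h.S_mem x).2
    rw [ip_gradE, (h.hasFDerivAt_FF m z).fderiv, hmax.fderiv_eq_zero]
    simp only [smul_zero, zero_add, smul_apply, smul_eq_mul, ip_gradE_Qf, FF, hz]
    have h1 := psi_action (Qf s z - u0)
    have h2 := sg_le_one (Qf s z - u0)
    have h3 := sg_nonneg (Qf s z - u0)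
    nlinarith [h.u0pos]
  by_cases hzK : z ∈ φ '' {y | rr a y ≤ r0 + w}
  · obtain ⟨y, hy, rfl⟩ := hzK
    have hyU : y ∈ UU a := lt_of_le_of_lt hy h.lt_one
    by_cases hyr : rr a y ≤ r0
    · have h0 : FF s u0 S m (φ y) = 0 := by
        have hq := h.hQ y hyU
        rw [FF, h.inner y hyU, sg_eq_zero, psi_eq_zero (by linarith)]
        · ring
        · exact div_nonpos_of_nonpos_of_nonneg (by linarith) h.wpos.le
      have hmin : IsLocalMin (FF s u0 S m) (φ y) := Filter.Eventually.of_forall fun x => by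
        rw [h0]
        exact add_nonneg (mul_nonneg hm0 (h.S_mem x).1) (psi_nonneg _)
      rw [ip_gradE, hmin.fderiv_eq_zero, h0]
      simp
    · have hy' : rr a y = r0 + w := by
        refine le_antisymm hy ?_
        by_contra hc
        exact hz ⟨y, not_le.1 hyr, not_le.1 hc, rfl⟩
      refine hS1 _ ?_
      rw [h.inner y hyU, hy', add_sub_cancel_left, div_self h.wpos.ne']
      exact sg_eq_one le_rfl
  · exact hS1 z (h.outer z hzK)

theorem sgd_pos {x : ℝ} (h0 : 0 < x) (h1 : x < 1) : 0 < sgd x := by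
  rw [sgd_eq h0.le h1.le]
  have : 0 < x * (1 - x) := mul_pos h0 (by linarith)
  positivity

/-- Periodic orbits of positive action are images of periodic orbits of the ellipsoid. -/
theorem Cut.classify (h : Cut s a φ u0 r0 w S) {m : ℝ} (hm : u0 + 1 ≤ m)
    {u : ℝ → Fin 2 → ℂ} (hu : IsSol (h.ham m) u) (hpos : 0 < actionSol (h.ham m) u) :
    ∃ (y : Fin 2 → ℂ) (t0 : ℝ) (k : ℕ), r0 < rr a y ∧ rr a y < r0 + w ∧ 1 ≤ k ∧
      m * (sgd ((rr a y - r0) / w) / w) = k * a ∧ (k = 1 → y 1 = 0) ∧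
      (∀ t, u t = φ (rot a (k * a) (t - t0) y)) ∧
      actionSol (h.ham m) u = k * a * rr a y - m * sg ((rr a y - r0) / w) := by
  have ha := h.se.pos
  have hm0 : 0 < m := by linarith [h.u0pos]
  have hg : ∀ z, (h.ham m).g z = gradE (FF s u0 S m) z := fun z => rfl
  have hH : ∀ z, (h.ham m).H z = FF s u0 S m z := fun z => rfl
  have hgc : Continuous (h.ham m).g := (h.ham m).smooth.continuous
  have hHc : Continuous (h.ham m).H := (h.ham m).cont
  have huc := hu.continuous
  have c1 : Continuous fun t => ip ((h.ham m).g (u t)) (u t) := by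
    have := hgc.comp huc
    simp only [ip]
    fun_prop
  have c2 : Continuous fun t => (h.ham m).H (u t) := hHc.comp huc
  have hex : ∃ t0 y, r0 < rr a y ∧ rr a y < r0 + w ∧ u t0 = φ y := by
    by_contra hcon
    have hle : actionSol (h.ham m) u ≤ 0 := by
      rw [actionSol, ← intervalIntegral.integral_div, ← intervalIntegral.integral_sub
        ((c1.div_const 2).intervalIntegrable _ _) (c2.intervalIntegrable _ _)]
      rw [← neg_nonneg, ← intervalIntegral.integral_neg]
      refine intervalIntegral.integral_nonneg (by norm_num) fun t _ => ?_
      rw [neg_nonneg]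
      exact h.density hm (u t) fun ⟨y, h1, h2, h3⟩ => hcon ⟨t, y, h1, h2, h3⟩
    linarith
  obtain ⟨t0, y, hy0, hy1, hty⟩ := hex
  set x := (rr a y - r0) / w with hx
  have hx0 : 0 < x := div_pos (by linarith) h.wpos
  have hx1 : x < 1 := by rw [hx, div_lt_one h.wpos]; linarith
  set ω := m * (sgd x / w) with hω
  have hω0 : 0 < ω := mul_pos hm0 (div_pos (sgd_pos hx0 hx1) h.wpos)
  have hyU : y ∈ UU a := by have := h.lt_one; exact hy1.trans this
  have hFφ : ∀ y' ∈ UU a, FF s u0 S m (φ y') = m * sg ((rr a y' - r0) / w) := by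
    intro y' hy'
    rw [FF, h.inner y' hy', psi_eq_zero (by linarith [h.hQ y' hy']), add_zero]
  have hrotU : ∀ t, rot a ω (t - t0) y ∈ UU a := fun t => by
    change rr a _ < 1
    rw [rr_rot]; exact hyU
  have hfield : ∀ t, HasDerivAt (fun t => φ (rot a ω (t - t0) y))
      (fun i => Complex.I * gradE (FF s u0 S m) (φ (rot a ω (t - t0) y)) i) t := by
    intro t
    rw [← h.se.push_field (F := FF s u0 S m) ((h.contDiff_FF m).differentiable (by norm_num))
      (hrotU t) (ω := ω)]
    · exact (h.se.hasFDerivAt (hrotU t)).comp_hasDerivAt t (hasDerivAt_rot a ω t0 t y)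
    · have hev : (fun x => FF s u0 S m (φ x)) =ᶠ[nhds (rot a ω (t - t0) y)]
          fun y' => m * sg ((rr a y' - r0) / w) := by
        filter_upwards [(isOpen_UU a).mem_nhds (hrotU t)] with y' hy'
        exact hFφ y' hy'
      refine HasFDerivAt.congr_of_eventuallyEq ?_ hev
      have h2 : HasFDerivAt (rr a) (fderiv ℝ (rr a) (rot a ω (t - t0) y)) (rot a ω (t - t0) y) :=
        ((contDiff_Qf _ (n := 1)).differentiable (by norm_num)).differentiableAt.hasFDerivAt
      have h3 : HasFDerivAt (fun y' => (rr a y' - r0) / w)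
          (w⁻¹ • fderiv ℝ (rr a) (rot a ω (t - t0) y)) (rot a ω (t - t0) y) := by
        have := (h2.sub_const r0).mul_const w⁻¹
        simpa [div_eq_mul_inv] using this
      have h4 := ((hasDerivAt_sg _).comp_hasFDerivAt _ h3).const_mul m
      refine h4.congr_fderiv ?_
      rw [rr_rot, ← hx, smul_smul, smul_smul, hω]
      congr 1
      ring
  have huni : u = fun t => φ (rot a ω (t - t0) y) := by
    obtain ⟨K, hK⟩ := lipschitz_gradE (h.contDiff_FF m) (h.compact m)
    refine ODE_solution_unique_univ (v := fun _ z i => Complex.I * gradE (FF s u0 S m) z i)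
      (s := fun _ => univ) (K := K) (t₀ := t0) (fun t => hK.lipschitzOnWith)
      (fun t => ⟨hu.1 t, mem_univ _⟩) (fun t => ⟨hfield t, mem_univ _⟩) ?_
    rw [hty, sub_self, rot_zero]
  -- periodicity quantises the rotation number
  have hper : rot a ω 1 y = y := by
    have h1 : φ (rot a ω (t0 + 1 - t0) y) = φ (rot a ω (t0 - t0) y) := by
      have := hu.2 t0
      rwa [huni] at this
    have h2 := h.se.inj (hrotU (t0 + 1)) (hrotU t0) h1
    rwa [add_sub_cancel_left, sub_self, rot_zero] at h2
  have hquant : ∀ i, y i ≠ 0 → ∃ n : ℤ, ω * (![1 / a, 1 / (2 * a)] : Fin 2 → ℝ) i = n := by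
    intro i hi
    have h1 : y i * Complex.exp ((2 * π * (ω * (![1 / a, 1 / (2 * a)] : Fin 2 → ℝ) i) * 1 : ℝ) *
      Complex.I) = y i := congrFun hper i
    have h2 := mul_left_cancel₀ hi (h1.trans (mul_one _).symm)
    obtain ⟨n, hn⟩ := Complex.exp_eq_one_iff.1 h2
    refine ⟨n, ?_⟩
    have h3 := congrArg Complex.im hn
    simp at h3
    have hpi := Real.pi_pos
    have h4 : 2 * π * (ω * (![1 / a, 1 / (2 * a)] : Fin 2 → ℝ) i - n) = 0 := by
      simp only [one_div, mul_inv_rev]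
      linarith
    rcases mul_eq_zero.1 h4 with h5 | h5
    · exact absurd h5 (by positivity)
    · linarith
  have hq0 : y 0 ≠ 0 → ∃ n : ℤ, ω = n * a := by
    intro h0
    obtain ⟨n, hn⟩ := hquant 0 h0
    refine ⟨n, ?_⟩
    rw [← hn]
    simp
    field_simp
  have hq1 : y 1 ≠ 0 → ∃ n : ℤ, ω = (2 * n : ℤ) * a := by
    intro h0
    obtain ⟨n, hn⟩ := hquant 1 h0
    refine ⟨n, ?_⟩
    push_cast
    rw [← hn]
    simp
    field_simp
  have hn : ∃ n : ℤ, ω = n * a := by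
    by_cases h1 : y 1 = 0
    · by_cases h0 : y 0 = 0
      · exfalso
        have h0' := h.r0pos
        have : rr a y = 0 := by rw [rr_eq, h0, h1]; simp
        linarith
      · exact hq0 h0
    · obtain ⟨n, hn⟩ := hq1 h1
      exact ⟨2 * n, hn⟩
  obtain ⟨n, hn⟩ := hn
  have hn0 : 0 < n := by
    have : (0 : ℝ) < n := by
      by_contra hcon
      nlinarith
    exact_mod_cast this
  obtain ⟨k, rfl⟩ : ∃ k : ℕ, n = k := ⟨n.toNat, by omega⟩
  rw [Int.cast_natCast] at hn
  refine ⟨y, t0, k, hy0, hy1, by omega, hn, ?_, ?_, ?_⟩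
  · rintro rfl
    by_contra h1
    obtain ⟨n', hn'⟩ := hq1 h1
    have h2 : (((2 * n' : ℤ) : ℝ) - 1) * a = 0 := by rw [sub_mul, ← hn', hn]; simp
    rcases mul_eq_zero.1 h2 with h3 | h3
    · have h4 : (2 * n' : ℤ) = 1 := by
        have : ((2 * n' : ℤ) : ℝ) = 1 := by linarith
        exact_mod_cast this
      omega
    · exact ha.ne' h3
  · intro t
    rw [huni, ← hn]
  · rw [← hn]
    have e1 : ∫ t in (0 : ℝ)..1, (h.ham m).H (u t) = m * sg x := by
      have : ∀ t, (h.ham m).H (u t) = m * sg x := by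
        intro t
        rw [hH, huni, hFφ _ (hrotU t), rr_rot]
      simp [this]
    have hcont : Continuous fun t => (fun i => Complex.I * (ω * gradE (rr a) (rot a ω (t - t0) y) i) :
        Fin 2 → ℂ) := by
      simp only [gradE_rr, rot]
      fun_prop
    have e2 := h.se.action (y := fun t => rot a ω (t - t0) y) hrotU
      (fun t => hasDerivAt_rot a ω t0 t y) hcont (by
        ext i
        have := congrFun hper i
        have h3 : rot a ω (1 - t0) y i = rot a ω 1 y i * Complex.exp
            ((2 * π * (ω * (![1 / a, 1 / (2 * a)] : Fin 2 → ℝ) i) * (0 - t0) : ℝ) * Complex.I) := by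
          simp only [rot]
          rw [mul_assoc (y i), ← Complex.exp_add]
          congr 2
          push_cast
          ring
        rw [h3, this]
        rfl)
    have e3 : ∫ t in (0 : ℝ)..1, ip ((h.ham m).g (u t)) (u t) = 2 * (ω * rr a y) := by
      have e4 : ∀ t, ip ((h.ham m).g (u t)) (u t) = stdSymp 2 (φ (rot a ω (t - t0) y))
          (fderiv ℝ φ (rot a ω (t - t0) y)
            (fun i => Complex.I * (ω * gradE (rr a) (rot a ω (t - t0) y) i))) := by
        intro t
        have h1 : HasDerivAt u (fderiv ℝ φ (rot a ω (t - t0) y)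
            (fun i => Complex.I * (ω * gradE (rr a) (rot a ω (t - t0) y) i))) t := by
          rw [huni]
          exact (h.se.hasFDerivAt (hrotU t)).comp_hasDerivAt t (hasDerivAt_rot a ω t0 t y)
        rw [h1.unique (hu.1 t), stdSymp_anti, stdSymp_I_mul, neg_neg]
        rw [huni]
      simp only [e4]
      rw [e2]
      have e5 : ∀ t, stdSymp 2 (rot a ω (t - t0) y)
          (fun i => Complex.I * (ω * gradE (rr a) (rot a ω (t - t0) y) i)) =
          2 * (ω * rr a y) := by
        intro t
        rw [stdSymp_anti, stdSymp_I_mul, neg_neg, ← rr_rot a ω (t - t0) y]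
        generalize rot a ω (t - t0) y = z
        have := ip_gradE_Qf ![1 / a, 1 / (2 * a)] z
        rw [← ip_gradE] at this
        have h6 : ip (fun i => ω * gradE (rr a) z i) z = ω * ip (gradE (rr a) z) z := by
          simp [ip, Fin.sum_univ_two]; ring
        rw [h6]
        change ω * ip (gradE (Qf ![1 / a, 1 / (2 * a)]) z) z = 2 * (ω * Qf ![1 / a, 1 / (2 * a)] z)
        rw [this]
        ring
      simp [e5]
    rw [actionSol, e1, e3]
    ring

end Orbits

/-! ### Rigidity of ellipsoid embeddings -/

theorem norm_fc_shift (f : ℝ → ℂ) (hp : Function.Periodic f 1) (τ : ℝ) (k : ℤ) :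
    ‖fc (fun t => f (t + τ)) k‖ = ‖fc f k‖ := by
  have h1 : fc (fun t => f (t + τ)) k = ee k τ * fc f k := by
    have hper : Function.Periodic (fun t => ee (-k) t * f t) 1 := fun t => by
      simp only [ee_periodic (-k) t, hp t]
    have h2 : ∀ t, ee (-k) t * f (t + τ) = ee k τ * (ee (-k) (t + τ) * f (t + τ)) := by
      intro t
      rw [ee_add, ← mul_assoc, ← mul_assoc, mul_comm (ee k τ), mul_assoc (ee (-k) t),
        ← ee_add_left]
      simp
    simp only [fc]
    simp_rw [h2]
    rw [intervalIntegral.integral_const_mul,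
      intervalIntegral.integral_comp_add_right (fun t => ee (-k) t * f t)]
    congr 1
    have h3 := hper.intervalIntegral_add_eq τ 0
    simpa [add_comm] using h3
  rw [h1, norm_mul, norm_ee, one_mul]

theorem rot_zero_coord {a : ℝ} (ha : 0 < a) (t : ℝ) (y : Fin 2 → ℂ) :
    rot a ((1 : ℕ) * a) t y 0 = y 0 * ee 1 t := by
  simp only [rot, ee, Matrix.cons_val_zero]
  congr 2
  have : ((1 : ℕ) : ℝ) * a * (1 / a) = 1 := by simp; field_simp
  rw [this]
  push_cast
  ring

theorem rot_one_coord {a ω : ℝ} (t : ℝ) {y : Fin 2 → ℂ} (hy : y 1 = 0) :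
    rot a ω t y 1 = 0 := by
  simp [rot, hy]

section Values

variable {s : Fin 2 → ℝ} {a : ℝ} {φ : (Fin 2 → ℂ) → (Fin 2 → ℂ)} {u0 r0 w : ℝ}
  {S : (Fin 2 → ℂ) → ℝ}

/-- Action values: an orbit of multiplicity `k` sits either on the convex or on the concave part of
the profile. -/
theorem Cut.values (h : Cut s a φ u0 r0 w S) {m r A : ℝ} {k : ℕ} (hm : 0 ≤ m) (hr0 : r0 < r)
    (hr1 : r < r0 + w) (hk : 1 ≤ k) (hω : m * (sgd ((r - r0) / w) / w) = k * a)
    (hA : A = k * a * r - m * sg ((r - r0) / w)) :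
    ((r - r0) / w ≤ 1 / 2 ∧ k * a * r0 ≤ A ∧ A < k * a) ∨ (k * a * r0 - m ≤ A ∧ A < k * a - m) := by
  have ha := h.se.pos
  have hw := h.wpos
  have hlt := h.lt_one
  have hka : 0 < (k : ℝ) * a := by
    have : (1 : ℝ) ≤ k := by exact_mod_cast hk
    positivity
  set x := (r - r0) / w with hx
  have hxw : x * w = r - r0 := by rw [hx]; field_simp
  have hx0 : 0 < x := div_pos (by linarith) hw
  have hx1 : x < 1 := by rw [hx, div_lt_one hw]; linarith
  have hω' : m * sgd x = k * a * w := by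
    rw [← hω]; field_simp
  have hs0 := mul_nonneg hm (sg_nonneg x)
  have hs1 := mul_le_mul_of_nonneg_left (sg_le_one x) hm
  rcases le_total x (1 / 2) with hle | hle
  · left
    have h1 := mul_le_mul_of_nonneg_left (sg_lower hx0.le hle) hm
    have h2 : m * (sgd x * x) = k * a * (r - r0) := by rw [← mul_assoc, hω', mul_assoc, mul_comm w,
      hxw]
    refine ⟨hle, ?_, ?_⟩
    · rw [hA]; nlinarith
    · rw [hA]; nlinarith
  · right
    have h1 := mul_le_mul_of_nonneg_left (sg_upper hle hx1.le) hm
    have h2 : m * (sgd x * (1 - x)) = k * a * (w - (r - r0)) := by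
      rw [← mul_assoc, hω', ← hxw]; ring
    constructor
    · rw [hA]; nlinarith
    · rw [hA]; nlinarith

end Values

/-- If the open ellipsoid with axes `a, 2a` embeds symplectically in `E(b)`, then the second
smallest value of `m bᵢ` is at least `2a`. -/
theorem rigidity {a : ℝ} {φ : (Fin 2 → ℂ) → (Fin 2 → ℂ)} (h : SE a φ) {b : Fin 2 → ℝ}
    (hb : ∀ i, 0 < b i) (himg : ∀ y ∈ UU a, φ y ∈ ellipsoid b) (q1 q2 : ℕ × Fin 2) (hq : q1 ≠ q2)
    {l0 : ℝ} (hq1 : ((q1.1 : ℝ) + 1) * b q1.2 ≤ l0) (hq2 : ((q2.1 : ℝ) + 1) * b q2.2 ≤ l0) :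
    2 * a ≤ l0 := by
  by_contra hcon
  push Not at hcon
  have ha := h.pos
  -- a slightly larger non-resonant energy
  obtain ⟨l, hl, hres⟩ : ∃ l ∈ Ioo l0 (2 * a), ∀ i, ∀ k : ℤ, l ≠ k * b i := by
    have hc : (⋃ i : Fin 2, range fun k : ℤ => (k : ℝ) * b i).Countable :=
      countable_iUnion fun i => countable_range _
    obtain ⟨l, hl1, hl2⟩ := (hc.dense_compl ℝ).exists_between hcon
    refine ⟨l, hl2, fun i k hk => hl1 ?_⟩
    exact mem_iUnion.2 ⟨i, k, hk.symm⟩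
  have hl0 : 0 < l0 := lt_of_lt_of_le (mul_pos (by positivity) (hb q1.2)) hq1
  have hlpos : 0 < l := hl0.trans hl.1
  set s : Fin 2 → ℝ := fun i => l / b i with hs
  have hspos : ∀ i, 0 < s i := fun i => div_pos hlpos (hb i)
  have hsres : ∀ i, ∀ k : ℤ, s i ≠ k := by
    intro i k hk
    apply hres i k
    rw [← hk, hs]
    have := (hb i).ne'
    field_simp
  have hQl : ∀ y ∈ UU a, Qf s (φ y) ≤ l := by
    intro y hy
    have h1 : ∑ i, π * ‖φ y i‖ ^ 2 / b i ≤ 1 := himg y hy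
    have h2 : Qf s (φ y) = l * ∑ i, π * ‖φ y i‖ ^ 2 / b i := by
      simp only [Qf, hs, Finset.mul_sum]
      refine Finset.sum_congr rfl fun i _ => by ring
    rw [h2]
    nlinarith
  set u0 := l + 1 with hu0
  obtain ⟨K, hK⟩ := exists_nat_ge ((u0 + 1) / a + 1)
  have hKa : u0 + 1 ≤ (K - 1) * a := by
    have : (u0 + 1) / a ≤ K - 1 := by linarith
    rwa [div_le_iff₀ ha] at this
  have hK1 : (1 : ℝ) < K := by
    by_contra hc
    nlinarith
  set e := min (1 / 8) ((2 * a - l) / (4 * a)) with he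
  have he0 : 0 < e := lt_min (by norm_num) (div_pos (by linarith [hl.2]) (by positivity))
  have he1 : e ≤ 1 / 8 := min_le_left _ _
  have he2 : e * a ≤ (2 * a - l) / 4 := by
    have h1 : e ≤ (2 * a - l) / (4 * a) := min_le_right _ _
    rw [le_div_iff₀ (by positivity)] at h1
    linarith
  set d := e / (K + 1) with hd
  have hd0 : 0 < d := div_pos he0 (by linarith)
  have hdK : (K + 1) * d = e := by rw [hd]; field_simp
  have hde : 2 * d ≤ e := by nlinarith
  set r0 := 1 - d with hr0
  set w := d / 2 with hw
  have hw0 : 0 < w := by positivity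
  obtain ⟨S, hS1, hS2, hS3⟩ := h.exists_cutoff (r0 := r0) hw0 (by linarith)
  have hcut : Cut s a φ u0 r0 w S :=
    { se := h, spos := hspos, u0pos := by linarith, r0pos := by linarith, wpos := hw0
      lt_one := by linarith, hQ := fun y hy => by linarith [hQl y hy], smooth := hS1
      inner := hS2, outer := hS3 }
  have hed : e * a ≤ a / 8 := by nlinarith
  have hm1 : u0 + 1 ≤ K * a := by linarith
  have hm2 : u0 + 1 ≤ (K - 1 / 2) * a := by linarith
  -- bounds on multiples of `a * r0`
  have hr1 : ∀ k : ℕ, 1 ≤ k → a - e * a ≤ k * a * r0 := by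
    intro k hk
    have : (1 : ℝ) ≤ k := by exact_mod_cast hk
    have h1 : a * r0 ≤ k * (a * r0) := le_mul_of_one_le_left (by
      have := hcut.r0pos
      positivity) this
    have h2 : a * r0 = a - a * d := by rw [hr0]; ring
    nlinarith
  have hr2 : ∀ k : ℕ, 2 ≤ k → 2 * a - e * a ≤ k * a * r0 := by
    intro k hk
    have : (2 : ℝ) ≤ k := by exact_mod_cast hk
    have h1 : 2 * (a * r0) ≤ k * (a * r0) := mul_le_mul_of_nonneg_right this (by
      have := hcut.r0pos
      positivity)
    have h2 : a * r0 = a - a * d := by rw [hr0]; ring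
    nlinarith
  have hrK : ∀ k : ℕ, K + 1 ≤ k → (K + 1) * a - e * a ≤ k * a * r0 := by
    intro k hk
    have : (K + 1 : ℝ) ≤ k := by exact_mod_cast hk
    have h1 : (K + 1) * (a * r0) ≤ k * (a * r0) := mul_le_mul_of_nonneg_right this (by
      have := hcut.r0pos
      positivity)
    have h2 : (K + 1) * (a * r0) = (K + 1) * a - ((K + 1) * d) * a := by rw [hr0]; ring
    rw [hdK] at h2
    linarith
  have hleK : ∀ k : ℕ, k ≤ K → (k : ℝ) * a ≤ K * a := by
    intro k hk
    have : (k : ℝ) ≤ K := by exact_mod_cast hk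
    gcongr
  -- orbits of the middle Hamiltonian in the action window
  have hmid : ∀ u, IsSol (hcut.ham ((K - 1 / 2) * a)) u →
      actionSol (hcut.ham ((K - 1 / 2) * a)) u ∈ Icc (3 / 4 * a) (5 / 4 * a) →
      ∃ (y : Fin 2 → ℂ) (t0 : ℝ), r0 < rr a y ∧ rr a y < r0 + w ∧ (rr a y - r0) / w ≤ 1 / 2 ∧
        (K - 1 / 2) * a * (sgd ((rr a y - r0) / w) / w) = a ∧ y 1 = 0 ∧
        (∀ t, u t = φ (rot a ((1 : ℕ) * a) (t - t0) y)) ∧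
        actionSol (hcut.ham ((K - 1 / 2) * a)) u =
          a * rr a y - (K - 1 / 2) * a * sg ((rr a y - r0) / w) ∧
        3 / 4 * a < actionSol (hcut.ham ((K - 1 / 2) * a)) u ∧
        actionSol (hcut.ham ((K - 1 / 2) * a)) u < 5 / 4 * a := by
    intro u hu hA
    obtain ⟨y, t0, k, hy0, hy1, hk, hω, hk1, hut, hact⟩ :=
      hcut.classify hm2 hu (by linarith [hA.1])
    rcases hcut.values (by linarith) hy0 hy1 hk hω hact with ⟨hx, hv1, hv2⟩ | ⟨hv1, hv2⟩
    · have : k = 1 := by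
        by_contra hne
        have := hr2 k (by omega)
        linarith [hA.2]
      subst this
      simp only [Nat.cast_one, one_mul] at hω hact
      have := (hr1 1 le_rfl).trans hv1
      refine ⟨y, t0, hy0, hy1, hx, hω, hk1 rfl, hut, hact, by linarith, ?_⟩
      simp only [Nat.cast_one, one_mul] at hv2
      linarith
    · exfalso
      rcases Nat.lt_or_ge K k with hlt | hge
      · have := hrK k (by omega)
        linarith [hA.2]
      · have := hleK k hge
        linarith [hA.1]
  -- the level `v` and the Fourier mode detecting non-constant orbits
  obtain ⟨v, κ, k0, i0, hκ, hk0, hv1, hv2, hsol2⟩ : ∃ (v κ : ℝ) (k0 : ℤ) (i0 : Fin 2), 0 < κ ∧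
      k0 ≠ 0 ∧ 3 / 4 * a < v ∧ v < 5 / 4 * a ∧ ∀ u, IsSol (hcut.ham ((K - 1 / 2) * a)) u →
        actionSol (hcut.ham ((K - 1 / 2) * a)) u ∈ Icc (3 / 4 * a) (5 / 4 * a) →
        actionSol (hcut.ham ((K - 1 / 2) * a)) u = v ∧ κ < ‖fc (fun t => u t i0) k0‖ := by
    by_cases hex : ∃ u, IsSol (hcut.ham ((K - 1 / 2) * a)) u ∧
        actionSol (hcut.ham ((K - 1 / 2) * a)) u ∈ Icc (3 / 4 * a) (5 / 4 * a)
    swap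
    · refine ⟨a, 1, 1, 0, one_pos, one_ne_zero, by linarith, by linarith, fun u hu hA => ?_⟩
      exact absurd ⟨u, hu, hA⟩ hex
    obtain ⟨u', hu', hA'⟩ := hex
    obtain ⟨y', t', hy0', hy1', hx', hω', hy', hut', hact', hv1, hv2⟩ := hmid u' hu' hA'
    have hU' : ∀ t, rot a ((1 : ℕ) * a) t y' ∈ UU a := fun t => by
      change rr a _ < 1
      rw [rr_rot]
      linarith
    have hy'0 : y' 0 ≠ 0 := by
      intro h0
      have : rr a y' = 0 := by rw [rr_eq, h0, hy']; simp
      linarith [hcut.r0pos]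
    have hfc : ∃ (k0 : ℤ) (i0 : Fin 2), k0 ≠ 0 ∧ fc (fun t => u' t i0) k0 ≠ 0 := by
      by_contra hno
      push Not at hno
      have hconst : ∀ t, u' t = u' 0 := by
        intro t
        ext i
        have hci : Continuous fun t => u' t i := by
          have := hu'.continuous
          fun_prop
        have hpi : Function.Periodic (fun t => u' t i) 1 := fun t => by simp only [hu'.2 t]
        rw [eq_const_of_fc_eq_zero _ hci hpi (fun k hk => hno k i hk) t,
          eq_const_of_fc_eq_zero _ hci hpi (fun k hk => hno k i hk) 0]
      have h1 : φ (rot a ((1 : ℕ) * a) (1 / 2) y') = φ (rot a ((1 : ℕ) * a) 0 y') := by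
        have e1 := hut' (t' + 1 / 2)
        have e2 := hut' t'
        rw [hconst] at e1 e2
        rw [add_sub_cancel_left] at e1
        rw [sub_self] at e2
        rw [← e1, ← e2]
      have h2 := congrFun (h.inj (hU' _) (hU' _) h1) 0
      rw [rot_zero_coord ha, rot_zero_coord ha, ee_zero] at h2
      have h3 := mul_left_cancel₀ hy'0 h2
      have h4 : ee 1 (1 / 2) = -1 := by
        rw [ee, ← Complex.exp_pi_mul_I]
        congr 1
        push_cast
        ring
      rw [h4] at h3
      norm_num at h3
    obtain ⟨k0, i0, hk0, hfc⟩ := hfc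
    have hfc0 := norm_pos_iff.2 hfc
    refine ⟨_, ‖fc (fun t => u' t i0) k0‖ / 2, k0, i0, by positivity, hk0, hv1, hv2, ?_⟩
    intro u hu hA
    obtain ⟨y, t0, hy0, hy1, hx, hω, hy, hut, hact, -, -⟩ := hmid u hu hA
    have hm0 : 0 < (K - 1 / 2) * a := by linarith
    have hxx : (rr a y - r0) / w = (rr a y' - r0) / w := by
      refine sgd_inj (div_nonneg (by linarith) hw0.le) hx (div_nonneg (by linarith) hw0.le) hx' ?_
      have h1 := mul_left_cancel₀ hm0.ne' (hω.trans hω'.symm)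
      exact (div_left_inj' hw0.ne').1 h1
    have hrr : rr a y = rr a y' := by
      have := (div_left_inj' hw0.ne').1 hxx
      linarith
    refine ⟨by rw [hact, hact', hrr], ?_⟩
    have hnorm : ‖y 0‖ = ‖y' 0‖ := by
      rw [rr_eq, rr_eq, hy, hy'] at hrr
      simp only [norm_zero, ne_eq, OfNat.ofNat_ne_zero, not_false_eq_true, zero_pow, mul_zero,
        add_zero] at hrr
      have h1 : 1 / a ≠ 0 := by positivity
      have h2 := mul_left_cancel₀ Real.pi_pos.ne' (mul_left_cancel₀ h1 hrr)
      exact (sq_eq_sq₀ (norm_nonneg _) (norm_nonneg _)).1 h2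
    obtain ⟨τ, hτ⟩ := exists_ee_eq (y 0 / y' 0) (by
      rw [norm_div, hnorm, div_self (norm_ne_zero_iff.2 hy'0)])
    have hshift : ∀ t, u t = u' (t + (τ - t0 + t')) := by
      intro t
      rw [hut, hut']
      congr 1
      ext i
      fin_cases i
      · change rot a ((1 : ℕ) * a) _ _ 0 = rot a ((1 : ℕ) * a) _ _ 0
        rw [rot_zero_coord ha, rot_zero_coord ha]
        have e1 : y 0 = y' 0 * ee 1 τ := by rw [hτ]; field_simp
        rw [e1, mul_assoc, ← ee_add]
        congr 2
        ring
      · change rot a ((1 : ℕ) * a) _ _ 1 = rot a ((1 : ℕ) * a) _ _ 1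
        rw [rot_one_coord _ hy, rot_one_coord _ hy']
    have hpi : Function.Periodic (fun t => u' t i0) 1 := fun t => by simp only [hu'.2 t]
    simp_rw [hshift]
    rw [norm_fc_shift _ hpi]
    linarith
  have hH : ∀ m z, (hcut.ham m).H z = m * S z + psi (Qf s z - u0) := fun m z => rfl
  have hmono : ∀ m m', m ≤ m' → ∀ z, (hcut.ham m).H z ≤ (hcut.ham m').H z := by
    intro m m' hmm z
    rw [hH, hH]
    have := mul_le_mul_of_nonneg_right hmm (hcut.S_mem z).1
    linarith
  have h0U : (0 : Fin 2 → ℂ) ∈ UU a := by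
    change rr a 0 < 1
    rw [rr_eq]; simp
  -- quartic bound at the image of the centre
  have hquart : ∃ C, 0 ≤ C ∧ ∀ z, (hcut.ham (K * a)).H z ≤ C * nsq (z - φ 0) ^ 2 := by
    set hh := hcut.ham (K * a) with hhh
    have hin : ∀ y, rr a y < r0 → hh.H (φ y) = 0 := by
      intro y hy
      have hyU : y ∈ UU a := by change rr a y < 1; linarith
      have hq := hQl y hyU
      rw [hH, hS2 y hyU, sg_eq_zero, psi_eq_zero (by linarith)]
      · ring
      · exact div_nonpos_of_nonpos_of_nonneg (by linarith) hw0.le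
    have hnn : ∀ z, 0 ≤ hh.H z := fun z => by
      rw [hH]
      exact add_nonneg (mul_nonneg (by linarith) (hcut.S_mem z).1) (psi_nonneg _)
    have h00 : rr a 0 < r0 := by rw [rr_eq]; simpa using hcut.r0pos
    have hN : φ '' {y | rr a y < r0} ∈ nhds (φ 0) :=
      h.image_mem_nhds h0U ((isOpen_lt (continuous_rr a) continuous_const).mem_nhds h00)
    obtain ⟨ρ, hρ, hball⟩ := Metric.mem_nhds_iff.1 hN
    have hg0 : hh.g (φ 0) = 0 := by
      have hmin : IsLocalMin (FF s u0 S (K * a)) (φ 0) := Filter.Eventually.of_forall fun x => by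
        have h1 := hin 0 h00
        have h2 := hnn x
        rw [hH] at h1 h2
        simp only [FF]
        linarith
      change gradE _ _ = 0
      rw [gradE_eq, hmin.fderiv_eq_zero, map_zero]
    refine ⟨hh.M / ρ ^ 2, div_nonneg hh.M_nonneg (by positivity), fun z => ?_⟩
    have hM := hh.M_nonneg
    by_cases hz : z ∈ Metric.ball (φ 0) ρ
    · obtain ⟨y, hy, rfl⟩ := hball hz
      rw [hin y hy]
      positivity
    · have h1 := hh.quad (φ 0) (z - φ 0)
      rw [hg0, hin 0 h00, add_sub_cancel] at h1
      have h2 : ip 0 (z - φ 0) = 0 := by simp [ip]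
      rw [h2] at h1
      have h3 : ρ ≤ ‖z - φ 0‖ := by
        rw [Metric.mem_ball, not_lt, dist_eq_norm] at hz
        exact hz
      have h4 : ρ ^ 2 ≤ nsq (z - φ 0) := le_trans (by gcongr) (norm_sq_le_nsq _)
      have h5 : hh.M * nsq (z - φ 0) ≤ hh.M / ρ ^ 2 * nsq (z - φ 0) ^ 2 := by
        rw [div_mul_eq_mul_div, le_div_iff₀ (by positivity), sq (nsq _), ← mul_assoc]
        have h6 : 0 ≤ nsq (z - φ 0) := le_trans (by positivity) h4
        gcongr
      linarith
  obtain ⟨C, hC, hquart⟩ := hquart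
  have hslot : ∀ q : ℕ × Fin 2, ((q.1 : ℝ) + 1) * b q.2 ≤ l0 → (q.1 : ℝ) + 1 < s q.2 := by
    intro q hq
    rw [hs]
    simp only
    rw [lt_div_iff₀ (hb q.2)]
    linarith [hl.1]
  refine linking hsres hspos (hcut.ham (K * a)) (hcut.ham ((K - 1 / 2) * a))
    (hcut.ham ((K - 1) * a)) (hmono _ _ (by linarith)) (hmono _ _ (by linarith)) (φ 0) hC hquart
    (l := l) (l' := l + (2 * a - l) / 2) (by linarith [hl.2]) ?_ q1 q2 hq (hslot q1 hq1)
    (hslot q2 hq2) (c1 := 3 / 4 * a) (c3 := 5 / 4 * a) (v := v) hκ hv1 hv2 k0 hk0 i0 ?_ hsol2 ?_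
  · intro z
    change Qf s z - l ≤ _
    rw [hH]
    by_cases hz : z ∈ φ '' {y | rr a y ≤ r0 + w}
    · obtain ⟨y, hy, rfl⟩ := hz
      have h1 := hQl y (lt_of_le_of_lt hy hcut.lt_one)
      have h2 := psi_nonneg (Qf s (φ y) - u0)
      have h3 := mul_nonneg (show 0 ≤ (K - 1) * a by linarith) (hcut.S_mem (φ y)).1
      linarith
    · rw [hS3 z hz]
      have := psi_ge (Qf s z - u0)
      linarith
  · intro u hu hA
    obtain ⟨y, t0, k, hy0, hy1, hk, hω, hk1, hut, hact⟩ := hcut.classify hm1 hu hA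
    rcases hcut.values (by linarith) hy0 hy1 hk hω hact with ⟨hx, hv1, hv2⟩ | ⟨hv1, hv2⟩
    · have := hr1 k hk
      linarith
    · rcases Nat.lt_or_ge K k with hlt | hge
      · have := hrK k (by omega)
        linarith
      · have := hleK k hge
        linarith
  · intro u hu hA
    obtain ⟨y, t0, k, hy0, hy1, hk, hω, hk1, hut, hact⟩ :=
      hcut.classify hKa hu (by linarith [hA.1])
    rcases hcut.values (by linarith) hy0 hy1 hk hω hact with ⟨hx, hv1, hv2⟩ | ⟨hv1, hv2⟩
    · rcases Nat.lt_or_ge 1 k with hlt | hge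
      · have := hr2 k (by omega)
        linarith [hA.2, hl.2]
      · have hk' : k = 1 := by omega
        subst hk'
        simp only [Nat.cast_one, one_mul] at hv2
        linarith [hA.1]
    · rcases Nat.lt_or_ge K k with hlt | hge
      · have := hrK k (by omega)
        linarith [hA.2, hl.2]
      · have := hleK k hge
        linarith [hA.1]

/-! ### A smooth ramp and smooth logarithms -/

/-- The primitive, vanishing on the negative half-line, of Mathlib's smooth step function. -/
def ramp (t : ℝ) : ℝ := ∫ s in (0 : ℝ)..t, Real.smoothTransition s

theorem hasDerivAt_ramp (t : ℝ) : HasDerivAt ramp (Real.smoothTransition t) t := by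
  have hc := Real.smoothTransition.continuous
  exact intervalIntegral.integral_hasDerivAt_right (hc.intervalIntegrable _ _)
    hc.stronglyMeasurable.stronglyMeasurableAtFilter hc.continuousAt

theorem deriv_ramp : deriv ramp = Real.smoothTransition := funext fun t => (hasDerivAt_ramp t).deriv

theorem contDiff_ramp : ContDiff ℝ (⊤ : ℕ∞) ramp := by
  rw [contDiff_infty_iff_deriv]
  refine ⟨fun t => (hasDerivAt_ramp t).differentiableAt, ?_⟩
  rw [deriv_ramp]
  exact Real.smoothTransition.contDiff

theorem ramp_nonpos {t : ℝ} (ht : t ≤ 0) : ramp t = 0 := by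
  unfold ramp
  rw [intervalIntegral.integral_congr (g := fun _ => (0 : ℝ))]
  · simp
  · intro s hs
    rw [uIcc_of_ge ht] at hs
    exact Real.smoothTransition.zero_of_nonpos hs.2

theorem monotone_ramp : Monotone ramp :=
  monotone_of_deriv_nonneg (fun t => (hasDerivAt_ramp t).differentiableAt) fun t => by
    rw [deriv_ramp]; exact Real.smoothTransition.nonneg t

theorem monotone_sub_ramp : Monotone fun t => t - ramp t := by
  refine monotone_of_deriv_nonneg
    (fun t => ((hasDerivAt_id t).sub (hasDerivAt_ramp t)).differentiableAt) fun t => ?_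
  rw [((hasDerivAt_id' t).fun_sub (hasDerivAt_ramp t)).deriv]
  linarith [Real.smoothTransition.le_one t]

theorem ramp_nonneg (t : ℝ) : 0 ≤ ramp t := by
  rcases le_total t 0 with h | h
  · rw [ramp_nonpos h]
  · simpa [ramp_nonpos le_rfl] using monotone_ramp h

theorem ramp_le (t : ℝ) : ramp t ≤ max t 0 := by
  rcases le_total t 0 with h | h
  · rw [ramp_nonpos h]; exact le_max_right _ _
  · have := monotone_sub_ramp h
    simp only [ramp_nonpos le_rfl] at this
    exact le_max_of_le_left (by linarith)

theorem sub_one_le_ramp (t : ℝ) : t - 1 ≤ ramp t := by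
  rcases le_total t 1 with h | h
  · linarith [ramp_nonneg t]
  · have hm : MonotoneOn (fun s => ramp s - s) (Ici 1) := by
      refine monotoneOn_of_deriv_nonneg (convex_Ici 1) ?_ ?_ ?_
      · exact (contDiff_ramp.continuous.sub continuous_id).continuousOn
      · exact fun s _ => ((hasDerivAt_ramp s).sub (hasDerivAt_id s)).differentiableAt.differentiableWithinAt
      · intro s hs
        rw [interior_Ici] at hs
        rw [((hasDerivAt_ramp s).fun_sub (hasDerivAt_id' s)).deriv,
          Real.smoothTransition.one_of_one_le (le_of_lt hs)]
        simp
    have := hm (mem_Ici.2 (le_refl (1 : ℝ))) h h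
    simp only at this
    linarith [ramp_nonneg 1]

/-- A nowhere vanishing smooth function on a convex open set has a smooth logarithm, up to an
additive constant: a primitive of `dq / q`. -/
theorem exists_smooth_log {E : Type*} [NormedAddCommGroup E] [NormedSpace ℝ E] {s : Set E}
    (hs : Convex ℝ s) (ho : IsOpen s) {q : E → ℂ} (hq : ContDiffOn ℝ (⊤ : ℕ∞) q s)
    (h0 : ∀ a ∈ s, q a ≠ 0) :
    ∃ L : E → ℂ, ContDiffOn ℝ (⊤ : ℕ∞) L s ∧
      (∀ a ∈ s, HasFDerivAt L ((q a)⁻¹ • fderiv ℝ q a) a) := by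
  have hdq := (contDiffOn_infty_iff_fderiv_of_isOpen ho).1 hq
  have hω : ContDiffOn ℝ (⊤ : ℕ∞) (fun a => (q a)⁻¹ • fderiv ℝ q a) s :=
    (hq.inv h0).smul hdq.2
  obtain ⟨L, hL⟩ := Convex.exists_forall_hasFDerivAt_of_fderiv_symmetric hs ho
    (hω.differentiableOn (by simp)) (by
      intro a ha x y
      have hqa : HasFDerivAt q (fderiv ℝ q a) a :=
        ((hdq.1 a ha).differentiableAt (ho.mem_nhds ha)).hasFDerivAt
      have hqq : HasFDerivAt (fderiv ℝ q) (fderiv ℝ (fderiv ℝ q) a) a :=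
        ((hdq.2.differentiableOn (by simp) a ha).differentiableAt (ho.mem_nhds ha)).hasFDerivAt
      have hinv : HasFDerivAt (fun a => (q a)⁻¹) (-((q a) ^ 2)⁻¹ • fderiv ℝ q a) a := by
        have := (hasDerivAt_inv (h0 a ha)).comp_hasFDerivAt_of_eq (𝕜 := ℝ) a hqa rfl
        exact this
      have hsym : IsSymmSndFDerivAt ℝ q a := ((hq.contDiffAt (ho.mem_nhds ha))).isSymmSndFDerivAt
        (by simp only [minSmoothness_of_isRCLikeNormedField]; exact two_le_top)
      rw [(hinv.fun_smul hqq).fderiv]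
      have := hsym x y
      simp only [add_apply, smul_apply, ContinuousLinearMap.smulRight_apply, this, smul_eq_mul]
      ring)
  refine ⟨L, ?_, hL⟩
  rw [contDiffOn_infty_iff_fderiv_of_isOpen ho]
  refine ⟨fun a ha => (hL a ha).differentiableAt.differentiableWithinAt, ?_⟩
  exact hω.congr fun a ha => (hL a ha).fderiv

/-! ### Symplectic maps preserving the diagonal circle action -/

/-- The moment map `π(|z₀|² + |z₁|²)` of the diagonal circle action on `ℂ²`. -/
def cc (z : Fin 2 → ℂ) : ℝ := π * ‖z 0‖ ^ 2 + π * ‖z 1‖ ^ 2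

theorem cc_nonneg (z : Fin 2 → ℂ) : 0 ≤ cc z := by unfold cc; positivity

/-- `Φ` is smooth and symplectic at every point at which `cc` takes a value in `J`. -/
def SympOn (J : Set ℝ) (Φ : (Fin 2 → ℂ) → (Fin 2 → ℂ)) : Prop :=
  ∀ z, cc z ∈ J → ContDiffAt ℝ (⊤ : ℕ∞) Φ z ∧
    ∀ v w, stdSymp 2 (fderiv ℝ Φ z v) (fderiv ℝ Φ z w) = stdSymp 2 v w

/-- `Φ` preserves `cc` and commutes with the diagonal circle action. -/
structure Equiv1 (Φ : (Fin 2 → ℂ) → (Fin 2 → ℂ)) : Prop where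
  cc_eq : ∀ z, cc (Φ z) = cc z
  smul_eq : ∀ (e : ℂ) z, ‖e‖ = 1 → Φ (e • z) = e • Φ z

theorem Equiv1.comp {Φ Ψ : (Fin 2 → ℂ) → (Fin 2 → ℂ)} (h1 : Equiv1 Φ) (h2 : Equiv1 Ψ) :
    Equiv1 (Φ ∘ Ψ) :=
  ⟨fun z => (h1.cc_eq _).trans (h2.cc_eq z), fun e z he => by
    simp only [Function.comp_apply, h2.smul_eq e z he, h1.smul_eq e _ he]⟩

theorem SympOn.comp {J : Set ℝ} {Φ Ψ : (Fin 2 → ℂ) → (Fin 2 → ℂ)} (h1 : SympOn J Φ)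
    (h2 : SympOn J Ψ) (h3 : Equiv1 Ψ) : SympOn J (Φ ∘ Ψ) := by
  intro z hz
  obtain ⟨a1, a2⟩ := h2 z hz
  obtain ⟨b1, b2⟩ := h1 (Ψ z) (by rw [h3.cc_eq]; exact hz)
  refine ⟨b1.comp z a1, fun v w => ?_⟩
  rw [fderiv_comp z (b1.differentiableAt (by simp)) (a1.differentiableAt (by simp))]
  simp only [ContinuousLinearMap.comp_apply, b2, a2]

theorem fderiv_apply_pi {Φ : (Fin 2 → ℂ) → (Fin 2 → ℂ)} {z : Fin 2 → ℂ}
    {D : Fin 2 → (Fin 2 → ℂ) →L[ℝ] ℂ} (h : ∀ j, HasFDerivAt (fun z => Φ z j) (D j) z)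
    (v : Fin 2 → ℂ) : fderiv ℝ Φ z v = fun j => D j v := by
  rw [(hasFDerivAt_pi'' (Φ := fun z => Φ z) (Φ' := ContinuousLinearMap.pi D) (by
    intro j; exact h j)).fderiv]
  rfl

theorem stdSymp_two (v w : Fin 2 → ℂ) : stdSymp 2 v w =
    ((starRingEnd ℂ) (v 0) * w 0).im + ((starRingEnd ℂ) (v 1) * w 1).im := by
  simp [stdSymp, Fin.sum_univ_two]

/-- The derivative of `z ↦ π|zⱼ|²`. -/
def dX (z : Fin 2 → ℂ) (j : Fin 2) : (Fin 2 → ℂ) →L[ℝ] ℝ :=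
  (2 * π) • (Complex.reCLM ∘L
    ((ContinuousLinearMap.mul ℝ ℂ (starRingEnd ℂ (z j))) ∘L ContinuousLinearMap.proj (R := ℝ) j))

theorem dX_apply (z v : Fin 2 → ℂ) (j : Fin 2) :
    dX z j v = 2 * π * ((starRingEnd ℂ) (z j) * v j).re := rfl

theorem hasFDerivAt_X (z : Fin 2 → ℂ) (j : Fin 2) :
    HasFDerivAt (fun z : Fin 2 → ℂ => π * ‖z j‖ ^ 2) (dX z j) z := by
  have h1 : HasFDerivAt (fun z : Fin 2 → ℂ => z j)
      (ContinuousLinearMap.proj (R := ℝ) (φ := fun _ => ℂ) j) z := hasFDerivAt_apply j z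
  have h2 := (h1.norm_sq).const_mul π
  refine h2.congr_fderiv ?_
  ext v
  rw [dX_apply]
  simp [Complex.inner]
  ring

theorem hasFDerivAt_cc (z : Fin 2 → ℂ) : HasFDerivAt cc (dX z 0 + dX z 1) z :=
  (hasFDerivAt_X z 0).add (hasFDerivAt_X z 1)

theorem contDiff_X (j : Fin 2) : ContDiff ℝ (⊤ : ℕ∞) (fun z : Fin 2 → ℂ => π * ‖z j‖ ^ 2) :=
  contDiff_const.mul ((contDiff_apply ℝ ℂ j).norm_sq ℝ)

theorem contDiff_cc : ContDiff ℝ (⊤ : ℕ∞) cc := (contDiff_X 0).add (contDiff_X 1)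

/-- Multiplying the coordinates by phases `e^{iα₀}`, `e^{iα₁}` is symplectic when the form
`Σ dXⱼ ∧ dαⱼ` vanishes. -/
theorem stdSymp_phase {z v w : Fin 2 → ℂ} {c : Fin 2 → ℂ} (hc : ∀ j, ‖c j‖ = 1)
    {av aw : Fin 2 → ℝ}
    (h : dX z 0 v * aw 0 + dX z 1 v * aw 1 = dX z 0 w * av 0 + dX z 1 w * av 1) :
    stdSymp 2 (fun j => c j * (v j + (av j : ℂ) * Complex.I * z j))
      (fun j => c j * (w j + (aw j : ℂ) * Complex.I * z j)) = stdSymp 2 v w := by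
  have hj : ∀ j, ((starRingEnd ℂ) (c j * (v j + (av j : ℂ) * Complex.I * z j)) *
      (c j * (w j + (aw j : ℂ) * Complex.I * z j))).im =
      ((starRingEnd ℂ) (v j) * w j).im +
        (((starRingEnd ℂ) (z j) * v j).re * aw j - ((starRingEnd ℂ) (z j) * w j).re * av j) := by
    intro j
    have h1 : (starRingEnd ℂ) (c j) * c j = 1 := by
      rw [Complex.conj_mul', hc]; simp
    rw [map_mul, mul_mul_mul_comm, h1, one_mul]
    simp
    ring
  rw [stdSymp_two, stdSymp_two, hj, hj]
  simp only [dX_apply] at h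
  have h2 : 2 * π * (((starRingEnd ℂ) (z 0) * v 0).re * aw 0 + ((starRingEnd ℂ) (z 1) * v 1).re * aw 1)
      = 2 * π * (((starRingEnd ℂ) (z 0) * w 0).re * av 0 + ((starRingEnd ℂ) (z 1) * w 1).re * av 1) := by
    linarith
  have := mul_left_cancel₀ (by positivity) h2
  linarith

/-- The time-one flow of the Hamiltonian `G(π|z₀|², cc)`: the coordinates are multiplied by
phases given by the partial derivatives of `G`. -/
def tau (G : ℝ × ℝ → ℝ) (z : Fin 2 → ℂ) : Fin 2 → ℂ :=
  ![Complex.exp (((fderiv ℝ G (π * ‖z 0‖ ^ 2, cc z) (1, 1) : ℝ) : ℂ) * Complex.I) * z 0,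
    Complex.exp (((fderiv ℝ G (π * ‖z 0‖ ^ 2, cc z) (0, 1) : ℝ) : ℂ) * Complex.I) * z 1]

theorem norm_tau (G : ℝ × ℝ → ℝ) (z : Fin 2 → ℂ) (j : Fin 2) : ‖tau G z j‖ = ‖z j‖ := by
  fin_cases j <;> simp [tau, Complex.norm_exp_ofReal_mul_I]

theorem equiv1_tau (G : ℝ × ℝ → ℝ) : Equiv1 (tau G) := by
  refine ⟨fun z => by simp [cc, norm_tau], fun e z he => ?_⟩
  have h1 : cc (e • z) = cc z := by simp [cc, he]
  ext j
  fin_cases j <;> simp [tau, h1, he] <;> ring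

theorem tau_neg (G : ℝ × ℝ → ℝ) (z : Fin 2 → ℂ) : tau (-G) (tau G z) = z := by
  have h1 : π * ‖tau G z 0‖ ^ 2 = π * ‖z 0‖ ^ 2 := by rw [norm_tau]
  have h2 := (equiv1_tau G).cc_eq z
  ext j
  have : ∀ a : ℝ, ∀ w : ℂ, Complex.exp (((-a : ℝ) : ℂ) * Complex.I) *
      (Complex.exp ((a : ℂ) * Complex.I) * w) = w := by
    intro a w
    rw [← mul_assoc, ← Complex.exp_add]; simp
  unfold tau at h1 h2 ⊢
  rw [h1, h2, fderiv_neg]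
  fin_cases j
  · exact this _ _
  · exact this _ _

theorem sympOn_tau {J : Set ℝ} {G : ℝ × ℝ → ℝ}
    (hG : ∀ X, ∀ c ∈ J, ContDiffAt ℝ (⊤ : ℕ∞) G (X, c)) : SympOn J (tau G) := by
  intro z hz
  set p : (Fin 2 → ℂ) → ℝ × ℝ := fun z => (π * ‖z 0‖ ^ 2, cc z) with hp
  have hpd : ContDiff ℝ (⊤ : ℕ∞) p := (contDiff_X 0).prodMk contDiff_cc
  have hG1 := hG (π * ‖z 0‖ ^ 2) (cc z) hz
  have hdG : ContDiffAt ℝ (⊤ : ℕ∞) (fderiv ℝ G) (p z) :=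
    hG1.fderiv_right (m := ((⊤ : ℕ∞) : WithTop ℕ∞)) (by simp)
  have hα : ∀ u : ℝ × ℝ, ContDiffAt ℝ (⊤ : ℕ∞) (fun z => fderiv ℝ G (p z) u) z := fun u =>
    (hdG.comp z hpd.contDiffAt).clm_apply contDiffAt_const
  have hsm : ∀ u : ℝ × ℝ, ∀ j : Fin 2, ContDiffAt ℝ (⊤ : ℕ∞)
      (fun z : Fin 2 → ℂ =>
        Complex.exp (((fderiv ℝ G (p z) u : ℝ) : ℂ) * Complex.I) * z j) z := by
    intro u j
    refine ContDiffAt.mul ?_ (contDiff_apply ℝ ℂ j).contDiffAt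
    exact ((Complex.ofRealCLM.contDiff.contDiffAt.comp z (hα u)).mul contDiffAt_const).cexp
  refine ⟨?_, ?_⟩
  · rw [contDiffAt_pi]
    intro j
    fin_cases j
    · exact hsm _ 0
    · exact hsm _ 1
  · -- derivative of the phases
    have hsym : IsSymmSndFDerivAt ℝ G (p z) := hG1.isSymmSndFDerivAt
      (by simp only [minSmoothness_of_isRCLikeNormedField]; exact two_le_top)
    have hp' : HasFDerivAt p ((dX z 0).prod (dX z 0 + dX z 1)) z :=
      (hasFDerivAt_X z 0).prodMk (hasFDerivAt_cc z)
    set D2 := fderiv ℝ (fderiv ℝ G) (p z) with hD2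
    have hdG' : HasFDerivAt (fderiv ℝ G) D2 (p z) :=
      (hdG.differentiableAt (by simp)).hasFDerivAt
    have hα' : ∀ u : ℝ × ℝ, HasFDerivAt (fun z => fderiv ℝ G (p z) u)
        ((ContinuousLinearMap.apply ℝ ℝ u) ∘L (D2 ∘L ((dX z 0).prod (dX z 0 + dX z 1)))) z :=
      fun u => (ContinuousLinearMap.apply ℝ ℝ u).hasFDerivAt.comp z (hdG'.comp z hp')
    have hexp : ∀ u : ℝ × ℝ, ∀ j : Fin 2, HasFDerivAt (fun z : Fin 2 → ℂ =>
        Complex.exp (((fderiv ℝ G (p z) u : ℝ) : ℂ) * Complex.I) * z j) _ z := fun u j =>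
      (((Complex.ofRealCLM.hasFDerivAt.comp z (hα' u)).mul_const Complex.I).cexp).mul
        (hasFDerivAt_apply (𝕜 := ℝ) j z)
    set u : Fin 2 → ℝ × ℝ := ![(1, 1), (0, 1)] with hu
    have key : ∀ v, fderiv ℝ (tau G) z v = fun j =>
        Complex.exp (((fderiv ℝ G (p z) (u j) : ℝ) : ℂ) * Complex.I) *
          (v j + ((D2 (dX z 0 v, dX z 0 v + dX z 1 v) (u j) : ℝ) : ℂ) * Complex.I * z j) := by
      intro v
      rw [fderiv_apply_pi (Φ := tau G) (D := fun j => fderiv ℝ (fun z => tau G z j) z)]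
      · funext j
        have : (fun z => tau G z j) = fun z : Fin 2 → ℂ =>
            Complex.exp (((fderiv ℝ G (p z) (u j) : ℝ) : ℂ) * Complex.I) * z j := by
          funext z; fin_cases j <;> rfl
        rw [this, (hexp (u j) j).fderiv]
        simp
        ring
      · intro j
        have : (fun z => tau G z j) = fun z : Fin 2 → ℂ =>
            Complex.exp (((fderiv ℝ G (p z) (u j) : ℝ) : ℂ) * Complex.I) * z j := by
          funext z; fin_cases j <;> rfl
        rw [this]
        exact (hexp (u j) j).differentiableAt.hasFDerivAt
    intro v w
    rw [key, key]
    refine stdSymp_phase (c := fun j =>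
      Complex.exp (((fderiv ℝ G (p z) (u j) : ℝ) : ℂ) * Complex.I))
      (av := fun j => D2 (dX z 0 v, dX z 0 v + dX z 1 v) (u j))
      (aw := fun j => D2 (dX z 0 w, dX z 0 w + dX z 1 w) (u j))
      (fun j => Complex.norm_exp_ofReal_mul_I _) ?_
    have h1 := hsym (dX z 0 v, dX z 0 v + dX z 1 v) (dX z 0 w, dX z 0 w + dX z 1 w)
    have hlin : ∀ (L : ℝ × ℝ →L[ℝ] ℝ) (a b : ℝ), L (a, a + b) = a * L (1, 1) + b * L (0, 1) := by
      intro L a b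
      rw [← smul_eq_mul, ← smul_eq_mul, ← map_smul, ← map_smul, ← map_add]
      simp
    rw [← hD2] at h1
    rw [hlin (D2 _) (dX z 0 w) (dX z 1 w), hlin (D2 _) (dX z 0 v) (dX z 1 v)] at h1
    simp only [hu, Matrix.cons_val_zero, Matrix.cons_val_one]
    linarith

/-! ### Rotations of the reduced spheres and the half twist -/

/-- The unitary change of basis diagonalising the real rotations of `ℂ²`. -/
def unitV (z : Fin 2 → ℂ) : Fin 2 → ℂ :=
  ![(z 0 + Complex.I * z 1) / (√2 : ℝ), (z 0 - Complex.I * z 1) / (√2 : ℝ)]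

/-- The inverse of `unitV`. -/
def unitW (z : Fin 2 → ℂ) : Fin 2 → ℂ :=
  ![(z 0 + z 1) / (√2 : ℝ), -Complex.I * (z 0 - z 1) / (√2 : ℝ)]

theorem sqrt_two_mul_self : ((√2 : ℝ) : ℂ) * (√2 : ℝ) = 2 := by
  rw [← Complex.ofReal_mul, Real.mul_self_sqrt (by norm_num)]; simp

theorem sqrt_two_ne : ((√2 : ℝ) : ℂ) ≠ 0 := by
  rw [Complex.ofReal_ne_zero]; positivity

theorem unitW_unitV (z : Fin 2 → ℂ) : unitW (unitV z) = z := by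
  have h := sqrt_two_mul_self
  have h0 := sqrt_two_ne
  ext j
  fin_cases j
  · simp only [unitW, unitV, Fin.zero_eta, Matrix.cons_val_zero, Matrix.cons_val_one]
    rw [← add_div, div_div, h]; ring
  · simp only [unitW, unitV, Fin.mk_one, Matrix.cons_val_zero, Matrix.cons_val_one]
    rw [← sub_div, mul_div_assoc', div_div, h]
    linear_combination (-z 1) * Complex.I_sq

theorem unitV_unitW (z : Fin 2 → ℂ) : unitV (unitW z) = z := by
  have h := sqrt_two_mul_self
  ext j
  fin_cases j
  · simp only [unitW, unitV, Fin.zero_eta, Matrix.cons_val_zero, Matrix.cons_val_one]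
    rw [mul_div_assoc', ← add_div, div_div, h]
    linear_combination (-(z 0 - z 1) / 2) * Complex.I_sq
  · simp only [unitW, unitV, Fin.mk_one, Matrix.cons_val_zero, Matrix.cons_val_one]
    rw [mul_div_assoc', ← sub_div, div_div, h]
    linear_combination ((z 0 - z 1) / 2) * Complex.I_sq

theorem stdSymp_unitV (v w : Fin 2 → ℂ) : stdSymp 2 (unitV v) (unitV w) = stdSymp 2 v w := by
  rw [stdSymp_two, stdSymp_two]
  have h2 : √2 * √2 = 2 := Real.mul_self_sqrt (by norm_num)
  have hj : ∀ a b : ℂ, ((starRingEnd ℂ) (a / (√2 : ℝ)) * (b / (√2 : ℝ))).im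
      = ((starRingEnd ℂ) a * b).im / 2 := by
    intro a b
    rw [map_div₀, Complex.conj_ofReal, div_mul_div_comm, sqrt_two_mul_self]
    simp
  simp only [unitV, Matrix.cons_val_zero, Matrix.cons_val_one, hj]
  simp
  ring

theorem cc_unitV (z : Fin 2 → ℂ) : cc (unitV z) = cc z := by
  have hj : ∀ a : ℂ, ‖a / ((√2 : ℝ) : ℂ)‖ ^ 2 = Complex.normSq a / 2 := by
    intro a
    rw [norm_div, div_pow, Complex.norm_real, Real.norm_eq_abs, sq_abs,
      Real.sq_sqrt (by norm_num), Complex.normSq_eq_norm_sq]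
  simp only [cc, unitV, Matrix.cons_val_zero, Matrix.cons_val_one, hj,
    ← Complex.normSq_eq_norm_sq]
  simp only [Complex.normSq_apply]
  simp
  ring

theorem equiv1_unitV : Equiv1 unitV := by
  refine ⟨cc_unitV, fun e z _ => ?_⟩
  ext j; fin_cases j <;> simp [unitV] <;> ring

theorem equiv1_unitW : Equiv1 unitW := by
  refine ⟨fun z => ?_, fun e z he => ?_⟩
  · rw [← cc_unitV (unitW z), unitV_unitW]
  · ext j; fin_cases j <;> simp [unitW] <;> ring

theorem sympOn_of_linear {Φ : (Fin 2 → ℂ) → (Fin 2 → ℂ)} (h : IsLinearMap ℝ Φ)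
    (hs : ∀ v w, stdSymp 2 (Φ v) (Φ w) = stdSymp 2 v w) (J : Set ℝ) : SympOn J Φ := by
  intro z _
  obtain ⟨L, hL⟩ : ∃ L : (Fin 2 → ℂ) →L[ℝ] (Fin 2 → ℂ), ⇑L = Φ :=
    ⟨LinearMap.toContinuousLinearMap (h.mk' Φ), rfl⟩
  rw [← hL] at hs ⊢
  exact ⟨L.contDiff.contDiffAt, fun v w => by rw [L.fderiv]; exact hs v w⟩

theorem sympOn_unitV (J : Set ℝ) : SympOn J unitV :=
  sympOn_of_linear ⟨fun x y => by ext j; fin_cases j <;> simp [unitV] <;> ring,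
    fun c x => by ext j; fin_cases j <;> simp [unitV] <;> ring⟩ stdSymp_unitV J

theorem sympOn_unitW (J : Set ℝ) : SympOn J unitW :=
  sympOn_of_linear ⟨fun x y => by ext j; fin_cases j <;> simp [unitW] <;> ring,
    fun c x => by ext j; fin_cases j <;> simp [unitW] <;> ring⟩
    (fun v w => by rw [← stdSymp_unitV, unitV_unitW, unitV_unitW]) J

/-- The flow `tau G`, conjugated by the unitary change of basis. -/
def rotG (G : ℝ × ℝ → ℝ) : (Fin 2 → ℂ) → (Fin 2 → ℂ) := unitW ∘ tau G ∘ unitV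

theorem equiv1_rotG (G : ℝ × ℝ → ℝ) : Equiv1 (rotG G) :=
  equiv1_unitW.comp ((equiv1_tau G).comp equiv1_unitV)

theorem sympOn_rotG {J : Set ℝ} {G : ℝ × ℝ → ℝ}
    (hG : ∀ X, ∀ c ∈ J, ContDiffAt ℝ (⊤ : ℕ∞) G (X, c)) : SympOn J (rotG G) :=
  (sympOn_unitW J).comp ((sympOn_tau hG).comp (sympOn_unitV J) equiv1_unitV)
    ((equiv1_tau G).comp equiv1_unitV)

theorem rotG_neg (G : ℝ × ℝ → ℝ) (z : Fin 2 → ℂ) : rotG (-G) (rotG G z) = z := by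
  simp only [rotG, Function.comp_apply, unitV_unitW, tau_neg, unitW_unitV]

theorem rotG_neg' (G : ℝ × ℝ → ℝ) (z : Fin 2 → ℂ) : rotG G (rotG (-G) z) = z := by
  simpa using rotG_neg (-G) z

/-- The Hamiltonian whose flow rotates the sphere of level `c` by the angle `2h(c)` about a
horizontal axis. -/
def rotH (h : ℝ → ℝ) (p : ℝ × ℝ) : ℝ := h p.2 * (2 * p.1 - p.2)

theorem rotH_neg (h : ℝ → ℝ) : rotH (-h) = -rotH h := by
  funext p; simp [rotH]

theorem rotG_rotH {h : ℝ → ℝ} {z : Fin 2 → ℂ} (hd : DifferentiableAt ℝ h (cc z)) :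
    ∃ e : ℂ, ‖e‖ = 1 ∧
      rotG (rotH h) z 0 = e * (Real.cos (h (cc z)) * z 0 - Real.sin (h (cc z)) * z 1) ∧
      rotG (rotH h) z 1 = e * (Real.sin (h (cc z)) * z 0 + Real.cos (h (cc z)) * z 1) := by
  set c := cc z with hc
  set X := π * ‖unitV z 0‖ ^ 2 with hX
  have hcV : cc (unitV z) = c := cc_unitV z
  have hD : ∀ u : ℝ × ℝ, fderiv ℝ (rotH h) (X, c) u =
      h c * (2 * u.1 - u.2) + deriv h c * u.2 * (2 * X - c) := by
    intro u
    have h1 : HasFDerivAt (fun p : ℝ × ℝ => h p.2) _ (X, c) :=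
      HasFDerivAt.comp (g := h) (X, c) hd.hasDerivAt.hasFDerivAt hasFDerivAt_snd
    have h2 : HasFDerivAt (fun p : ℝ × ℝ => 2 * p.1 - p.2) _ (X, c) :=
      ((hasFDerivAt_fst (𝕜 := ℝ) (p := (X, c))).const_mul 2).fun_sub hasFDerivAt_snd
    have h3 : HasFDerivAt (rotH h) _ (X, c) := h1.mul h2
    rw [h3.fderiv]
    simp
    ring
  set s := deriv h c * (2 * X - c) with hs
  refine ⟨Complex.exp ((s : ℂ) * Complex.I), Complex.norm_exp_ofReal_mul_I _, ?_⟩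
  have h11 : fderiv ℝ (rotH h) (X, c) (1, 1) = s + h c := by rw [hD]; simp [hs]; ring
  have h01 : fderiv ℝ (rotH h) (X, c) (0, 1) = s - h c := by rw [hD]; simp [hs]; ring
  have e1 : Complex.exp (((s + h c : ℝ) : ℂ) * Complex.I) = Complex.exp ((s : ℂ) * Complex.I) *
      (Real.cos (h c) + Real.sin (h c) * Complex.I) := by
    push_cast
    rw [add_mul, Complex.exp_add, Complex.exp_mul_I (h c)]
  have e2 : Complex.exp (((s - h c : ℝ) : ℂ) * Complex.I) = Complex.exp ((s : ℂ) * Complex.I) *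
      (Real.cos (h c) - Real.sin (h c) * Complex.I) := by
    push_cast
    rw [sub_eq_add_neg, add_mul, Complex.exp_add, Complex.exp_mul_I (-h c)]
    simp
    ring
  have t0 : tau (rotH h) (unitV z) 0 = Complex.exp ((s : ℂ) * Complex.I) *
      (Real.cos (h c) + Real.sin (h c) * Complex.I) * unitV z 0 := by
    simp only [tau, Matrix.cons_val_zero, hcV, ← hX, h11, e1]
  have t1 : tau (rotH h) (unitV z) 1 = Complex.exp ((s : ℂ) * Complex.I) *
      (Real.cos (h c) - Real.sin (h c) * Complex.I) * unitV z 1 := by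
    simp only [tau, Matrix.cons_val_one, Matrix.cons_val_fin_one, hcV, ← hX, h01, e2]
  have h2 := sqrt_two_mul_self
  have v0 : unitV z 0 = (z 0 + Complex.I * z 1) / (√2 : ℝ) := rfl
  have v1 : unitV z 1 = (z 0 - Complex.I * z 1) / (√2 : ℝ) := rfl
  constructor
  · simp only [rotG, Function.comp_apply, unitW, Matrix.cons_val_zero, t0, t1, v0, v1]
    rw [mul_div_assoc', mul_div_assoc', ← add_div, div_div, h2]
    linear_combination (Complex.exp ((s : ℂ) * Complex.I) * Real.sin (h c) * z 1) * Complex.I_sq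
  · simp only [rotG, Function.comp_apply, unitW, Matrix.cons_val_one, Matrix.cons_val_fin_one, t0, t1, v0, v1]
    rw [mul_div_assoc', mul_div_assoc', ← sub_div, mul_div_assoc', div_div, h2]
    linear_combination (-Complex.exp ((s : ℂ) * Complex.I) *
      (Real.sin (h c) * z 0 + Real.cos (h c) * z 1)) * Complex.I_sq

/-! ### The half twist -/

/-- The relative area, in the sphere of level `c`, of the disc whose boundary point is moved
to the pole by the half twist. -/
def xi (m ε c : ℝ) : ℝ := (2 * m - 3 / 2 * ε - c) / c

/-- Half the polar angle of the centre of the half twist at level `c`. -/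
def hh (m ε c : ℝ) : ℝ := Real.arcsin (√(xi m ε c)) / 2

/-- The cutoff switching the half twist on as `c` increases. -/
def onoff (m ε c : ℝ) : ℝ := Real.smoothTransition ((c - (m - ε / 4)) / (ε / 8))

/-- The relative width of the transition annulus of the half twist. -/
def ww (m ε : ℝ) : ℝ := (ε / (6 * m)) ^ 2

/-- The Hamiltonian of the half twist centred at the pole. -/
def twH (m ε : ℝ) (p : ℝ × ℝ) : ℝ :=
  π * onoff m ε p.2 * (p.2 * ww m ε) *
    ((p.1 / p.2 - Real.sin (hh m ε p.2) ^ 2) / ww m ε -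
      ramp ((p.1 / p.2 - Real.sin (hh m ε p.2) ^ 2) / ww m ε))

/-- The half twist: on each level above `m - ε/8` it exchanges the pole with a point
just outside the slice of the ellipsoid, and it is the identity below level `m - ε/4`. -/
def twist (m ε : ℝ) : (Fin 2 → ℂ) → (Fin 2 → ℂ) :=
  rotG (-rotH (hh m ε)) ∘ tau (twH m ε) ∘ rotG (rotH (hh m ε))

theorem equiv1_twist (m ε : ℝ) : Equiv1 (twist m ε) :=
  (equiv1_rotG _).comp ((equiv1_tau _).comp (equiv1_rotG _))

theorem twist_injective (m ε : ℝ) : Function.Injective (twist m ε) := by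
  have : Function.LeftInverse
      (rotG (-rotH (hh m ε)) ∘ tau (-twH m ε) ∘ rotG (rotH (hh m ε))) (twist m ε) := by
    intro z
    simp only [twist, Function.comp_apply, rotG_neg', tau_neg, rotG_neg]
  exact this.injective

theorem onoff_zero {m ε c : ℝ} (hε : 0 < ε) (hc : c ≤ m - ε / 4) : onoff m ε c = 0 :=
  Real.smoothTransition.zero_of_nonpos (div_nonpos_of_nonpos_of_nonneg (by linarith) (by linarith))

theorem onoff_one {m ε c : ℝ} (hε : 0 < ε) (hc : m - ε / 8 ≤ c) : onoff m ε c = 1 :=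
  Real.smoothTransition.one_of_one_le (by rw [le_div_iff₀ (by linarith)]; linarith)

theorem twist_low {m ε : ℝ} (hε : 0 < ε) {z : Fin 2 → ℂ} (hz : cc z < m - ε / 4) :
    twist m ε z = z := by
  have hD : ∀ X, ∀ c < m - ε / 4, fderiv ℝ (twH m ε) (X, c) = 0 := by
    intro X c hc
    have : twH m ε =ᶠ[nhds (X, c)] fun _ => 0 := by
      have : ∀ᶠ p : ℝ × ℝ in nhds (X, c), p.2 < m - ε / 4 :=
        (isOpen_lt continuous_snd continuous_const).mem_nhds hc
      filter_upwards [this] with p hp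
      simp [twH, onoff_zero hε hp.le]
    rw [this.fderiv_eq]
    simp
  have ht : ∀ y, cc y < m - ε / 4 → tau (twH m ε) y = y := by
    intro y hy
    unfold tau
    rw [hD _ _ hy]
    ext j; fin_cases j <;> simp
  simp only [twist, Function.comp_apply]
  rw [ht _ (by rw [(equiv1_rotG _).cc_eq]; exact hz), rotG_neg]

section
variable {m ε : ℝ}

theorem xi_mem (hε : 0 < ε) (hm : 4 * ε ≤ m) {c : ℝ} (hc : c ∈ Ioo (m - ε / 2) (2 * m - 3 / 2 * ε)) :
    0 < c ∧ xi m ε c ∈ Ioo 0 1 := by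
  have h0 : 0 < c := by linarith [hc.1]
  refine ⟨h0, div_pos (by linarith [hc.2]) h0, ?_⟩
  rw [xi, div_lt_one h0]; linarith [hc.1]

theorem contDiffAt_hh (hε : 0 < ε) (hm : 4 * ε ≤ m) {c : ℝ} (hc : c ∈ Ioo (m - ε / 2) (2 * m - 3 / 2 * ε)) :
    ContDiffAt ℝ (⊤ : ℕ∞) (hh m ε) c := by
  obtain ⟨h0, h1, h2⟩ := xi_mem hε hm hc
  have hx : ContDiffAt ℝ (⊤ : ℕ∞) (xi m ε) c :=
    (contDiffAt_const.sub contDiffAt_id).div contDiffAt_id h0.ne'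
  have hs : ContDiffAt ℝ (⊤ : ℕ∞) (fun c => √(xi m ε c)) c := hx.sqrt h1.ne'
  have h3 : √(xi m ε c) < 1 := by
    rw [← Real.sqrt_one]; exact Real.sqrt_lt_sqrt h1.le h2
  have h4 := Real.sqrt_pos.2 h1
  exact ((Real.contDiffAt_arcsin (by linarith) h3.ne).comp c hs).div_const 2

theorem hh_facts (hε : 0 < ε) (hm : 4 * ε ≤ m) {c : ℝ} (hc : c ∈ Ioo (m - ε / 2) (2 * m - 3 / 2 * ε)) :
    0 ≤ Real.sin (hh m ε c) ∧ Real.sin (hh m ε c) ≤ Real.cos (hh m ε c) ∧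
      (2 * Real.sin (hh m ε c) * Real.cos (hh m ε c)) ^ 2 = xi m ε c := by
  obtain ⟨h0, h1, h2⟩ := xi_mem hε hm hc
  have h4 := Real.sqrt_pos.2 h1
  have h3 : √(xi m ε c) < 1 := by
    rw [← Real.sqrt_one]; exact Real.sqrt_lt_sqrt h1.le h2
  have a1 : 0 ≤ hh m ε c := div_nonneg (Real.arcsin_nonneg.2 h4.le) (by norm_num)
  have a2 : hh m ε c ≤ π / 4 := by
    unfold hh; linarith [Real.arcsin_le_pi_div_two (√(xi m ε c))]
  have hpi := Real.pi_pos
  refine ⟨Real.sin_nonneg_of_nonneg_of_le_pi a1 (by linarith), ?_, ?_⟩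
  · rw [← Real.cos_pi_div_two_sub]
    exact Real.cos_le_cos_of_nonneg_of_le_pi a1 (by linarith) (by linarith)
  · rw [← Real.sin_two_mul, hh, mul_div_cancel₀ _ (by norm_num : (2 : ℝ) ≠ 0),
      Real.sin_arcsin (by linarith) h3.le, Real.sq_sqrt h1.le]

theorem ww_pos (hε : 0 < ε) (hm : 4 * ε ≤ m) : 0 < ww m ε := by
  have : 0 < m := by linarith
  unfold ww; positivity

theorem contDiffAt_twH (hε : 0 < ε) (hm : 4 * ε ≤ m) (X : ℝ) {c : ℝ} (hc : c ∈ Ioo (m - ε / 2) (2 * m - 3 / 2 * ε)) :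
    ContDiffAt ℝ (⊤ : ℕ∞) (twH m ε) (X, c) := by
  obtain ⟨h0, -⟩ := xi_mem hε hm hc
  have hsnd : ContDiffAt ℝ (⊤ : ℕ∞) (fun p : ℝ × ℝ => p.2) (X, c) := contDiffAt_snd
  have h1 : ContDiffAt ℝ (⊤ : ℕ∞) (fun p : ℝ × ℝ => onoff m ε p.2) (X, c) :=
    (Real.smoothTransition.contDiff.contDiffAt).comp (X, c)
      ((hsnd.sub contDiffAt_const).div_const _)
  have h2 : ContDiffAt ℝ (⊤ : ℕ∞) (fun p : ℝ × ℝ => hh m ε p.2) (X, c) :=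
    ContDiffAt.comp (g := hh m ε) (X, c) (contDiffAt_hh hε hm hc) hsnd
  have h3 : ContDiffAt ℝ (⊤ : ℕ∞)
      (fun p : ℝ × ℝ => (p.1 / p.2 - Real.sin (hh m ε p.2) ^ 2) / ww m ε) (X, c) :=
    ((contDiffAt_fst.div hsnd h0.ne').sub (h2.sin.pow 2)).div_const _
  have h4 := (contDiff_ramp.contDiffAt (x := (X / c - Real.sin (hh m ε c) ^ 2) / ww m ε)).comp
    (X, c) h3
  exact ((contDiffAt_const.mul h1).mul (hsnd.mul contDiffAt_const)).mul (h3.sub h4)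

theorem fderiv_twH (hε : 0 < ε) (hm : 4 * ε ≤ m) (X : ℝ) {c : ℝ} (hc : c ∈ Ioo (m - ε / 2) (2 * m - 3 / 2 * ε)) :
    fderiv ℝ (twH m ε) (X, c) (1, 0) = π * onoff m ε c *
      (1 - Real.smoothTransition ((X / c - Real.sin (hh m ε c) ^ 2) / ww m ε)) := by
  obtain ⟨h0, -⟩ := xi_mem hε hm hc
  have hw := ww_pos hε hm
  have h1 : HasFDerivAt (twH m ε) (fderiv ℝ (twH m ε) (X, c)) (X, c) :=
    ((contDiffAt_twH hε hm X hc).differentiableAt (by simp)).hasFDerivAt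
  have h2 : HasDerivAt (fun X : ℝ => (X, c)) ((1 : ℝ), (0 : ℝ)) X :=
    (hasDerivAt_id X).prodMk (hasDerivAt_const X c)
  have h3 := h1.comp_hasDerivAt X h2
  have h4 : HasDerivAt (fun X : ℝ => (X / c - Real.sin (hh m ε c) ^ 2) / ww m ε)
      (1 / c / ww m ε) X := (((hasDerivAt_id X).div_const c).sub_const _).div_const _
  have h5 : HasDerivAt (fun X : ℝ => twH m ε (X, c)) _ X :=
    (h4.sub ((hasDerivAt_ramp _).comp X h4)).const_mul (π * onoff m ε c * (c * ww m ε))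
  rw [h3.unique h5]
  field_simp

theorem sympOn_twist (hε : 0 < ε) (hm : 4 * ε ≤ m) : SympOn (Iio (2 * m - 3 / 2 * ε)) (twist m ε) := by
  intro z hz
  rcases lt_or_ge (cc z) (m - ε / 4) with h | h
  · have : twist m ε =ᶠ[nhds z] id := by
      filter_upwards [(isOpen_lt contDiff_cc.continuous continuous_const).mem_nhds h] with y hy
      exact twist_low hε hy
    refine ⟨contDiffAt_id.congr_of_eventuallyEq this, fun v w => ?_⟩
    rw [this.fderiv_eq, fderiv_id]
    rfl
  · have hG : ∀ X, ∀ c ∈ Ioo (m - ε / 2) (2 * m - 3 / 2 * ε),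
        ContDiffAt ℝ (⊤ : ℕ∞) (rotH (hh m ε)) (X, c) := by
      intro X c hc
      exact ((contDiffAt_hh hε hm hc).comp (X, c) contDiffAt_snd).mul
        ((contDiffAt_const.mul contDiffAt_fst).sub contDiffAt_snd)
    have h1 := sympOn_rotG hG
    have h2 := sympOn_rotG (G := -rotH (hh m ε)) fun X c hc => (hG X c hc).neg
    have h3 := sympOn_tau fun X c hc => contDiffAt_twH (c := c) hε hm X hc
    exact h2.comp (h3.comp h1 (equiv1_rotG _)) ((equiv1_tau _).comp (equiv1_rotG _)) z
      ⟨by linarith, hz⟩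

end

/-! ### Where the half twist moves the slices -/

/-- The triangle inequality on the sphere, for points close to a disc centred at polar angle
`2h` with `S = sin h`, `C = cos h`. -/
theorem sphere_triangle {S C a b k : ℝ} (hS : 0 ≤ S) (hSC : S ≤ C) (h1 : S ^ 2 + C ^ 2 = 1)
    (ha : 0 ≤ a) (hb : 0 ≤ b) (hab : a ^ 2 + b ^ 2 = 1) (hk : 0 ≤ k) (hak : a ^ 2 ≤ S ^ 2 + k ^ 2) :
    C * a + S * b ≤ 2 * S * C + k := by
  have hC : 0 < C := by
    rcases lt_or_ge 0 C with h | h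
    · exact h
    · have : S = 0 := by linarith
      have : C = 0 := by linarith
      subst this; simp_all
  have hC1 : C ≤ 1 := by nlinarith
  rcases le_total a S with h | h
  · have hbC : C ≤ b := by
      refine le_of_sq_le_sq ?_ hb
      nlinarith
    have key : (S * (b - C)) * (b + C) ≤ (C * (S - a)) * (b + C) := by
      have e : (S * (b - C)) * (b + C) = S * (S - a) * (S + a) := by
        linear_combination S * hab - S * h1
      rw [e]
      have h3 : S * (S + a) ≤ C * (b + C) := by nlinarith
      nlinarith [mul_le_mul_of_nonneg_right h3 (sub_nonneg.2 h)]
    have := le_of_mul_le_mul_right key (by linarith)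
    linarith
  · have hbC : b ≤ C := by
      refine le_of_sq_le_sq ?_ hC.le
      nlinarith
    have haS : a ≤ S + k := by
      refine le_of_sq_le_sq ?_ (by linarith)
      nlinarith
    nlinarith

section
variable {m ε : ℝ}

/-- Up to a common phase, the flow `tau G` rotates the first coordinate by the derivative of `G` in
the first variable. -/
theorem tau_phase (G : ℝ × ℝ → ℝ) (z : Fin 2 → ℂ) {θ : ℝ}
    (h : fderiv ℝ G (π * ‖z 0‖ ^ 2, cc z) (1, 0) = θ) :
    ∃ e : ℂ, ‖e‖ = 1 ∧ tau G z 0 = e * (Complex.exp (θ * Complex.I) * z 0) ∧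
      tau G z 1 = e * z 1 := by
  refine ⟨Complex.exp ((fderiv ℝ G (π * ‖z 0‖ ^ 2, cc z) (0, 1) : ℝ) * Complex.I),
    Complex.norm_exp_ofReal_mul_I _, ?_, rfl⟩
  have h2 : fderiv ℝ G (π * ‖z 0‖ ^ 2, cc z) (1, 1) =
      θ + fderiv ℝ G (π * ‖z 0‖ ^ 2, cc z) (0, 1) := by
    rw [← h, ← map_add]; simp
  simp only [tau, Matrix.cons_val_zero, h2]
  push_cast
  rw [add_mul, Complex.exp_add]
  ring

set_option maxHeartbeats 1000000 in
/-- The twist moves the slice of the ellipsoid at level `cc z` inside a slightly larger disc. -/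
theorem twist_zero_le (hε : 0 < ε) (hm : 4 * ε ≤ m) {z : Fin 2 → ℂ}
    (hc : cc z ∈ Ioo (m - ε / 2) (2 * m - 3 / 2 * ε))
    (hz : π * ‖z 0‖ ^ 2 + cc z < 2 * m - 2 * ε) :
    π * ‖twist m ε z 0‖ ^ 2 ≤ 2 * m - ε / 2 - cc z := by
  obtain ⟨h0, h1, h2⟩ := xi_mem hε hm hc
  obtain ⟨s1, s2, s3⟩ := hh_facts hε hm hc
  have hw := ww_pos hε hm
  have hm0 : 0 < m := by linarith
  set Z := rotG (rotH (hh m ε)) z with hZ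
  have hcZ : cc Z = cc z := (equiv1_rotG _).cc_eq z
  have hT : twist m ε z = rotG (-rotH (hh m ε)) (tau (twH m ε) Z) := rfl
  have hD := fderiv_twH hε hm (π * ‖Z 0‖ ^ 2) hc
  set C := Real.cos (hh m ε (cc z)) with hC
  set S := Real.sin (hh m ε (cc z)) with hS
  rcases le_or_gt 1 ((π * ‖Z 0‖ ^ 2 / cc z - S ^ 2) / ww m ε) with ht | ht
  · rw [Real.smoothTransition.one_of_one_le ht, sub_self, mul_zero, ← hcZ] at hD
    obtain ⟨e, he, e0, e1⟩ := tau_phase _ _ hD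
    have : tau (twH m ε) Z = e • Z := by
      ext j; fin_cases j
      · simpa using e0
      · simpa using e1
    rw [hT, this, (equiv1_rotG _).smul_eq e _ he, hZ, rotG_neg]
    simp [he]
    linarith
  · have hcT : cc (tau (twH m ε) Z) = cc z := by rw [(equiv1_tau _).cc_eq, hcZ]
    have hdh : DifferentiableAt ℝ (-hh m ε) (cc (tau (twH m ε) Z)) := by
      rw [hcT]; exact ((contDiffAt_hh hε hm hc).neg).differentiableAt (by simp)
    obtain ⟨e, he, e0, -⟩ := rotG_rotH hdh
    rw [rotH_neg, hcT] at e0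
    simp only [Pi.neg_apply, Real.cos_neg, Real.sin_neg, ← hC, ← hS] at e0
    have hn : ‖twist m ε z 0‖ ≤ C * ‖Z 0‖ + S * ‖Z 1‖ := by
      rw [hT, e0, norm_mul, he, one_mul]
      refine (norm_sub_le _ _).trans (le_of_eq ?_)
      rw [norm_mul, norm_mul, norm_tau, norm_tau, Complex.norm_real, Complex.norm_real,
        Real.norm_eq_abs, Real.norm_eq_abs, abs_neg, abs_of_nonneg s1,
        abs_of_nonneg (s1.trans s2)]
    have hp := Real.pi_pos
    have hcd : π * ‖Z 0‖ ^ 2 + π * ‖Z 1‖ ^ 2 = cc z := hcZ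
    set ρ := √(cc z / π) with hρ
    have hρ0 : 0 < ρ := Real.sqrt_pos.2 (by positivity)
    have hρ2 : π * ρ ^ 2 = cc z := by
      rw [hρ, Real.sq_sqrt (by positivity)]; field_simp
    have hab : (‖Z 0‖ / ρ) ^ 2 + (‖Z 1‖ / ρ) ^ 2 = 1 := by
      rw [div_pow, div_pow, ← add_div, div_eq_one_iff_eq (by positivity)]
      have : π * (‖Z 0‖ ^ 2 + ‖Z 1‖ ^ 2) = π * ρ ^ 2 := by linarith
      exact mul_left_cancel₀ hp.ne' this
    have hk : 0 ≤ ε / (6 * m) := by positivity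
    have hak : (‖Z 0‖ / ρ) ^ 2 ≤ S ^ 2 + (ε / (6 * m)) ^ 2 := by
      have h5 : (‖Z 0‖ / ρ) ^ 2 = π * ‖Z 0‖ ^ 2 / cc z := by
        rw [← hρ2]; field_simp
      rw [div_lt_one hw] at ht
      rw [h5]; unfold ww at ht; linarith
    have htri := sphere_triangle s1 s2 (Real.sin_sq_add_cos_sq _) (by positivity) (by positivity)
      hab hk hak
    have h6 : ‖twist m ε z 0‖ ≤ ρ * (2 * S * C + ε / (6 * m)) := by
      refine hn.trans ?_
      calc C * ‖Z 0‖ + S * ‖Z 1‖ = ρ * (C * (‖Z 0‖ / ρ) + S * (‖Z 1‖ / ρ)) := by field_simp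
        _ ≤ _ := mul_le_mul_of_nonneg_left htri hρ0.le
    have h7 : ‖twist m ε z 0‖ ^ 2 ≤ (ρ * (2 * S * C + ε / (6 * m))) ^ 2 :=
      pow_le_pow_left₀ (norm_nonneg _) h6 2
    have h8 : 2 * S * C ≤ 1 := by
      have : (2 * S * C) ^ 2 ≤ 1 ^ 2 := by rw [s3]; linarith
      exact le_of_sq_le_sq this (by norm_num)
    have h9 : ε / (6 * m) ≤ 1 := by rw [div_le_one (by positivity)]; linarith
    have h10 : (2 * S * C + ε / (6 * m)) ^ 2 ≤ xi m ε (cc z) + 3 * (ε / (6 * m)) := by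
      rw [← s3]; nlinarith
    have h11 : cc z * (3 * (ε / (6 * m))) ≤ ε := by
      rw [show cc z * (3 * (ε / (6 * m))) = cc z / (2 * m) * ε by field_simp; norm_num]
      have : cc z / (2 * m) ≤ 1 := by rw [div_le_one (by positivity)]; linarith [hc.2]
      nlinarith
    have h12 : cc z * xi m ε (cc z) = 2 * m - 3 / 2 * ε - cc z := by
      unfold xi; field_simp
    calc π * ‖twist m ε z 0‖ ^ 2 ≤ π * (ρ * (2 * S * C + ε / (6 * m))) ^ 2 := by gcongr
      _ = cc z * (2 * S * C + ε / (6 * m)) ^ 2 := by rw [mul_pow, ← mul_assoc, hρ2]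
      _ ≤ cc z * (xi m ε (cc z) + 3 * (ε / (6 * m))) := by gcongr
      _ ≤ _ := by rw [mul_add, h12]; linarith

set_option maxHeartbeats 1000000 in
/-- On the ellipsoid the twist keeps the upper levels away from the axis `z 0 = 0`. -/
theorem twist_zero_ne (hε : 0 < ε) (hm : 4 * ε ≤ m) {z : Fin 2 → ℂ}
    (hc : cc z ∈ Ico (m - ε / 8) (2 * m - 3 / 2 * ε))
    (hz : π * ‖z 0‖ ^ 2 + cc z < 2 * m - 2 * ε) :
    twist m ε z 0 ≠ 0 := by
  intro hT0
  have hon := onoff_one hε hc.1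
  replace hc : cc z ∈ Ioo (m - ε / 2) (2 * m - 3 / 2 * ε) := ⟨by linarith [hc.1], hc.2⟩
  obtain ⟨h0, h1, h2⟩ := xi_mem hε hm hc
  obtain ⟨s1, s2, s3⟩ := hh_facts hε hm hc
  have hw := ww_pos hε hm
  have hm0 : 0 < m := by linarith
  have hp := Real.pi_pos
  set Z := rotG (rotH (hh m ε)) z with hZ
  have hcZ : cc Z = cc z := (equiv1_rotG _).cc_eq z
  have hT : twist m ε z = rotG (-rotH (hh m ε)) (tau (twH m ε) Z) := rfl
  have hD := fderiv_twH hε hm (π * ‖Z 0‖ ^ 2) hc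
  have hcT : cc (tau (twH m ε) Z) = cc z := by rw [(equiv1_tau _).cc_eq, hcZ]
  have hdh : DifferentiableAt ℝ (-hh m ε) (cc (tau (twH m ε) Z)) := by
    rw [hcT]; exact ((contDiffAt_hh hε hm hc).neg).differentiableAt (by simp)
  obtain ⟨e, he, e0, -⟩ := rotG_rotH hdh
  obtain ⟨e', he', f0, f1⟩ := rotG_rotH ((contDiffAt_hh hε hm hc).differentiableAt (by simp))
  rw [rotH_neg, hcT, ← hT, hT0] at e0
  rw [← hZ] at f0 f1
  have hsc : Real.sin (hh m ε (cc z)) ^ 2 + Real.cos (hh m ε (cc z)) ^ 2 = 1 :=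
    Real.sin_sq_add_cos_sq _
  simp only [Pi.neg_apply, Real.cos_neg, Real.sin_neg] at e0
  generalize Real.cos (hh m ε (cc z)) = C at *
  generalize Real.sin (hh m ε (cc z)) = S at *
  have hene : e ≠ 0 := by rintro rfl; simp at he
  have hene' : e' ≠ 0 := by rintro rfl; simp at he'
  have g0 : (C : ℂ) * tau (twH m ε) Z 0 = -(S : ℂ) * tau (twH m ε) Z 1 := by
    have := (mul_eq_zero.1 e0.symm).resolve_left hene
    push_cast at this
    linear_combination this
  have g1 : C ^ 2 * ‖Z 0‖ ^ 2 = S ^ 2 * ‖Z 1‖ ^ 2 := by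
    have := congrArg (fun x => ‖x‖ ^ 2) g0
    simpa [norm_tau, mul_pow] using this
  have hcd : π * ‖Z 0‖ ^ 2 + π * ‖Z 1‖ ^ 2 = cc z := hcZ
  have g2 : π * ‖Z 0‖ ^ 2 / cc z = S ^ 2 := by
    rw [div_eq_iff h0.ne', ← hcd]
    linear_combination π * g1 - π * ‖Z 0‖ ^ 2 * hsc
  rw [g2, sub_self, zero_div, Real.smoothTransition.zero, hon, sub_zero, mul_one, mul_one,
    ← hcZ] at hD
  obtain ⟨e'', he'', k0, k1⟩ := tau_phase _ _ hD
  have hene'' : e'' ≠ 0 := by rintro rfl; simp at he''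
  rw [Complex.exp_pi_mul_I] at k0
  rw [k0, k1, f0, f1] at g0
  have g3 : ((C ^ 2 - S ^ 2 : ℝ) : ℂ) * z 0 = ((2 * S * C : ℝ) : ℂ) * z 1 := by
    have : e'' * e' * (((C ^ 2 - S ^ 2 : ℝ) : ℂ) * z 0) =
        e'' * e' * (((2 * S * C : ℝ) : ℂ) * z 1) := by
      push_cast
      linear_combination -g0
    exact mul_left_cancel₀ (mul_ne_zero hene'' hene') this
  have g4 : (C ^ 2 - S ^ 2) ^ 2 * ‖z 0‖ ^ 2 = (2 * S * C) ^ 2 * ‖z 1‖ ^ 2 := by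
    have := congrArg (fun x => ‖x‖ ^ 2) g3
    simp only [norm_mul, Complex.norm_real, mul_pow, Real.norm_eq_abs, sq_abs] at this
    linarith
  have g5 : (C ^ 2 - S ^ 2) ^ 2 = 1 - xi m ε (cc z) := by
    rw [← s3]
    have : (S ^ 2 + C ^ 2) ^ 2 = 1 := by rw [hsc]; norm_num
    linarith
  rw [g5, s3] at g4
  have h12 : cc z * xi m ε (cc z) = 2 * m - 3 / 2 * ε - cc z := by
    unfold xi; field_simp
  have hcz : cc z = π * ‖z 0‖ ^ 2 + π * ‖z 1‖ ^ 2 := rfl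
  have h13 : π * ‖z 0‖ ^ 2 = cc z * xi m ε (cc z) := by
    calc π * ‖z 0‖ ^ 2 = π * ((1 - xi m ε (cc z)) * ‖z 0‖ ^ 2) +
          π * ‖z 0‖ ^ 2 * xi m ε (cc z) := by ring
      _ = (π * ‖z 0‖ ^ 2 + π * ‖z 1‖ ^ 2) * xi m ε (cc z) := by rw [g4]; ring
      _ = _ := by rw [← hcz]
  linarith

end

/-! ### Sliding the slices by a symplectic shear -/

/-- The cut-off shear profile: vanishes for `c ≤ m - ε/16` and is close to `κ (c - m)₊`. -/
def ff (m ε κ c : ℝ) : ℝ := κ * (ε / 16) * ramp ((c - m) / (ε / 16) + 1)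

/-- The derivative of `ff` in `c`. -/
def ffd (m ε κ c : ℝ) : ℝ := κ * Real.smoothTransition ((c - m) / (ε / 16) + 1)

/-- The points of `UU (m - ε)` above the level at which the twist is fully switched on. -/
def HR (m ε : ℝ) (z : Fin 2 → ℂ) : Prop :=
  m - ε / 8 < cc z ∧ π * ‖z 0‖ ^ 2 + cc z < 2 * m - 2 * ε

theorem isOpen_HR (m ε : ℝ) : IsOpen {z | HR m ε z} :=
  (isOpen_lt continuous_const contDiff_cc.continuous).inter
    (isOpen_lt ((contDiff_X 0).continuous.add contDiff_cc.continuous) continuous_const)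

theorem contDiff_ff (m ε κ : ℝ) : ContDiff ℝ (⊤ : ℕ∞) (ff m ε κ) :=
  contDiff_const.mul (contDiff_ramp.comp
    (((contDiff_id.sub contDiff_const).div_const _).add contDiff_const))

theorem contDiff_ffd (m ε κ : ℝ) : ContDiff ℝ (⊤ : ℕ∞) (ffd m ε κ) :=
  contDiff_const.mul (Real.smoothTransition.contDiff.comp
    (((contDiff_id.sub contDiff_const).div_const _).add contDiff_const))

theorem hasDerivAt_ff {m ε : ℝ} (hε : 0 < ε) (κ c : ℝ) :
    HasDerivAt (ff m ε κ) (ffd m ε κ c) c := by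
  have h1 : HasDerivAt (fun c : ℝ => (c - m) / (ε / 16) + 1) (1 / (ε / 16)) c :=
    (((hasDerivAt_id c).sub_const m).div_const _).add_const 1
  have h2 := ((hasDerivAt_ramp ((c - m) / (ε / 16) + 1)).comp c h1).const_mul (κ * (ε / 16))
  refine h2.congr_deriv ?_
  unfold ffd; field_simp

theorem arg_low {m ε c : ℝ} (hε : 0 < ε) (hc : c ≤ m - ε / 16) : (c - m) / (ε / 16) + 1 ≤ 0 := by
  have : (c - m) / (ε / 16) ≤ -1 := by rw [div_le_iff₀ (by positivity)]; linarith
  linarith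

theorem ff_low {m ε κ c : ℝ} (hε : 0 < ε) (hc : c ≤ m - ε / 16) : ff m ε κ c = 0 := by
  unfold ff
  rw [ramp_nonpos (arg_low hε hc), mul_zero]

theorem ffd_low {m ε κ c : ℝ} (hε : 0 < ε) (hc : c ≤ m - ε / 16) : ffd m ε κ c = 0 := by
  unfold ffd
  rw [Real.smoothTransition.zero_of_nonpos (arg_low hε hc), mul_zero]

theorem ff_nonneg {m ε κ c : ℝ} (hε : 0 < ε) (hκ : 0 ≤ κ) : 0 ≤ ff m ε κ c :=
  mul_nonneg (by positivity) (ramp_nonneg _)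

theorem le_ff {m ε κ c : ℝ} (hε : 0 < ε) (hκ : 0 ≤ κ) : κ * (c - m) ≤ ff m ε κ c := by
  have h := mul_le_mul_of_nonneg_left (sub_one_le_ramp ((c - m) / (ε / 16) + 1))
    (show 0 ≤ κ * (ε / 16) by positivity)
  refine le_trans (le_of_eq ?_) h
  field_simp
  ring

theorem ff_le {m ε κ c : ℝ} (hε : 0 < ε) (hκ : 0 ≤ κ) :
    ff m ε κ c ≤ κ * max (c - m + ε / 16) 0 := by
  have h := mul_le_mul_of_nonneg_left (ramp_le ((c - m) / (ε / 16) + 1))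
    (show 0 ≤ κ * (ε / 16) by positivity)
  refine h.trans (le_of_eq ?_)
  rw [mul_assoc, mul_max_of_nonneg _ _ (by positivity : 0 ≤ ε / 16)]
  congr 2
  · field_simp
  · simp

/-- The reduced position of `z`, invariant under the diagonal circle action. -/
def uu (z : Fin 2 → ℂ) : ℂ := z 0 * (starRingEnd ℂ) (z 1) / ‖z 1‖

theorem uu_smul (e : ℂ) (z : Fin 2 → ℂ) (he : ‖e‖ = 1) : uu (e • z) = uu z := by
  have h1 : (starRingEnd ℂ) e * e = 1 := by rw [Complex.conj_mul', he]; simp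
  simp only [uu, Pi.smul_apply, smul_eq_mul, norm_mul, he, map_mul, one_mul]
  congr 1
  linear_combination (z 0 * (starRingEnd ℂ) (z 1)) * h1

theorem cc_smul (e : ℂ) (z : Fin 2 → ℂ) (he : ‖e‖ = 1) : cc (e • z) = cc z := by
  simp [cc, he]

/-- The section of `z ↦ (uu z, cc z)` whose second coordinate is a positive real. -/
def sec (p : ℂ × ℝ) : Fin 2 → ℂ := ![p.1, ((√(p.2 / π - ‖p.1‖ ^ 2) : ℝ) : ℂ)]

theorem sec_uu {z : Fin 2 → ℂ} (hz : z 1 ≠ 0) :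
    z = (z 1 / ‖z 1‖) • sec (uu z, cc z) := by
  have hn : ((‖z 1‖ : ℝ) : ℂ) ≠ 0 := by simpa using hz
  have hc : (starRingEnd ℂ) (z 1) * z 1 = (‖z 1‖ : ℂ) ^ 2 := by rw [Complex.conj_mul']
  have hu : ‖uu z‖ = ‖z 0‖ := by
    simp only [uu, norm_div, norm_mul, RCLike.norm_conj, Complex.norm_real, norm_norm]
    have : ‖z 1‖ ≠ 0 := by simpa using hz
    field_simp
  have hs : √(cc z / π - ‖uu z‖ ^ 2) = ‖z 1‖ := by
    rw [hu, show cc z / π - ‖z 0‖ ^ 2 = ‖z 1‖ ^ 2 by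
      unfold cc; field_simp; ring, Real.sqrt_sq (norm_nonneg _)]
  ext j
  fin_cases j
  · simp only [sec, Fin.zero_eta, Pi.smul_apply, Matrix.cons_val_zero, smul_eq_mul, uu]
    field_simp
    linear_combination -z 0 * hc
  · simp only [sec, Fin.mk_one, Pi.smul_apply, Matrix.cons_val_one, Matrix.cons_val_fin_one,
      smul_eq_mul, hs]
    field_simp

theorem HR.sub_pos {m ε : ℝ} (hε : 0 < ε) {z : Fin 2 → ℂ} (hz : HR m ε z) :
    0 < π * ‖z 1‖ ^ 2 := by
  have h := hz.2; have h1 := hz.1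
  unfold cc at *
  linarith

theorem HR.ne {m ε : ℝ} (hε : 0 < ε) {z : Fin 2 → ℂ} (hz : HR m ε z) : z 1 ≠ 0 := by
  intro h
  have := hz.sub_pos hε
  simp [h] at this

theorem HR.cc_lt {m ε : ℝ} (hε : 0 < ε) {z : Fin 2 → ℂ} (hz : HR m ε z) :
    cc z < 2 * m - 3 / 2 * ε := by
  have h := hz.2
  have : 0 ≤ π * ‖z 0‖ ^ 2 := by positivity
  linarith

theorem HR.x_le {m ε : ℝ} (hε : 0 < ε) (hm : 4 * ε ≤ m) {z : Fin 2 → ℂ} (hz : HR m ε z) :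
    π * ‖twist m ε z 0‖ ^ 2 ≤ 2 * m - ε / 2 - cc z :=
  twist_zero_le hε hm ⟨by linarith [hz.1], hz.cc_lt hε⟩ hz.2

theorem HR.ne0 {m ε : ℝ} (hε : 0 < ε) (hm : 4 * ε ≤ m) {z : Fin 2 → ℂ} (hz : HR m ε z) :
    twist m ε z 0 ≠ 0 :=
  twist_zero_ne hε hm ⟨hz.1.le, hz.cc_lt hε⟩ hz.2

theorem HR.y_ge {m ε : ℝ} (hε : 0 < ε) (hm : 4 * ε ≤ m) {z : Fin 2 → ℂ} (hz : HR m ε z) :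
    2 * (cc z - m) + ε / 2 ≤ π * ‖twist m ε z 1‖ ^ 2 := by
  have h1 := hz.x_le hε hm
  have h2 := (equiv1_twist m ε).cc_eq z
  have h3 : cc (twist m ε z) = π * ‖twist m ε z 0‖ ^ 2 + π * ‖twist m ε z 1‖ ^ 2 := rfl
  linarith

theorem HR.ne1 {m ε : ℝ} (hε : 0 < ε) (hm : 4 * ε ≤ m) {z : Fin 2 → ℂ} (hz : HR m ε z) :
    twist m ε z 1 ≠ 0 := by
  intro h
  have := hz.y_ge hε hm
  simp [h] at this
  linarith [hz.1]

theorem HR.ff_lt {m ε κ : ℝ} (hε : 0 < ε) (hm : 4 * ε ≤ m) (hκ : 0 ≤ κ) (hκ2 : κ ≤ 2)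
    {z : Fin 2 → ℂ} (hz : HR m ε z) : ff m ε κ (cc z) < π * ‖twist m ε z 1‖ ^ 2 := by
  have h1 := hz.y_ge hε hm
  have h2 := ff_le (m := m) (c := cc z) hε hκ
  have h3 : κ * max (cc z - m + ε / 16) 0 ≤ 2 * max (cc z - m + ε / 16) 0 :=
    mul_le_mul_of_nonneg_right hκ2 (le_max_right _ _)
  have h4 := hz.1
  rcases max_cases (cc z - m + ε / 16) 0 with ⟨h, -⟩ | ⟨h, -⟩ <;> rw [h] at h2 h3 <;> linarith

/-- A primitive `A` of the difference `d arg w₀ - d arg w₁` of the angular forms of the twisted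
point `w`, invariant under the diagonal circle action. It exists because the relevant region of
the reduced space is convex. -/
theorem exists_angle {m ε : ℝ} (hε : 0 < ε) (hm : 4 * ε ≤ m) :
    ∃ A : (Fin 2 → ℂ) → ℝ, (∀ z, HR m ε z → ContDiffAt ℝ (⊤ : ℕ∞) A z ∧ ∀ v, fderiv ℝ A z v =
      ((twist m ε z 0)⁻¹ * fderiv ℝ (twist m ε) z v 0).im -
        ((twist m ε z 1)⁻¹ * fderiv ℝ (twist m ε) z v 1).im) ∧
      ∀ (e : ℂ) z, ‖e‖ = 1 → A (e • z) = A z := by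
  set T := twist m ε with hT
  set W : Set (ℂ × ℝ) := {p | m - ε / 8 < p.2 ∧ π * ‖p.1‖ ^ 2 + p.2 < 2 * m - 2 * ε} with hW
  have hWo : IsOpen W := (isOpen_lt continuous_const continuous_snd).inter
    (isOpen_lt (f := fun p : ℂ × ℝ => π * ‖p.1‖ ^ 2 + p.2) (by fun_prop) continuous_const)
  have hWc : Convex ℝ W := by
    refine Convex.inter (convex_halfSpace_gt (f := fun p : ℂ × ℝ => p.2)
      (LinearMap.snd ℝ ℂ ℝ).isLinear _) ?_
    have h1 : ConvexOn ℝ (univ : Set (ℂ × ℝ)) fun p => π * ‖p.1‖ ^ 2 + p.2 := by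
      have h2 : ConvexOn ℝ (univ : Set (ℂ × ℝ)) fun p => ‖p.1‖ ^ 2 :=
        ((convexOn_norm convex_univ).comp_linearMap (LinearMap.fst ℝ ℂ ℝ)).pow
          (fun _ _ => norm_nonneg _) 2
      exact (h2.smul Real.pi_pos.le).add ((LinearMap.snd ℝ ℂ ℝ).convexOn convex_univ)
    have := h1.convex_lt (2 * m - 2 * ε)
    simp only [mem_univ, true_and] at this
    exact this
  have hpos : ∀ p ∈ W, 0 < p.2 / π - ‖p.1‖ ^ 2 := by
    rintro p ⟨h1, h2⟩
    have : 0 < (p.2 - π * ‖p.1‖ ^ 2) / π := div_pos (by linarith) Real.pi_pos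
    refine this.trans_eq ?_
    field_simp
  have hcs : ∀ p ∈ W, cc (sec p) = p.2 := by
    intro p hp
    simp only [cc, sec, Matrix.cons_val_zero, Matrix.cons_val_one, Matrix.cons_val_fin_one,
      Complex.norm_real, Real.norm_eq_abs, sq_abs, Real.sq_sqrt (hpos p hp).le]
    field_simp
    ring
  have hHs : ∀ p ∈ W, HR m ε (sec p) := by
    intro p hp
    refine ⟨by rw [hcs p hp]; exact hp.1, by rw [hcs p hp]; exact hp.2⟩
  have hsecs : ∀ p ∈ W, ContDiffAt ℝ (⊤ : ℕ∞) sec p := by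
    intro p hp
    rw [contDiffAt_pi]
    intro j
    fin_cases j
    · exact contDiffAt_fst
    · refine Complex.ofRealCLM.contDiff.contDiffAt.comp p (ContDiffAt.sqrt ?_ (hpos p hp).ne')
      exact (contDiffAt_snd.div_const π).sub (contDiffAt_fst.norm_sq ℝ)
  have hTs : ∀ z, HR m ε z → ContDiffAt ℝ (⊤ : ℕ∞) T z := fun z hz =>
    (sympOn_twist hε hm z (hz.cc_lt hε)).1
  set q : (Fin 2 → ℂ) → ℂ := fun z => T z 0 * (starRingEnd ℂ) (T z 1) with hq
  have hqs : ∀ z, HR m ε z → ContDiffAt ℝ (⊤ : ℕ∞) q z := fun z hz =>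
    ((contDiffAt_pi.1 (hTs z hz)) 0).mul
      (Complex.conjCLE.contDiff.contDiffAt.comp z ((contDiffAt_pi.1 (hTs z hz)) 1))
  have hq0 : ∀ z, HR m ε z → q z ≠ 0 := fun z hz =>
    mul_ne_zero (hz.ne0 hε hm) (by simpa using hz.ne1 hε hm)
  have hqsec : ∀ p ∈ W, ContDiffAt ℝ (⊤ : ℕ∞) (fun p => q (sec p)) p := fun p hp =>
    (hqs _ (hHs p hp)).comp p (hsecs p hp)
  obtain ⟨L, hL, hL'⟩ := exists_smooth_log (q := fun p => q (sec p)) hWc hWo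
    (fun p hp => (hqsec p hp).contDiffWithinAt) (fun p hp => hq0 _ (hHs p hp))
  set g : (Fin 2 → ℂ) → ℂ × ℝ := fun z => (uu z, cc z) with hg
  have hun : ∀ z : Fin 2 → ℂ, z 1 ≠ 0 → ‖uu z‖ = ‖z 0‖ := by
    intro z hz
    simp only [uu, norm_div, norm_mul, RCLike.norm_conj, Complex.norm_real, norm_norm]
    have : ‖z 1‖ ≠ 0 := by simpa using hz
    field_simp
  have hgW : ∀ z, HR m ε z → g z ∈ W := fun z hz =>
    ⟨hz.1, by simp only [hg, hun z (hz.ne hε)]; exact hz.2⟩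
  have hgs : ∀ z, HR m ε z → ContDiffAt ℝ (⊤ : ℕ∞) g z := by
    intro z hz
    have h1 := hz.ne hε
    refine ContDiffAt.prodMk ?_ contDiff_cc.contDiffAt
    have hn : ContDiffAt ℝ (⊤ : ℕ∞) (fun z : Fin 2 → ℂ => ((‖z 1‖ : ℝ) : ℂ)) z :=
      Complex.ofRealCLM.contDiff.contDiffAt.comp z
        ((contDiff_apply ℝ ℂ (1 : Fin 2)).contDiffAt.norm ℝ h1)
    have hm1 : ContDiffAt ℝ (⊤ : ℕ∞) (fun z : Fin 2 → ℂ => z 0 * (starRingEnd ℂ) (z 1)) z :=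
      (contDiff_apply ℝ ℂ (0 : Fin 2)).contDiffAt.mul
        (Complex.conjCLE.contDiff.contDiffAt.comp z (contDiff_apply ℝ ℂ (1 : Fin 2)).contDiffAt)
    change ContDiffAt ℝ (⊤ : ℕ∞) uu z
    rw [show uu = fun z : Fin 2 → ℂ => z 0 * (starRingEnd ℂ) (z 1) * ((‖z 1‖ : ℝ) : ℂ)⁻¹ from
      funext fun z => div_eq_mul_inv _ _]
    exact hm1.mul (hn.inv (by simpa using h1))
  have hqg : ∀ z, HR m ε z → q z = q (sec (g z)) := by
    intro z hz
    have h1 := hz.ne hε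
    have he : ‖z 1 / (‖z 1‖ : ℂ)‖ = 1 := by
      rw [norm_div, Complex.norm_real, norm_norm, div_self (by simpa using h1)]
    have h2 : T z = (z 1 / (‖z 1‖ : ℂ)) • T (sec (g z)) := by
      conv_lhs => rw [sec_uu h1]
      exact (equiv1_twist m ε).smul_eq _ _ he
    have h3 : (starRingEnd ℂ) (z 1 / (‖z 1‖ : ℂ)) * (z 1 / (‖z 1‖ : ℂ)) = 1 := by
      rw [Complex.conj_mul', he]; simp
    simp only [hq]
    rw [h2]
    simp only [Pi.smul_apply, smul_eq_mul, map_mul (starRingEnd ℂ)]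
    linear_combination (T (sec (g z)) 0 * (starRingEnd ℂ) (T (sec (g z)) 1)) * h3
  refine ⟨fun z => (L (g z)).im, fun z hz => ⟨?_, fun v => ?_⟩, fun e z he => ?_⟩
  · exact Complex.imCLM.contDiff.contDiffAt.comp z
      (((hL (g z) (hgW z hz)).contDiffAt (hWo.mem_nhds (hgW z hz))).comp z (hgs z hz))
  · have hgd := ((hgs z hz).differentiableAt (by simp)).hasFDerivAt
    have h1 : HasFDerivAt (fun z => (L (g z)).im) _ z :=
      Complex.imCLM.hasFDerivAt.comp z ((hL' (g z) (hgW z hz)).comp z hgd)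
    have h2 : fderiv ℝ q z v = fderiv ℝ (fun p => q (sec p)) (g z) (fderiv ℝ g z v) := by
      have : q =ᶠ[nhds z] fun z => q (sec (g z)) := by
        filter_upwards [(isOpen_HR m ε).mem_nhds hz] with y hy using hqg y hy
      rw [this.fderiv_eq]
      have hcmp : HasFDerivAt (fun z => q (sec (g z))) _ z :=
        ((hqsec _ (hgW z hz)).differentiableAt (by simp)).hasFDerivAt.comp z hgd
      rw [hcmp.fderiv]
      rfl
    have hTd := ((hTs z hz).differentiableAt (by simp)).hasFDerivAt
    have h3 : fderiv ℝ q z v = T z 0 * (starRingEnd ℂ) (fderiv ℝ T z v 1) +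
        (starRingEnd ℂ) (T z 1) * fderiv ℝ T z v 0 := by
      have e0 := (hasFDerivAt_pi'.1 hTd) 0
      have e1 := Complex.conjCLE.hasFDerivAt.comp z ((hasFDerivAt_pi'.1 hTd) 1)
      have := e0.mul e1
      rw [show q = _ from rfl] at *
      erw [this.fderiv]
      simp
    rw [h1.fderiv]
    simp only [ContinuousLinearMap.comp_apply, smul_apply, Complex.imCLM_apply, smul_eq_mul]
    rw [← h2, h3, ← hqg z hz]
    have n0 := hz.ne0 hε hm
    have n1 := hz.ne1 hε hm
    rw [← hT] at n0 n1
    have n2 : (starRingEnd ℂ) (T z 1) ≠ 0 := by simpa using n1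
    have h4 : (q z)⁻¹ * (T z 0 * (starRingEnd ℂ) (fderiv ℝ T z v 1) +
        (starRingEnd ℂ) (T z 1) * fderiv ℝ T z v 0) =
        (T z 0)⁻¹ * fderiv ℝ T z v 0 + (starRingEnd ℂ) ((T z 1)⁻¹ * fderiv ℝ T z v 1) := by
      simp only [hq, map_mul, map_inv₀]
      field_simp
      ring
    rw [h4, Complex.add_im, Complex.conj_im]
    ring
  · simp only [hg, uu_smul e z he, cc_smul e z he]

/-! ### The shear and the resulting embedding -/

/-- The area form evaluated on the derivative of `e^{iσ} r w`, in polar coordinates: `X` is the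
derivative of `π r² |w|²`, and `Im (d / w) + s` is the derivative of the argument. -/
theorem polar_im {w e : ℂ} (he : ‖e‖ = 1) (hw : w ≠ 0) {r dr dr' s s' X X' : ℝ} {d d' : ℂ}
    (hX : 2 * π * (r * dr * ‖w‖ ^ 2 + r ^ 2 * ((starRingEnd ℂ) w * d).re) = X)
    (hX' : 2 * π * (r * dr' * ‖w‖ ^ 2 + r ^ 2 * ((starRingEnd ℂ) w * d').re) = X') :
    2 * π * ((starRingEnd ℂ) (e * ((s : ℂ) * Complex.I * r * w + dr * w + r * d)) *
      (e * ((s' : ℂ) * Complex.I * r * w + dr' * w + r * d'))).im =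
      X * ((w⁻¹ * d').im + s') - X' * ((w⁻¹ * d).im + s) := by
  obtain ⟨α, rfl⟩ : ∃ α, d = w * α := ⟨w⁻¹ * d, by field_simp⟩
  obtain ⟨α', rfl⟩ : ∃ α, d' = w * α := ⟨w⁻¹ * d', by field_simp⟩
  have h1 : (starRingEnd ℂ) e * e = 1 := by rw [Complex.conj_mul', he]; simp
  have h2 : (starRingEnd ℂ) w * w = ((‖w‖ ^ 2 : ℝ) : ℂ) := by rw [Complex.conj_mul']; simp
  rw [inv_mul_cancel_left₀ hw, inv_mul_cancel_left₀ hw]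
  rw [← mul_assoc, h2, Complex.re_ofReal_mul] at hX hX'
  have h3 : (starRingEnd ℂ) (e * ((s : ℂ) * Complex.I * r * w + dr * w + r * (w * α))) *
      (e * ((s' : ℂ) * Complex.I * r * w + dr' * w + r * (w * α'))) =
      ((‖w‖ ^ 2 : ℝ) : ℂ) * ((starRingEnd ℂ) ((s : ℂ) * Complex.I * r + dr + r * α) *
        ((s' : ℂ) * Complex.I * r + dr' + r * α')) := by
    rw [← h2]
    simp only [map_mul, map_add]
    linear_combination ((starRingEnd ℂ) w * w) * ((starRingEnd ℂ) ((s : ℂ)) *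
      (starRingEnd ℂ) Complex.I * (starRingEnd ℂ) (r : ℂ) + (starRingEnd ℂ) (dr : ℂ) +
      (starRingEnd ℂ) (r : ℂ) * (starRingEnd ℂ) α) *
        ((s' : ℂ) * Complex.I * r + dr' + r * α') * h1
  rw [h3, Complex.im_ofReal_mul, ← hX, ← hX']
  simp
  ring

/-- The derivative of `e^{iσ} r w`. -/
theorem hasFDerivAt_polar {E : Type*} [NormedAddCommGroup E] [NormedSpace ℝ E] {σ r : E → ℝ}
    {w : E → ℂ} {σ' r' : E →L[ℝ] ℝ} {w' : E →L[ℝ] ℂ} {z : E} (h1 : HasFDerivAt σ σ' z)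
    (h2 : HasFDerivAt r r' z) (h3 : HasFDerivAt w w' z) :
    ∃ D : E →L[ℝ] ℂ, HasFDerivAt
      (fun z => Complex.exp ((σ z : ℂ) * Complex.I) * ((r z : ℂ) * w z)) D z ∧
      ∀ v, D v = Complex.exp ((σ z : ℂ) * Complex.I) *
        ((σ' v : ℂ) * Complex.I * r z * w z + (r' v : ℂ) * w z + r z * w' v) := by
  have e1 : HasFDerivAt (fun z => Complex.exp ((σ z : ℂ) * Complex.I)) _ z :=
    ((Complex.ofRealCLM.hasFDerivAt.comp z h1).mul_const Complex.I).cexp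
  have e2 : HasFDerivAt (fun z => (r z : ℂ)) _ z := Complex.ofRealCLM.hasFDerivAt.comp z h2
  refine ⟨_, e1.mul (e2.mul h3), fun v => ?_⟩
  simp
  ring

theorem hasFDerivAt_normSq {E : Type*} [NormedAddCommGroup E] [NormedSpace ℝ E]
    {w : E → ℂ} {w' : E →L[ℝ] ℂ} {z : E} (h : HasFDerivAt w w' z) :
    ∃ D : E →L[ℝ] ℝ, HasFDerivAt (fun z => π * ‖w z‖ ^ 2) D z ∧
      ∀ v, D v = 2 * π * ((starRingEnd ℂ) (w z) * w' v).re := by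
  refine ⟨_, h.norm_sq.const_mul π, fun v => ?_⟩
  simp [Complex.inner]
  ring

theorem radial_deriv {E : Type*} [NormedAddCommGroup E] [NormedSpace ℝ E] {r g : E → ℝ}
    {w : E → ℂ} {g' r' : E →L[ℝ] ℝ} {w' : E →L[ℝ] ℂ} {z : E}
    (h2 : HasFDerivAt r r' z) (h3 : HasFDerivAt w w' z) (h4 : HasFDerivAt g g' z)
    (heq : (fun z => r z ^ 2 * (π * ‖w z‖ ^ 2)) =ᶠ[nhds z] g) (v : E) :
    2 * π * (r z * r' v * ‖w z‖ ^ 2 + r z ^ 2 * ((starRingEnd ℂ) (w z) * w' v).re) = g' v := by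
  obtain ⟨D, hD, hDv⟩ := hasFDerivAt_normSq h3
  have h5 := (h2.pow 2).mul hD
  have h6 := (h4.congr_of_eventuallyEq heq).unique h5
  rw [h6]
  simp [hDv]
  ring

/-- The shear: moves area `ff (cc z)` from the second coordinate of the twisted point to the
first, with the phase that makes it symplectic. -/
def shear (m ε κ : ℝ) (A : (Fin 2 → ℂ) → ℝ) (z : Fin 2 → ℂ) : Fin 2 → ℂ :=
  ![Complex.exp (((-(ffd m ε κ (cc z) * A z) : ℝ) : ℂ) * Complex.I) *
      (((√(1 + ff m ε κ (cc z) / (π * ‖twist m ε z 0‖ ^ 2)) : ℝ) : ℂ) * twist m ε z 0),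
    Complex.exp (((-(ffd m ε κ (cc z) * A z) : ℝ) : ℂ) * Complex.I) *
      (((√(1 - ff m ε κ (cc z) / (π * ‖twist m ε z 1‖ ^ 2)) : ℝ) : ℂ) * twist m ε z 1)]

theorem shear_low {m ε κ : ℝ} {A : (Fin 2 → ℂ) → ℝ} (hε : 0 < ε) {z : Fin 2 → ℂ}
    (hz : cc z ≤ m - ε / 16) : shear m ε κ A z = twist m ε z := by
  ext j
  fin_cases j <;> simp [shear, ff_low hε hz, ffd_low hε hz]

section
variable {m ε κ : ℝ} {A : (Fin 2 → ℂ) → ℝ}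

theorem shear_radial0 (hε : 0 < ε) (hm : 4 * ε ≤ m) (hκ : 0 ≤ κ) {z : Fin 2 → ℂ}
    (hz : HR m ε z) : 0 < 1 + ff m ε κ (cc z) / (π * ‖twist m ε z 0‖ ^ 2) ∧
    √(1 + ff m ε κ (cc z) / (π * ‖twist m ε z 0‖ ^ 2)) ^ 2 * (π * ‖twist m ε z 0‖ ^ 2) =
      π * ‖twist m ε z 0‖ ^ 2 + ff m ε κ (cc z) := by
  have h0 : 0 < π * ‖twist m ε z 0‖ ^ 2 := by
    have := norm_pos_iff.2 (hz.ne0 hε hm)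
    positivity
  have h1 := ff_nonneg (m := m) (c := cc z) hε hκ
  have h2 : 0 < 1 + ff m ε κ (cc z) / (π * ‖twist m ε z 0‖ ^ 2) := by positivity
  refine ⟨h2, ?_⟩
  rw [Real.sq_sqrt h2.le, add_mul, div_mul_cancel₀ _ h0.ne', one_mul]

theorem shear_radial1 (hε : 0 < ε) (hm : 4 * ε ≤ m) (hκ : 0 ≤ κ) (hκ2 : κ ≤ 2)
    {z : Fin 2 → ℂ} (hz : HR m ε z) :
    0 < 1 - ff m ε κ (cc z) / (π * ‖twist m ε z 1‖ ^ 2) ∧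
    √(1 - ff m ε κ (cc z) / (π * ‖twist m ε z 1‖ ^ 2)) ^ 2 * (π * ‖twist m ε z 1‖ ^ 2) =
      π * ‖twist m ε z 1‖ ^ 2 - ff m ε κ (cc z) := by
  have h0 : 0 < π * ‖twist m ε z 1‖ ^ 2 := by
    have := norm_pos_iff.2 (hz.ne1 hε hm)
    positivity
  have h1 := hz.ff_lt hε hm hκ hκ2
  have h2 : 0 < 1 - ff m ε κ (cc z) / (π * ‖twist m ε z 1‖ ^ 2) := by
    rw [sub_pos, div_lt_one h0]; exact h1
  refine ⟨h2, ?_⟩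
  rw [Real.sq_sqrt h2.le, sub_mul, div_mul_cancel₀ _ h0.ne', one_mul]

theorem shear_X0 (hε : 0 < ε) (hm : 4 * ε ≤ m) (hκ : 0 ≤ κ) {z : Fin 2 → ℂ} (hz : HR m ε z) :
    π * ‖shear m ε κ A z 0‖ ^ 2 = π * ‖twist m ε z 0‖ ^ 2 + ff m ε κ (cc z) := by
  rw [← (shear_radial0 hε hm hκ hz).2]
  simp only [shear, Matrix.cons_val_zero, norm_mul, Complex.norm_exp_ofReal_mul_I,
    Complex.norm_real, Real.norm_eq_abs, mul_pow, sq_abs, one_mul]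
  ring

theorem shear_X1 (hε : 0 < ε) (hm : 4 * ε ≤ m) (hκ : 0 ≤ κ) (hκ2 : κ ≤ 2)
    {z : Fin 2 → ℂ} (hz : HR m ε z) :
    π * ‖shear m ε κ A z 1‖ ^ 2 = π * ‖twist m ε z 1‖ ^ 2 - ff m ε κ (cc z) := by
  rw [← (shear_radial1 hε hm hκ hκ2 hz).2]
  simp only [shear, Matrix.cons_val_one, Matrix.cons_val_fin_one, norm_mul,
    Complex.norm_exp_ofReal_mul_I, Complex.norm_real, Real.norm_eq_abs, mul_pow, sq_abs, one_mul]
  ring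

set_option maxHeartbeats 1000000 in
/-- The shear is symplectic on the upper levels: the compensating phase cancels the terms
`df ∧ (d arg w₀ - d arg w₁)` created by moving the area `f`. -/
theorem shear_symp_high (hε : 0 < ε) (hm : 4 * ε ≤ m) (hκ : 0 ≤ κ) (hκ2 : κ ≤ 2)
    (hA : ∀ z, HR m ε z → ContDiffAt ℝ (⊤ : ℕ∞) A z ∧ ∀ v, fderiv ℝ A z v =
      ((twist m ε z 0)⁻¹ * fderiv ℝ (twist m ε) z v 0).im -
        ((twist m ε z 1)⁻¹ * fderiv ℝ (twist m ε) z v 1).im)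
    {z : Fin 2 → ℂ} (hz : HR m ε z) :
    ContDiffAt ℝ (⊤ : ℕ∞) (shear m ε κ A) z ∧ ∀ v w,
      stdSymp 2 (fderiv ℝ (shear m ε κ A) z v) (fderiv ℝ (shear m ε κ A) z w) =
        stdSymp 2 v w := by
  obtain ⟨hA1, hA2⟩ := hA z hz
  obtain ⟨hT1, hT2⟩ := sympOn_twist hε hm z (hz.cc_lt hε)
  have hn0 := hz.ne0 hε hm
  have hn1 := hz.ne1 hε hm
  have hf : ContDiffAt ℝ (⊤ : ℕ∞) (fun z => ff m ε κ (cc z)) z :=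
    ((contDiff_ff m ε κ).comp contDiff_cc).contDiffAt
  have hfd : ContDiffAt ℝ (⊤ : ℕ∞) (fun z => ffd m ε κ (cc z)) z :=
    ((contDiff_ffd m ε κ).comp contDiff_cc).contDiffAt
  have hσ : ContDiffAt ℝ (⊤ : ℕ∞) (fun z => -(ffd m ε κ (cc z) * A z)) z := (hfd.mul hA1).neg
  have hTj : ∀ j, ContDiffAt ℝ (⊤ : ℕ∞) (fun z => twist m ε z j) z := contDiffAt_pi.1 hT1
  have hXj : ∀ j, ContDiffAt ℝ (⊤ : ℕ∞) (fun z => π * ‖twist m ε z j‖ ^ 2) z := fun j =>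
    contDiffAt_const.mul ((hTj j).norm_sq ℝ)
  have hr0 : ContDiffAt ℝ (⊤ : ℕ∞)
      (fun z => √(1 + ff m ε κ (cc z) / (π * ‖twist m ε z 0‖ ^ 2))) z := by
    refine ContDiffAt.sqrt (contDiffAt_const.add (hf.div (hXj 0) ?_))
      (shear_radial0 hε hm hκ hz).1.ne'
    have := norm_pos_iff.2 hn0
    positivity
  have hr1 : ContDiffAt ℝ (⊤ : ℕ∞)
      (fun z => √(1 - ff m ε κ (cc z) / (π * ‖twist m ε z 1‖ ^ 2))) z := by
    refine ContDiffAt.sqrt (contDiffAt_const.sub (hf.div (hXj 1) ?_))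
      (shear_radial1 hε hm hκ hκ2 hz).1.ne'
    have := norm_pos_iff.2 hn1
    positivity
  have hsm : ∀ {σ r : (Fin 2 → ℂ) → ℝ} {w : (Fin 2 → ℂ) → ℂ}, ContDiffAt ℝ (⊤ : ℕ∞) σ z →
      ContDiffAt ℝ (⊤ : ℕ∞) r z → ContDiffAt ℝ (⊤ : ℕ∞) w z → ContDiffAt ℝ (⊤ : ℕ∞)
        (fun z => Complex.exp ((σ z : ℂ) * Complex.I) * ((r z : ℂ) * w z)) z := by
    intro σ r w h1 h2 h3
    exact ((Complex.ofRealCLM.contDiff.contDiffAt.comp z h1).mul contDiffAt_const).cexp.mul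
      ((Complex.ofRealCLM.contDiff.contDiffAt.comp z h2).mul h3)
  refine ⟨?_, fun v w => ?_⟩
  · rw [contDiffAt_pi]
    intro j
    fin_cases j
    · exact hsm hσ hr0 (hTj 0)
    · exact hsm hσ hr1 (hTj 1)
  have hHR : ∀ᶠ y in nhds z, HR m ε y := (isOpen_HR m ε).mem_nhds hz
  -- derivatives of the twisted point and of its moments
  have dT := hasFDerivAt_pi'.1 (hT1.differentiableAt (by simp)).hasFDerivAt
  obtain ⟨x0, hx0, hx0v⟩ := hasFDerivAt_normSq (dT 0)
  obtain ⟨x1, hx1, hx1v⟩ := hasFDerivAt_normSq (dT 1)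
  have hcc : HasFDerivAt cc (x0 + x1) z := by
    have h : cc = fun z => π * ‖twist m ε z 0‖ ^ 2 + π * ‖twist m ε z 1‖ ^ 2 :=
      funext fun y => ((equiv1_twist m ε).cc_eq y).symm
    have h' : HasFDerivAt (fun z => π * ‖twist m ε z 0‖ ^ 2 + π * ‖twist m ε z 1‖ ^ 2)
      (x0 + x1) z := hx0.add hx1
    rw [← h] at h'
    exact h'
  have dff : HasFDerivAt (fun z => ff m ε κ (cc z)) (ffd m ε κ (cc z) • (x0 + x1)) z :=
    (hasDerivAt_ff hε κ (cc z)).comp_hasFDerivAt z hcc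
  obtain ⟨k, hk⟩ : ∃ k : ℝ, HasFDerivAt (fun z => ffd m ε κ (cc z)) (k • (x0 + x1)) z :=
    ⟨_, ((contDiff_ffd m ε κ).differentiable (by simp) (cc z)).hasDerivAt.comp_hasFDerivAt z hcc⟩
  obtain ⟨s, dσ, hs⟩ : ∃ s : (Fin 2 → ℂ) →L[ℝ] ℝ,
      HasFDerivAt (fun z => -(ffd m ε κ (cc z) * A z)) s z ∧
      ∀ v, s v = -(ffd m ε κ (cc z) * fderiv ℝ A z v + A z * (k * (x0 v + x1 v))) :=
    ⟨_, (hk.mul (hA1.differentiableAt (by simp)).hasFDerivAt).neg, fun v => by simp; ring⟩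
  have dr0 := (hr0.differentiableAt (by simp)).hasFDerivAt
  have dr1 := (hr1.differentiableAt (by simp)).hasFDerivAt
  obtain ⟨D0, hD0, hD0v⟩ := hasFDerivAt_polar dσ dr0 (dT 0)
  obtain ⟨D1, hD1, hD1v⟩ := hasFDerivAt_polar dσ dr1 (dT 1)
  have hX0 := radial_deriv dr0 (dT 0) (hx0.add dff)
    (by filter_upwards [hHR] with y hy using (shear_radial0 hε hm hκ hy).2)
  have hX1 := radial_deriv dr1 (dT 1) (hx1.sub dff)
    (by filter_upwards [hHR] with y hy using (shear_radial1 hε hm hκ hκ2 hy).2)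
  have hD : ∀ j, HasFDerivAt (fun z => shear m ε κ A z j) (![D0, D1] j) z := by
    intro j; fin_cases j
    · exact hD0
    · exact hD1
  have P0 := polar_im (Complex.norm_exp_ofReal_mul_I (-(ffd m ε κ (cc z) * A z))) hn0
    (hX0 v) (hX0 w) (s := s v) (s' := s w)
  have P1 := polar_im (Complex.norm_exp_ofReal_mul_I (-(ffd m ε κ (cc z) * A z))) hn1
    (hX1 v) (hX1 w) (s := s v) (s' := s w)
  -- the same formula for the twist alone
  have Q0 := polar_im (e := 1) (r := 1) (dr := 0) (dr' := 0) (s := 0) (s' := 0) (by simp) hn0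
    (d := fderiv ℝ (twist m ε) z v 0) (d' := fderiv ℝ (twist m ε) z w 0) rfl rfl
  have Q1 := polar_im (e := 1) (r := 1) (dr := 0) (dr' := 0) (s := 0) (s' := 0) (by simp) hn1
    (d := fderiv ℝ (twist m ε) z v 1) (d' := fderiv ℝ (twist m ε) z w 1) rfl rfl
  rw [← hD0v, ← hD0v] at P0
  rw [← hD1v, ← hD1v] at P1
  simp only [Complex.ofReal_zero, Complex.ofReal_one, zero_mul, one_mul, zero_add, mul_zero,
    one_pow, add_zero] at Q0 Q1
  simp only [ContinuousLinearMap.comp_apply, ContinuousLinearMap.proj_apply] at P0 P1 hx0v hx1v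
  rw [← hx0v, ← hx0v] at Q0
  rw [← hx1v, ← hx1v] at Q1
  refine mul_left_cancel₀ (by positivity : (2 * π) ≠ 0) ?_
  rw [← hT2 v w, fderiv_apply_pi hD, fderiv_apply_pi hD, stdSymp_two, stdSymp_two, mul_add,
    mul_add]
  simp only [Matrix.cons_val_zero, Matrix.cons_val_one, Matrix.cons_val_fin_one]
  rw [P0, P1, Q0, Q1, hs, hs, hA2, hA2]
  simp only [add_apply, sub_apply, smul_apply, smul_eq_mul]
  ring

/-- The shear composed with the twist embeds `UU (m - ε)`, and the moments of the image are
controlled: on the slice `X + Y = c ≥ m`, the first moment lies in an interval of length `2m - c`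
starting at `κ (c - m)`. -/
theorem exists_embedding (hε : 0 < ε) (hm : 4 * ε ≤ m) (hκ : 0 ≤ κ) (hκ2 : κ ≤ 2) :
    ∃ φ : (Fin 2 → ℂ) → (Fin 2 → ℂ), SE (m - ε) φ ∧ ∀ z ∈ UU (m - ε),
      cc (φ z) ≤ m ∨ (m ≤ cc (φ z) ∧ κ * (cc (φ z) - m) ≤ π * ‖φ z 0‖ ^ 2 ∧
        π * ‖φ z 0‖ ^ 2 ≤ κ * (cc (φ z) - m) + 2 * m - cc (φ z)) := by
  obtain ⟨A, hA, hAe⟩ := exists_angle hε hm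
  have hmε : 0 < m - ε := by linarith
  have hUU : ∀ z ∈ UU (m - ε), π * ‖z 0‖ ^ 2 + cc z < 2 * m - 2 * ε := by
    intro z hz
    have h : rr (m - ε) z < 1 := hz
    rw [rr_eq] at h
    have h2 : 1 / (m - ε) * (π * ‖z 0‖ ^ 2) + 1 / (2 * (m - ε)) * (π * ‖z 1‖ ^ 2) =
        (π * ‖z 0‖ ^ 2 + cc z) / (2 * (m - ε)) := by
      unfold cc; field_simp; ring
    rw [h2, div_lt_one (by linarith)] at h
    linarith
  have hlt : ∀ z ∈ UU (m - ε), cc z < 2 * m - 3 / 2 * ε := by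
    intro z hz
    have := hUU z hz
    have : 0 ≤ π * ‖z 0‖ ^ 2 := by positivity
    linarith
  have hHR : ∀ z ∈ UU (m - ε), m - ε / 16 ≤ cc z → HR m ε z := fun z hz hc =>
    ⟨by linarith, hUU z hz⟩
  have hcc : ∀ z ∈ UU (m - ε), cc (shear m ε κ A z) = cc z := by
    intro z hz
    rw [← (equiv1_twist m ε).cc_eq z]
    rcases le_or_gt (cc z) (m - ε / 16) with h | h
    · rw [shear_low hε h]
    · have hh := hHR z hz h.le
      have h0 := shear_X0 (A := A) hε hm hκ hh
      have h1 := shear_X1 (A := A) hε hm hκ hκ2 hh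
      unfold cc at *
      rw [h0, h1]; ring
  have hsymp : ∀ z ∈ UU (m - ε), ContDiffAt ℝ (⊤ : ℕ∞) (shear m ε κ A) z ∧ ∀ v w,
      stdSymp 2 (fderiv ℝ (shear m ε κ A) z v) (fderiv ℝ (shear m ε κ A) z w) =
        stdSymp 2 v w := by
    intro z hz
    rcases lt_or_ge (cc z) (m - ε / 16) with h | h
    · have he : shear m ε κ A =ᶠ[nhds z] twist m ε := by
        filter_upwards [(isOpen_lt contDiff_cc.continuous continuous_const).mem_nhds h] with y hy
        exact shear_low hε (le_of_lt hy)
      obtain ⟨h1, h2⟩ := sympOn_twist hε hm z (hlt z hz)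
      rw [he.fderiv_eq]
      exact ⟨h1.congr_of_eventuallyEq he, h2⟩
    · exact shear_symp_high hε hm hκ hκ2 hA (hHR z hz h)
  refine ⟨shear m ε κ A, ⟨hmε, ?_, fun z hz => (hsymp z hz).1.contDiffWithinAt,
    fun z hz => (hsymp z hz).2⟩, ?_⟩
  · intro z hz z' hz' heq
    have hc : cc z' = cc z := by rw [← hcc z hz, ← hcc z' hz', heq]
    rcases le_or_gt (cc z) (m - ε / 16) with h | h
    · rw [shear_low hε h, shear_low hε (hc.trans_le h)] at heq
      exact twist_injective m ε heq
    · have k := hHR z hz h.le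
      have k' := hHR z' hz' (h.le.trans_eq hc.symm)
      have a0 := shear_X0 (A := A) hε hm hκ k
      have a0' := shear_X0 (A := A) hε hm hκ k'
      have a1 := shear_X1 (A := A) hε hm hκ hκ2 k
      have a1' := shear_X1 (A := A) hε hm hκ hκ2 k'
      rw [← heq, hc] at a0' a1'
      have b0 : π * ‖twist m ε z' 0‖ ^ 2 = π * ‖twist m ε z 0‖ ^ 2 := by linarith
      have b1 : π * ‖twist m ε z' 1‖ ^ 2 = π * ‖twist m ε z 1‖ ^ 2 := by linarith
      have r0 := Real.sqrt_pos.2 (shear_radial0 hε hm hκ k).1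
      have r1 := Real.sqrt_pos.2 (shear_radial1 hε hm hκ hκ2 k).1
      have e0 := congrFun heq 0
      have e1 := congrFun heq 1
      simp only [shear, Matrix.cons_val_zero, Matrix.cons_val_one, Matrix.cons_val_fin_one,
        b0, b1, hc] at e0 e1
      generalize √(1 + ff m ε κ (cc z) / (π * ‖twist m ε z 0‖ ^ 2)) = ρ0 at *
      generalize √(1 - ff m ε κ (cc z) / (π * ‖twist m ε z 1‖ ^ 2)) = ρ1 at *
      have key : ∀ σ σ' : ℝ, Complex.exp ((σ : ℂ) * Complex.I) * (ρ0 * twist m ε z 0) =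
          Complex.exp ((σ' : ℂ) * Complex.I) * (ρ0 * twist m ε z' 0) →
          Complex.exp ((σ : ℂ) * Complex.I) * (ρ1 * twist m ε z 1) =
          Complex.exp ((σ' : ℂ) * Complex.I) * (ρ1 * twist m ε z' 1) →
          z' = Complex.exp (((σ - σ' : ℝ) : ℂ) * Complex.I) • z := by
        intro σ σ' h0 h1
        apply twist_injective m ε
        rw [(equiv1_twist m ε).smul_eq _ _ (Complex.norm_exp_ofReal_mul_I _)]
        have hr0 : (ρ0 : ℂ) ≠ 0 := by exact_mod_cast r0.ne'
        have hr1 : (ρ1 : ℂ) ≠ 0 := by exact_mod_cast r1.ne'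
        have hexp : Complex.exp (((σ - σ' : ℝ) : ℂ) * Complex.I) *
            Complex.exp ((σ' : ℂ) * Complex.I) = Complex.exp ((σ : ℂ) * Complex.I) := by
          rw [← Complex.exp_add]; congr 1; push_cast; ring
        have hne := Complex.exp_ne_zero ((σ' : ℂ) * Complex.I)
        rw [← hexp] at h0 h1
        ext j
        fin_cases j
        · refine mul_left_cancel₀ (mul_ne_zero hne hr0) ?_
          simp only [Fin.zero_eta, Pi.smul_apply, smul_eq_mul]
          linear_combination -h0
        · refine mul_left_cancel₀ (mul_ne_zero hne hr1) ?_
          simp only [Fin.mk_one, Pi.smul_apply, smul_eq_mul]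
          linear_combination -h1
      have hz1 := key _ _ e0 e1
      have hAA : A z' = A z := by
        conv_lhs => rw [hz1]
        exact hAe _ _ (Complex.norm_exp_ofReal_mul_I _)
      rw [hAA, sub_self] at hz1
      simp at hz1
      exact hz1.symm
  · intro z hz
    rw [hcc z hz]
    rcases le_or_gt (cc z) m with h | h
    · exact Or.inl h
    · refine Or.inr ⟨h.le, ?_⟩
      have k := hHR z hz (by linarith)
      have a0 := shear_X0 (A := A) hε hm hκ k
      have h1 := k.x_le hε hm
      have h2 := ff_le (m := m) (c := cc z) hε hκ
      have h3 := le_ff (m := m) (c := cc z) hε hκ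
      rw [max_eq_left (by linarith)] at h2
      have h4 : 0 ≤ π * ‖twist m ε z 0‖ ^ 2 := by positivity
      rw [a0]
      constructor
      · linarith
      · nlinarith

end

/-! ### The second element of the spectrum of an ellipsoid -/

theorem finite_spec {a : Fin 2 → ℝ} (ha : ∀ i, 0 < a i) (t : ℝ) :
    {p : Fin 2 × ℕ | ((p.2 : ℝ) + 1) * a p.1 ≤ t}.Finite := by
  obtain ⟨K, hK⟩ : ∃ K : ℕ, ∀ i, t / a i ≤ K := by
    obtain ⟨K, hK⟩ := exists_nat_ge (max (t / a 0) (t / a 1))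
    refine ⟨K, fun i => ?_⟩
    fin_cases i
    · exact (le_max_left _ _).trans hK
    · exact (le_max_right _ _).trans hK
  refine ((Set.finite_univ (α := Fin 2)).prod (Set.finite_Iic K)).subset ?_
  rintro ⟨i, n⟩ h
  refine ⟨mem_univ _, ?_⟩
  have h1 : ((n : ℝ) + 1) * a i ≤ t := h
  rw [← le_div_iff₀ (ha i)] at h1
  have : (n : ℝ) ≤ K := by linarith [hK i]
  exact_mod_cast this

theorem two_le_ncard_iff {a : Fin 2 → ℝ} (ha : ∀ i, 0 < a i) (t : ℝ) :
    2 ≤ {p : Fin 2 × ℕ | ((p.2 : ℝ) + 1) * a p.1 ≤ t}.ncard ↔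
      ∃ p q : Fin 2 × ℕ, p ≠ q ∧ ((p.2 : ℝ) + 1) * a p.1 ≤ t ∧ ((q.2 : ℝ) + 1) * a q.1 ≤ t := by
  rw [show (2 ≤ {p : Fin 2 × ℕ | ((p.2 : ℝ) + 1) * a p.1 ≤ t}.ncard) ↔
    1 < {p : Fin 2 × ℕ | ((p.2 : ℝ) + 1) * a p.1 ≤ t}.ncard from Iff.rfl,
    Set.one_lt_ncard_iff (finite_spec ha t)]
  constructor
  · rintro ⟨p, q, hp, hq, h⟩; exact ⟨p, q, h, hp, hq⟩
  · rintro ⟨p, q, h, hp, hq⟩; exact ⟨p, q, hp, hq, h⟩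

theorem le_Nk {a : Fin 2 → ℝ} (ha : ∀ i, 0 < a i) {s : ℝ}
    (h : ∀ t, ∀ p q : Fin 2 × ℕ, p ≠ q → ((p.2 : ℝ) + 1) * a p.1 ≤ t →
      ((q.2 : ℝ) + 1) * a q.1 ≤ t → s ≤ t) : s ≤ Nk 2 a := by
  refine le_csInf ⟨max (a 0) (a 1), (two_le_ncard_iff ha _).2
    ⟨(0, 0), (1, 0), by simp, by simp, by simp⟩⟩ ?_
  intro t ht
  obtain ⟨p, q, hpq, hp, hq⟩ := (two_le_ncard_iff ha t).1 ht
  exact h t p q hpq hp hq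

theorem spec_pos {a : Fin 2 → ℝ} (ha : ∀ i, 0 < a i) (p : Fin 2 × ℕ) :
    min (a 0) (a 1) ≤ ((p.2 : ℝ) + 1) * a p.1 := by
  obtain ⟨i, n⟩ := p
  have h1 : a i ≤ ((n : ℝ) + 1) * a i := by
    have := mul_nonneg (Nat.cast_nonneg (α := ℝ) n) (ha i).le
    linarith
  refine le_trans ?_ h1
  fin_cases i
  · exact min_le_left _ _
  · exact min_le_right _ _

theorem Nk_le {a : Fin 2 → ℝ} (ha : ∀ i, 0 < a i) {t : ℝ} {p q : Fin 2 × ℕ} (hpq : p ≠ q)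
    (hp : ((p.2 : ℝ) + 1) * a p.1 ≤ t) (hq : ((q.2 : ℝ) + 1) * a q.1 ≤ t) : Nk 2 a ≤ t := by
  refine csInf_le ⟨0, ?_⟩ ((two_le_ncard_iff ha t).2 ⟨p, q, hpq, hp, hq⟩)
  intro s hs
  obtain ⟨p, q, hpq, hp, hq⟩ := (two_le_ncard_iff ha s).1 hs
  exact (lt_min (ha 0) (ha 1)).le.trans ((spec_pos ha p).trans hp)

theorem exists_of_Nk_lt {a : Fin 2 → ℝ} (ha : ∀ i, 0 < a i) {t : ℝ} (h : Nk 2 a < t) :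
    ∃ p q : Fin 2 × ℕ, p ≠ q ∧ ((p.2 : ℝ) + 1) * a p.1 ≤ t ∧ ((q.2 : ℝ) + 1) * a q.1 ≤ t := by
  by_contra hcon
  refine absurd h (not_lt.2 (le_Nk ha ?_))
  intro s p q hpq hp hq
  by_contra hs
  push Not at hs
  exact hcon ⟨p, q, hpq, hp.trans hs.le, hq.trans hs.le⟩

theorem Nk_pos {a : Fin 2 → ℝ} (ha : ∀ i, 0 < a i) : 0 < Nk 2 a :=
  (lt_min (ha 0) (ha 1)).trans_le (le_Nk ha fun _ p _ _ hp _ => (spec_pos ha p).trans hp)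

theorem Nk_le_two_mul {a : Fin 2 → ℝ} (ha : ∀ i, 0 < a i) (i : Fin 2) : Nk 2 a ≤ 2 * a i := by
  refine Nk_le ha (p := (i, 0)) (q := (i, 1)) (by simp) ?_ ?_
  · simp; linarith [ha i]
  · simp; linarith

theorem Nk_le_max {a : Fin 2 → ℝ} (ha : ∀ i, 0 < a i) : Nk 2 a ≤ max (a 0) (a 1) :=
  Nk_le ha (p := (0, 0)) (q := (1, 0)) (by simp) (by simp) (by simp)

theorem le_Nk_one_two {s : ℝ} (hs : 0 < s) : 2 * s ≤ Nk 2 ![s, 2 * s] := by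
  have ha : ∀ i, 0 < (![s, 2 * s] : Fin 2 → ℝ) i := by
    intro i; fin_cases i <;> simp [hs]
  refine le_Nk ha ?_
  intro t p q hpq hp hq
  by_contra hcon
  push Not at hcon
  have key : ∀ p : Fin 2 × ℕ, ((p.2 : ℝ) + 1) * (![s, 2 * s] : Fin 2 → ℝ) p.1 < 2 * s →
      p = (0, 0) := by
    rintro ⟨i, n⟩ h
    rcases Nat.eq_zero_or_pos n with rfl | hn
    · fin_cases i
      · rfl
      · simp at h
    · have hn1 : (1 : ℝ) ≤ n := by exact_mod_cast hn
      exfalso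
      fin_cases i
      · simp at h; nlinarith
      · simp at h; nlinarith
  exact hpq ((key p (hp.trans_lt hcon)).trans (key q (hq.trans_lt hcon)).symm)

/-! ### Monotonicity of the second capacity under symplectic embeddings -/

/-- Permutation of the coordinates. -/
def permL (σ : Equiv.Perm (Fin 2)) : (Fin 2 → ℂ) →L[ℝ] (Fin 2 → ℂ) :=
  ContinuousLinearMap.pi fun i => ContinuousLinearMap.proj (R := ℝ) (φ := fun _ => ℂ) (σ i)

theorem permL_apply (σ : Equiv.Perm (Fin 2)) (z : Fin 2 → ℂ) (i : Fin 2) :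
    permL σ z i = z (σ i) := rfl

theorem stdSymp_permL (σ : Equiv.Perm (Fin 2)) (v w : Fin 2 → ℂ) :
    stdSymp 2 (permL σ v) (permL σ w) = stdSymp 2 v w := by
  simp only [stdSymp, permL_apply]
  exact Equiv.sum_comp σ fun i => ((starRingEnd ℂ) (v i) * w i).im

theorem permL_injective (σ : Equiv.Perm (Fin 2)) : Function.Injective (permL σ) := by
  intro v w h
  ext i
  have := congrFun h (σ.symm i)
  simpa [permL_apply] using this

/-- A permutation of the coordinates carries the open ellipsoid with second spectral value
`N₂(a)` and axes in ratio two into the ellipsoid with axes `a`. -/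
theorem exists_perm {a : Fin 2 → ℝ} (ha : ∀ i, 0 < a i) :
    ∃ σ : Equiv.Perm (Fin 2), ∀ z ∈ UU (Nk 2 a / 2), permL σ z ∈ ellipsoid a := by
  have hN := Nk_pos ha
  have h0 := Nk_le_two_mul ha 0
  have h1 := Nk_le_two_mul ha 1
  have hmx := Nk_le_max ha
  have key : ∀ z ∈ UU (Nk 2 a / 2), ∀ s t : ℝ, 0 < s → Nk 2 a ≤ 2 * s → Nk 2 a ≤ t →
      π * ‖z 0‖ ^ 2 / s + π * ‖z 1‖ ^ 2 / t ≤ 1 := by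
    intro z hz s t hs hst ht
    have h : rr (Nk 2 a / 2) z < 1 := hz
    rw [rr_eq] at h
    refine le_trans (add_le_add ?_ ?_) h.le
    · rw [div_eq_mul_one_div, mul_comm]
      gcongr
      linarith
    · rw [div_eq_mul_one_div, mul_comm]
      gcongr
      linarith
  rcases le_total (a 0) (a 1) with h | h
  · refine ⟨1, fun z hz => ?_⟩
    rw [max_eq_right h] at hmx
    simp only [ellipsoid, mem_ofPred_eq, Fin.sum_univ_two, permL_apply, Equiv.Perm.one_apply]
    exact key z hz _ _ (ha 0) h0 hmx
  · refine ⟨Equiv.swap 0 1, fun z hz => ?_⟩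
    rw [max_eq_left h] at hmx
    simp only [ellipsoid, mem_ofPred_eq, Fin.sum_univ_two, permL_apply, Equiv.swap_apply_left,
      Equiv.swap_apply_right]
    rw [add_comm]
    exact key z hz _ _ (ha 1) h1 hmx

theorem SE.diff {a : ℝ} {φ : (Fin 2 → ℂ) → (Fin 2 → ℂ)} (h : SE a φ) {y : Fin 2 → ℂ}
    (hy : y ∈ UU a) : DifferentiableAt ℝ φ y :=
  ((h.smooth y hy).contDiffAt ((isOpen_UU a).mem_nhds hy)).differentiableAt (by simp)

/-- Composition with an embedding of a set `X` which is smooth and symplectic in the interior of `X`: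
the image of an open ellipsoid in `X` lies in that interior by the inverse function theorem. -/
theorem SE.comp {a : ℝ} {φ ψ : (Fin 2 → ℂ) → (Fin 2 → ℂ)} (h : SE a φ) {X : Set (Fin 2 → ℂ)}
    (hX : ∀ y ∈ UU a, φ y ∈ X) (hinj : InjOn ψ X) (hsm : ContDiffOn ℝ (⊤ : ℕ∞) ψ (interior X))
    (hsymp : ∀ x ∈ interior X, ∀ v w : Fin 2 → ℂ,
      stdSymp 2 (fderiv ℝ ψ x v) (fderiv ℝ ψ x w) = stdSymp 2 v w) : SE a (ψ ∘ φ) := by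
  have hsubint : ∀ y ∈ UU a, φ y ∈ interior X := by
    intro y hy
    rw [mem_interior_iff_mem_nhds]
    refine Filter.mem_of_superset (h.image_mem_nhds hy ((isOpen_UU a).mem_nhds hy)) ?_
    rintro _ ⟨y, hy, rfl⟩
    exact hX y hy
  refine ⟨h.pos, hinj.comp h.inj hX, hsm.comp h.smooth hsubint, fun y hy v w => ?_⟩
  have hd : DifferentiableAt ℝ ψ (φ y) :=
    ((hsm _ (hsubint y hy)).contDiffAt (isOpen_interior.mem_nhds (hsubint y hy))).differentiableAt
      (by simp)
  rw [fderiv_comp y hd (h.diff hy)]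
  simp only [ContinuousLinearMap.comp_apply]
  rw [hsymp _ (hsubint y hy), h.symp y hy]

theorem SE_permL {a : ℝ} (ha : 0 < a) (σ : Equiv.Perm (Fin 2)) : SE a (permL σ) :=
  ⟨ha, (permL_injective σ).injOn, (permL σ).contDiff.contDiffOn, fun y _ v w => by
    rw [(permL σ).fderiv, stdSymp_permL]⟩

/-- The second spectral value of an ellipsoid which embeds through `X` into another one is at most
that of the target. -/
theorem Nk_le_of_emb {a b : Fin 2 → ℝ} (ha : ∀ i, 0 < a i) (hb : ∀ i, 0 < b i)
    {X : Set (Fin 2 → ℂ)} (h1 : SympEmb 2 (ellipsoid a) X) (h2 : SympEmb 2 X (ellipsoid b)) :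
    Nk 2 a ≤ Nk 2 b := by
  obtain ⟨φ, φi, φX, φs, φω⟩ := h1
  obtain ⟨ψ, ψi, ψX, ψs, ψω⟩ := h2
  obtain ⟨σ, hσ⟩ := exists_perm ha
  have hN := Nk_pos ha
  have s1 := (SE_permL (half_pos hN) σ).comp hσ φi φs φω
  have hX : ∀ y ∈ UU (Nk 2 a / 2), (φ ∘ permL σ) y ∈ X := fun y hy =>
    φX ⟨_, hσ y hy, rfl⟩
  have s2 := s1.comp hX ψi ψs ψω
  refine le_of_forall_gt fun t ht => ?_
  obtain ⟨t', ht1, ht2⟩ := exists_between ht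
  obtain ⟨p, q, hpq, hp, hq⟩ := exists_of_Nk_lt hb ht1
  have := rigidity s2 hb (fun y hy => ψX ⟨_, hX y hy, rfl⟩) (p.2, p.1) (q.2, q.1)
    (fun h => hpq (Prod.ext (congrArg Prod.snd h) (congrArg Prod.fst h))) hp hq
  linarith

theorem sympEmb_of_subset {X Y : Set (Fin 2 → ℂ)} (h : X ⊆ Y) : SympEmb 2 X Y :=
  ⟨id, injOn_id _, by simpa using h, contDiff_id.contDiffOn, fun x _ v w => by
    rw [fderiv_id]; rfl⟩

/-! ### The moment polygon inside a convex toric domain -/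

theorem convex_four {H : Set (Fin 2 → ℝ)} (hH : Convex ℝ H) {x y w u : Fin 2 → ℝ} (hx : x ∈ H)
    (hy : y ∈ H) (hw : w ∈ H) (hu : u ∈ H) {α β γ δ : ℝ} (hα : 0 ≤ α) (hβ : 0 ≤ β) (hγ : 0 ≤ γ)
    (hδ : 0 ≤ δ) (h1 : α + β + γ + δ = 1) : α • x + β • y + γ • w + δ • u ∈ H := by
  have := hH.sum_mem (t := Finset.univ) (w := ![α, β, γ, δ]) (z := ![x, y, w, u])
    (by intro i _; fin_cases i <;> simp [hα, hβ, hγ, hδ])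
    (by simp [Fin.sum_univ_four, h1]) (by intro i _; fin_cases i <;> simp [hx, hy, hw, hu])
  simpa [Fin.sum_univ_four] using this

/-- Half `m` of the second capacity of a convex toric domain: the axis points at height `m` and
some point on the line `x + y = 2m` lie in `Ω`, and `2m` is one of twice the width, twice the
height, and the maximum of `x + y`. -/
theorem exists_capacity {Ω : Set (Fin 2 → ℝ)} (hΩ : IsConvexToricDomain Ω) :
    ∃ m p A B M : ℝ, 0 < m ∧ 0 ≤ p ∧ p ≤ 2 * m ∧ 0 < A ∧ 0 < B ∧ 0 < M ∧
      (∀ x ∈ Ω, 0 ≤ x 0 ∧ 0 ≤ x 1 ∧ x 0 ≤ A ∧ x 1 ≤ B ∧ x 0 + x 1 ≤ M) ∧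
      (m = A ∨ m = B ∨ 2 * m = M) ∧
      ∀ x y α β γ : ℝ, 0 ≤ α → 0 ≤ β → 0 ≤ γ → α + β + γ ≤ 1 →
        x = α * p + β * m → y = α * (2 * m - p) + γ * m → ![x, y] ∈ Ω := by
  obtain ⟨hnn, hcpt, hconv, V, hVo, ⟨v, hvV, hv0⟩, hΩV⟩ := hΩ
  set H := {x : Fin 2 → ℝ | (fun i => |x i|) ∈ Ω} with hH
  have hsub : ∀ x ∈ Ω, x ∈ H := by
    intro x hx
    have : (fun i => |x i|) = x := funext fun i => abs_of_nonneg (hnn hx i)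
    change (fun i => |x i|) ∈ Ω
    rwa [this]
  have hback : ∀ x ∈ H, (∀ i, 0 ≤ x i) → x ∈ Ω := by
    intro x hx h
    have : (fun i => |x i|) = x := funext fun i => abs_of_nonneg (h i)
    have hx' : (fun i => |x i|) ∈ Ω := hx
    rwa [this] at hx'
  have hsymm : ∀ x y s t : ℝ, |s| = 1 → |t| = 1 → ![x, y] ∈ H → ![s * x, t * y] ∈ H := by
    intro x y s t hs ht h
    have h' : (fun i => |(![x, y] : Fin 2 → ℝ) i|) ∈ Ω := h
    change (fun i => |(![s * x, t * y] : Fin 2 → ℝ) i|) ∈ Ω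
    convert h' using 2 with i
    fin_cases i <;> simp [abs_mul, hs, ht]
  have heta : ∀ x : Fin 2 → ℝ, x = ![x 0, x 1] := by
    intro x; ext i; fin_cases i <;> rfl
  -- shrinking coordinates independently keeps a point inside
  have haxis0 : ∀ x ∈ Ω, ![x 0, 0] ∈ H := by
    intro x hx
    have h1 := hsub x hx
    rw [heta x] at h1
    have h2 := hsymm _ _ 1 (-1) (by simp) (by simp) h1
    have := hconv h1 h2 (by norm_num : (0 : ℝ) ≤ 1 / 2) (by norm_num : (0 : ℝ) ≤ 1 / 2) (by norm_num)
    convert this using 1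
    ext i; fin_cases i <;> simp <;> ring
  have haxis1 : ∀ x ∈ Ω, ![0, x 1] ∈ H := by
    intro x hx
    have h1 := hsub x hx
    rw [heta x] at h1
    have h2 := hsymm _ _ (-1) 1 (by simp) (by simp) h1
    have := hconv h1 h2 (by norm_num : (0 : ℝ) ≤ 1 / 2) (by norm_num : (0 : ℝ) ≤ 1 / 2) (by norm_num)
    convert this using 1
    ext i; fin_cases i <;> simp <;> ring
  have hΩH : Ω = H ∩ {x | ∀ i, 0 ≤ x i} :=
    Subset.antisymm (fun x hx => ⟨hsub x hx, hnn hx⟩) fun x hx => hback x hx.1 hx.2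
  have hΩc : IsCompact Ω := by
    rw [hΩH]
    refine hcpt.inter_right ?_
    simp only [ofPred_forall]
    exact isClosed_iInter fun i => isClosed_le continuous_const (continuous_apply i)
  -- an interior point
  obtain ⟨w, hwΩ, hw⟩ : ∃ w ∈ Ω, ∀ i, 0 < w i := by
    have hc : Continuous fun η : ℝ => fun i : Fin 2 => v i + η := by fun_prop
    have h0 : (fun η : ℝ => fun i : Fin 2 => v i + η) ⁻¹' V ∈ nhds (0 : ℝ) :=
      hc.continuousAt.preimage_mem_nhds (hVo.mem_nhds (by simpa using hvV))
    obtain ⟨δ, hδ, hδV⟩ := Metric.mem_nhds_iff.1 h0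
    refine ⟨fun i => v i + δ / 2, ?_, fun i => ?_⟩
    · rw [hΩV]
      have hb : δ / 2 ∈ Metric.ball (0 : ℝ) δ := by
        rw [Metric.mem_ball, Real.dist_eq, sub_zero, abs_of_pos (half_pos hδ)]
        linarith
      refine subset_closure ⟨hδV hb, fun i => ?_⟩
      have := hv0 i
      change 0 ≤ v i + δ / 2
      linarith
    · have := hv0 i
      change 0 < v i + δ / 2
      linarith
  have hne : Ω.Nonempty := ⟨w, hwΩ⟩
  obtain ⟨a, haΩ, ha⟩ := hΩc.exists_isMaxOn hne (continuous_apply (0 : Fin 2)).continuousOn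
  obtain ⟨b, hbΩ, hb⟩ := hΩc.exists_isMaxOn hne (continuous_apply (1 : Fin 2)).continuousOn
  obtain ⟨s, hsΩ, hs⟩ := hΩc.exists_isMaxOn hne
    ((continuous_apply (0 : Fin 2)).add (continuous_apply (1 : Fin 2))).continuousOn
  have hA : 0 < a 0 := (hw 0).trans_le (ha hwΩ)
  have hB : 0 < b 1 := (hw 1).trans_le (hb hwΩ)
  have hM : 0 < s 0 + s 1 := (add_pos (hw 0) (hw 1)).trans_le (hs hwΩ)
  set M := s 0 + s 1 with hMdef
  set m := min (min (a 0) (b 1)) (M / 2) with hm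
  have hmA : m ≤ a 0 := (min_le_left _ _).trans (min_le_left _ _)
  have hmB : m ≤ b 1 := (min_le_left _ _).trans (min_le_right _ _)
  have hmM : m ≤ M / 2 := min_le_right _ _
  have hm0 : 0 < m := lt_min (lt_min hA hB) (half_pos hM)
  have h00 : ![0, 0] ∈ H := by
    have h1 := haxis0 a haΩ
    have h2 := hsymm _ _ (-1) 1 (by simp) (by simp) h1
    have := hconv h1 h2 (by norm_num : (0 : ℝ) ≤ 1 / 2) (by norm_num : (0 : ℝ) ≤ 1 / 2) (by norm_num)
    convert this using 1
    ext i; fin_cases i <;> simp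
  have hscale : ∀ x y t : ℝ, ![x, y] ∈ H → 0 ≤ t → t ≤ 1 → ![t * x, t * y] ∈ H := by
    intro x y t h h0 h1
    have := hconv h h00 h0 (sub_nonneg.2 h1) (by ring)
    convert this using 1
    ext i; fin_cases i <;> simp
  have hP0 : ![m, 0] ∈ H := by
    have := hscale _ _ (m / a 0) (haxis0 a haΩ) (by positivity) (by rwa [div_le_one hA])
    rwa [div_mul_cancel₀ _ hA.ne', mul_zero] at this
  have hP1 : ![0, m] ∈ H := by
    have := hscale _ _ (m / b 1) (haxis1 b hbΩ) (by positivity) (by rwa [div_le_one hB])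
    rwa [div_mul_cancel₀ _ hB.ne', mul_zero] at this
  have hs0 : 0 ≤ s 0 := hnn hsΩ 0
  have hs1 : 0 ≤ s 1 := hnn hsΩ 1
  have hPs : ![2 * m / M * s 0, 2 * m - 2 * m / M * s 0] ∈ H := by
    have h1 := hsub s hsΩ
    rw [heta s] at h1
    have := hscale _ _ (2 * m / M) h1 (by positivity) (by rw [div_le_one hM]; linarith)
    have h2 : s 1 = M - s 0 := by linarith
    have h3 : 2 * m / M * s 1 = 2 * m - 2 * m / M * s 0 := by
      rw [h2, mul_sub, div_mul_cancel₀ _ hM.ne']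
    rwa [h3] at this
  have hp0 : 0 ≤ 2 * m / M * s 0 := by positivity
  have hp1 : 2 * m / M * s 0 ≤ 2 * m := by
    rw [div_mul_eq_mul_div, div_le_iff₀ hM]
    have : s 0 ≤ M := by linarith
    gcongr
  refine ⟨m, 2 * m / M * s 0, a 0, b 1, M, hm0, hp0, hp1, hA, hB, hM, fun x hx =>
    ⟨hnn hx 0, hnn hx 1, ha hx, hb hx, hs hx⟩, ?_, ?_⟩
  · rcases min_choice (min (a 0) (b 1)) (M / 2) with h | h
    · rcases min_choice (a 0) (b 1) with h' | h'
      · exact Or.inl (h.trans h')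
      · exact Or.inr (Or.inl (h.trans h'))
    · exact Or.inr (Or.inr (by rw [hm, h]; ring))
  · intro x y α β γ hα hβ hγ h1 hx hy
    generalize 2 * m / M * s 0 = p at *
    apply hback
    · -- the remaining weight is carried by the origin
      have := convex_four hconv hPs hP0 hP1 h00 hα hβ hγ
        (by linarith : 0 ≤ 1 - α - β - γ) (by ring)
      convert this using 1
      ext i; fin_cases i <;> simp [hx, hy]
    · intro i
      fin_cases i
      · change 0 ≤ x
        rw [hx]; positivity
      · change 0 ≤ y
        rw [hy]
        have : 0 ≤ 2 * m - p := by linarith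
        positivity

/-! ### The two optimal families of ellipsoids -/

/-- Ellipsoids `E(s, 2s)` with `2s` arbitrarily close to `2m` embed in the toric domain. -/
theorem exists_inner {Ω : Set (Fin 2 → ℝ)} {m p : ℝ} (hm : 0 < m) (hp0 : 0 ≤ p) (hp1 : p ≤ 2 * m)
    (hin : ∀ x y α β γ : ℝ, 0 ≤ α → 0 ≤ β → 0 ≤ γ → α + β + γ ≤ 1 →
        x = α * p + β * m → y = α * (2 * m - p) + γ * m → ![x, y] ∈ Ω) {δ : ℝ} (hδ : 0 < δ) :
    ∃ a : Fin 2 → ℝ, (∀ i, 0 < a i) ∧ SympEmb 2 (ellipsoid a) (toricDomain Ω) ∧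
      2 * m - δ ≤ Nk 2 a := by
  obtain ⟨ε, hε, hε1, hε2⟩ : ∃ ε : ℝ, 0 < ε ∧ 4 * ε ≤ δ ∧ 4 * ε ≤ m :=
    ⟨min (δ / 4) (m / 4), by positivity, by linarith [min_le_left (δ / 4) (m / 4)],
      by linarith [min_le_right (δ / 4) (m / 4)]⟩
  have hκ2 : p / m ≤ 2 := by rw [div_le_iff₀ hm]; exact hp1
  obtain ⟨φ, hφ, himg⟩ := exists_embedding hε hε2 (div_nonneg hp0 hm.le) hκ2
  have hs : 0 < m - 2 * ε := by linarith
  have hs' : 0 < m - ε := by linarith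
  have hsub : ellipsoid ![m - 2 * ε, 2 * (m - 2 * ε)] ⊆ UU (m - ε) := by
    intro z hz
    have hz' : π * ‖z 0‖ ^ 2 / (m - 2 * ε) + π * ‖z 1‖ ^ 2 / (2 * (m - 2 * ε)) ≤ 1 := by
      have h : ∑ i, Real.pi * ‖z i‖ ^ 2 / (![m - 2 * ε, 2 * (m - 2 * ε)] : Fin 2 → ℝ) i ≤ 1 := hz
      simpa [Fin.sum_univ_two] using h
    have hx : 0 ≤ π * ‖z 0‖ ^ 2 := by positivity
    have hy : 0 ≤ π * ‖z 1‖ ^ 2 := by positivity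
    change rr (m - ε) z < 1
    rw [rr_eq]
    generalize π * ‖z 0‖ ^ 2 = X at *
    generalize π * ‖z 1‖ ^ 2 = Y at *
    have h1 : X + Y / 2 ≤ m - 2 * ε := by
      have : X / (m - 2 * ε) + Y / (2 * (m - 2 * ε)) = (X + Y / 2) / (m - 2 * ε) := by
        field_simp
      rwa [this, div_le_one hs] at hz'
    have h2 : 1 / (m - ε) * X + 1 / (2 * (m - ε)) * Y = (X + Y / 2) / (m - ε) := by
      field_simp
    rw [h2, div_lt_one hs']
    linarith
  have hsubint : interior (ellipsoid ![m - 2 * ε, 2 * (m - 2 * ε)]) ⊆ UU (m - ε) :=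
    interior_subset.trans hsub
  refine ⟨![m - 2 * ε, 2 * (m - 2 * ε)], ?_, ⟨φ, ?_, ?_, ?_, ?_⟩, ?_⟩
  · intro i; fin_cases i <;> simp <;> linarith
  · exact hφ.inj.mono hsub
  · rintro _ ⟨z, hz, rfl⟩
    have h := himg z (hsub hz)
    have hx : 0 ≤ π * ‖φ z 0‖ ^ 2 := by positivity
    have hy : 0 ≤ π * ‖φ z 1‖ ^ 2 := by positivity
    have hmm : momentMap 2 (φ z) = ![π * ‖φ z 0‖ ^ 2, π * ‖φ z 1‖ ^ 2] := by
      ext i; fin_cases i <;> rfl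
    change momentMap 2 (φ z) ∈ Ω
    rw [hmm]
    have hc : cc (φ z) = π * ‖φ z 0‖ ^ 2 + π * ‖φ z 1‖ ^ 2 := rfl
    rw [hc] at h
    generalize π * ‖φ z 0‖ ^ 2 = X at *
    generalize π * ‖φ z 1‖ ^ 2 = Y at *
    rcases h with h | ⟨h1, h2, h3⟩
    · refine hin X Y 0 (X / m) (Y / m) le_rfl (by positivity) (by positivity) ?_ ?_ ?_
      · rw [zero_add, ← add_div, div_le_one hm]; exact h
      · field_simp; ring
      · field_simp; ring
    · -- the weight of the vertex `(p, 2m - p)` is `(X + Y - m) / m`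
      have e : p / m * (X + Y - m) = (X + Y - m) / m * p := by ring
      rw [e] at h2 h3
      have hα : 0 ≤ (X + Y - m) / m := div_nonneg (by linarith) hm.le
      have hαm : (X + Y - m) / m * m = X + Y - m := div_mul_cancel₀ _ hm.ne'
      generalize (X + Y - m) / m = α at *
      have hβm : (X - α * p) / m * m = X - α * p := div_mul_cancel₀ _ hm.ne'
      have hβ : 0 ≤ (X - α * p) / m := div_nonneg (by linarith) hm.le
      have hγ : 0 ≤ 1 - α - (X - α * p) / m := by
        have : (1 - α - (X - α * p) / m) * m = α * p + 2 * m - (X + Y) - X := by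
          rw [sub_mul, hβm]; linarith
        by_contra hneg
        push Not at hneg
        have := mul_neg_of_neg_of_pos hneg hm
        linarith
      refine hin X Y α ((X - α * p) / m) (1 - α - (X - α * p) / m) hα hβ hγ (by linarith) ?_ ?_
      · rw [hβm]; ring
      · rw [sub_mul, hβm]; linarith
  · exact hφ.smooth.mono hsubint
  · intro x hx v w
    exact hφ.symp x (hsubint hx) v w
  · have := le_Nk_one_two hs
    linarith

/-- The toric domain embeds in ellipsoids whose second capacity is arbitrarily close to `2m`: a
ball if `2m` is the maximum of `x + y`, and a long ellipsoid if `m` is the width or the height. -/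
theorem exists_outer {Ω : Set (Fin 2 → ℝ)} {m A B M : ℝ} (hA : 0 < A) (hB : 0 < B) (hM : 0 < M)
    (hΩ : ∀ x ∈ Ω, 0 ≤ x 0 ∧ 0 ≤ x 1 ∧ x 0 ≤ A ∧ x 1 ≤ B ∧ x 0 + x 1 ≤ M)
    (hm : m = A ∨ m = B ∨ 2 * m = M) {δ : ℝ} (hδ : 0 < δ) :
    ∃ a : Fin 2 → ℝ, (∀ i, 0 < a i) ∧ SympEmb 2 (toricDomain Ω) (ellipsoid a) ∧
      Nk 2 a ≤ 2 * m + δ := by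
  have key : ∀ a b : ℝ, 0 < a → 0 < b → (∀ x ∈ Ω, x 0 / a + x 1 / b ≤ 1) →
      (∀ i, 0 < (![a, b] : Fin 2 → ℝ) i) ∧ SympEmb 2 (toricDomain Ω) (ellipsoid ![a, b]) := by
    intro a b ha hb h
    refine ⟨fun i => by fin_cases i <;> simp [ha, hb], sympEmb_of_subset fun z hz => ?_⟩
    change ∑ i, Real.pi * ‖z i‖ ^ 2 / (![a, b] : Fin 2 → ℝ) i ≤ 1
    simpa [Fin.sum_univ_two, momentMap] using h _ hz
  -- an ellipsoid `E(A + δ/2, b)` contains the polydisk `P(A, B)` for `b` large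
  have long : ∀ A B x y : ℝ, 0 < A → 0 < B → x ≤ A → y ≤ B →
      x / (A + δ / 2) + y / (B * (A + δ / 2) / (δ / 2)) ≤ 1 := by
    intro A B x y hA hB hx hy
    have h1 : x / (A + δ / 2) ≤ A / (A + δ / 2) := by gcongr
    have h2 : y / (B * (A + δ / 2) / (δ / 2)) ≤ B / (B * (A + δ / 2) / (δ / 2)) := by gcongr
    have h3 : A / (A + δ / 2) + B / (B * (A + δ / 2) / (δ / 2)) = 1 := by
      field_simp
    linarith
  rcases hm with rfl | rfl | hm
  · obtain ⟨h1, h2⟩ := key (m + δ / 2) (B * (m + δ / 2) / (δ / 2)) (by positivity) (by positivity)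
      fun x hx => long _ _ _ _ hA hB (hΩ x hx).2.2.1 (hΩ x hx).2.2.2.1
    refine ⟨_, h1, h2, (Nk_le_two_mul h1 0).trans (le_of_eq ?_)⟩
    simp; ring
  · obtain ⟨h1, h2⟩ := key (A * (m + δ / 2) / (δ / 2)) (m + δ / 2) (by positivity) (by positivity)
      fun x hx => by
        rw [add_comm]
        exact long _ _ _ _ hB hA (hΩ x hx).2.2.2.1 (hΩ x hx).2.2.1
    refine ⟨_, h1, h2, (Nk_le_two_mul h1 1).trans (le_of_eq ?_)⟩
    simp; ring
  · obtain ⟨h1, h2⟩ := key M M hM hM fun x hx => by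
      rw [← add_div, div_le_one hM]
      exact (hΩ x hx).2.2.2.2
    refine ⟨_, h1, h2, (Nk_le_max h1).trans ?_⟩
    simp; linarith

/-- For a convex toric domain `X_Ω ⊂ ℂ²`, `c₂ᵐⁱⁿ(X_Ω) = c₂ᵐᵃˣ(X_Ω)`. -/
theorem stmt0 (Ω : Set (Fin 2 → ℝ)) (hΩ : IsConvexToricDomain Ω) :
    ckmin 2 2 (toricDomain Ω) = ckmax 2 2 (toricDomain Ω) := by
  obtain ⟨m, p, A, B, M, hm, hp0, hp1, hA, hB, hM, hbd, hcase, hin⟩ := exists_capacity hΩ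
  have hle : ∀ s ∈ {c : ℝ | ∃ a : Fin 2 → ℝ, (∀ i, 0 < a i) ∧
        SympEmb 2 (ellipsoid a) (toricDomain Ω) ∧ c = Nk 2 a},
      ∀ t ∈ {c : ℝ | ∃ a : Fin 2 → ℝ, (∀ i, 0 < a i) ∧
        SympEmb 2 (toricDomain Ω) (ellipsoid a) ∧ c = Nk 2 a}, s ≤ t := by
    rintro _ ⟨a, ha, h1, rfl⟩ _ ⟨b, hb, h2, rfl⟩
    exact Nk_le_of_emb ha hb h1 h2
  obtain ⟨a₀, ha₀, h₀, -⟩ := exists_inner hm hp0 hp1 hin one_pos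
  obtain ⟨b₀, hb₀, k₀, -⟩ := exists_outer hA hB hM hbd hcase one_pos
  rw [ckmin, ckmax]
  refine le_antisymm ?_ ?_
  · exact csSup_le ⟨_, a₀, ha₀, h₀, rfl⟩ fun s hs =>
      le_csInf ⟨_, b₀, hb₀, k₀, rfl⟩ fun t ht => hle s hs t ht
  · refine le_of_forall_pos_le_add fun δ hδ => ?_
    obtain ⟨a, ha, h, h'⟩ := exists_inner hm hp0 hp1 hin (half_pos hδ)
    obtain ⟨b, hb, k, k'⟩ := exists_outer hA hB hM hbd hcase (half_pos hδ)
    have e1 := le_csSup ⟨_, fun s hs => hle s hs _ ⟨b₀, hb₀, k₀, rfl⟩⟩ ⟨a, ha, h, rfl⟩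
    have e2 := csInf_le ⟨_, fun t ht => hle _ ⟨a₀, ha₀, h₀, rfl⟩ t ht⟩ ⟨b, hb, k, rfl⟩
    linarith

end
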